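/- arXiv:1105.1528 — 3 statements merged into one kernel-verified Lean document; each statement's English description precedes it below -/
import Mathlib

section
/- Let α > 0 and let u : ℝ⁴ → ℝ be a smooth function such that ∫_{ℝ⁴}(|Δu|² + |∇u|² + u²) dx < ∞. Then ∫_{ℝ⁴}(e^{α u²} − 1) dx < ∞. -/
open MeasureTheory Real Filter Topology ENNReal

noncomputable section

/-- Four-dimensional Euclidean space with Lebesgue measure. -/
abbrev R4 : Type := EuclideanSpace ℝ (Fin 4)

/-- The Laplacian of `u : ℝ⁴ → ℝ`, as the sum of the pure second derivatives
along the coordinate directions. -/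
noncomputable def lapl (u : R4 → ℝ) (x : R4) : ℝ :=
  ∑ i : Fin 4, iteratedFDeriv ℝ 2 u x ![EuclideanSpace.single i 1, EuclideanSpace.single i 1]

/-!
The proof avoids both the fundamental solution and Fourier analysis.

Fix a compactly supported profile `η` with `∫ η = c > 0` and `η(z) z = -∇P(z)`, where `P` is
supported in the shell `1/2 ≤ |z| ≤ 1` (`exists_profile`). Differentiating `∫ η(z) u(x + s z) dz`
in the scale `s` and applying the divergence theorem gives (`representation`)

  `c u(x) = ∫ η(z) u(x + ε z) dz - ∫_0^ε ∫ s P(z) Δu(x + s z) dz ds`.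

The first term is bounded uniformly in `x`, because `u ∈ L²`. The second is at most the scale
potential `pot |Δu| 0 ε x`, which is cut at the scale `δ_j = ε e^{-j}`:

* scales in `(δ_j, ε]` contribute at most `(j · |shell| · ∫_{B(x, ε)} |Δu|²)^{1/2}` (`pot_sq_le`):
  this is Cauchy-Schwarz with weight `s⁻¹`, and it costs only the square root of the logarithm
  because a given point is seen only by scales within a factor two of its distance to `x`;
* scales in `(0, δ_j]` have squared `L²` norm `O(δ_j⁴) = O(e^{-4j})` (`lintegral_pot_sq_le`).

Absolute continuity of the integral makes `∫_{B(x, ε)} |Δu|²` as small as desired, uniformly in `x`,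
once `ε` is small (`exists_radius`). Where `u` is large, take `j = ⌊α u(x)²⌋`: the large scales then
account for at most a quarter of `c |u(x)|`, so the small scales dominate and
`e^{α u²} - 1 ≤ α u² e^{j+1} ≲ e^j w_j²`, with `w_j` their contribution. Summing over `j` removes the
dependence of `j` on `x` (`exp_sub_one_le_tsum`), and `∑ e^j ‖w_j‖² ≲ ∑ e^{-3j}` converges. This holds
for every `α`, since `ε` is chosen after `α`.
-/

/-! ### The radial profile and the representation formula -/

lemma clm_apply_eq_sum (L : R4 →L[ℝ] ℝ) (z : R4) :
    L z = ∑ i : Fin 4, z i * L (EuclideanSpace.single i 1) := by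
  conv_lhs => rw [← (EuclideanSpace.basisFun (Fin 4) ℝ).sum_repr z]
  rw [map_sum]
  simp

/-- Integration by parts against the vector field `z`, whose divergence is `4`. -/
lemma integral_fderiv_radial {Q : R4 → ℝ} (hQ : ContDiff ℝ 1 Q) (hc : HasCompactSupport Q) :
    ∫ z, fderiv ℝ Q z z = -4 * ∫ z, Q z := by
  have hdQ : Continuous (fderiv ℝ Q) := hQ.continuous_fderiv (by norm_num)
  have hcd : HasCompactSupport (fderiv ℝ Q) := hc.fderiv ℝ
  have key : ∀ i : Fin 4, ∫ z : R4, z i * fderiv ℝ Q z (EuclideanSpace.single i 1)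
      = - ∫ z, Q z := by
    intro i
    have hf : ∀ z : R4, HasFDerivAt (fun z : R4 => z i) (EuclideanSpace.proj i : R4 →L[ℝ] ℝ) z :=
      fun z => (EuclideanSpace.proj i : R4 →L[ℝ] ℝ).hasFDerivAt
    have h1 : ∀ z : R4, fderiv ℝ (fun z : R4 => z i) z (EuclideanSpace.single i 1) = 1 := by
      intro z
      rw [(hf z).fderiv]; simp
    have := integral_mul_fderiv_eq_neg_fderiv_mul_of_integrable (μ := (volume : Measure R4))
      (f := fun z : R4 => z i) (g := Q) (v := EuclideanSpace.single i 1) ?_ ?_ ?_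
      (fun z _ => (hf z).differentiableAt) (fun z _ => hQ.differentiable (by norm_num) z)
    · simpa only [h1, one_mul] using this
    · simp only [h1, one_mul]
      exact hQ.continuous.integrable_of_hasCompactSupport hc
    · refine Continuous.integrable_of_hasCompactSupport (by fun_prop) ?_
      refine hcd.mono fun z hz => ?_
      simp only [Function.mem_support] at hz ⊢
      rintro h0
      simp [h0] at hz
    · exact Continuous.integrable_of_hasCompactSupport (by fun_prop) hc.mul_left
  have hint : ∀ i : Fin 4,
      Integrable (fun z : R4 => z i * fderiv ℝ Q z (EuclideanSpace.single i 1)) := by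
    intro i
    refine Continuous.integrable_of_hasCompactSupport (by fun_prop) ?_
    refine hcd.mono fun z hz => ?_
    simp only [Function.mem_support] at hz ⊢
    rintro h0
    simp [h0] at hz
  simp_rw [fun z => clm_apply_eq_sum (fderiv ℝ Q z) z]
  rw [integral_finsetSum _ fun i _ => hint i]
  simp [key]

/-- A radial profile `η` of positive integral, with `η(z) z = -∇P(z)` for some `P` supported in the
shell `1/2 ≤ |z| ≤ 1`. With `J` a bump function on `(1/4, 1)`, take `P(z) = H(|z|²)`, `H(t) = t J(t)`,
and `η(z) = -2 H'(|z|²)`. As `η = -2 Q - z · ∇Q` for `Q(z) = J(|z|²)`, its integral is `2 ∫ Q`. -/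
lemma exists_profile : ∃ η P : R4 → ℝ, Continuous η ∧ ContDiff ℝ 1 P ∧
    (∀ z v, fderiv ℝ P z v = -(η z * inner ℝ z v)) ∧
    (∀ z, P z ≠ 0 → 1 / 2 ≤ ‖z‖ ∧ ‖z‖ ≤ 1) ∧ (∀ z, η z ≠ 0 → ‖z‖ ≤ 1) ∧
    (∀ z, |P z| ≤ 1) ∧ 0 < ∫ z, η z := by
  let J : ContDiffBump (5 / 8 : ℝ) := ⟨1 / 4, 3 / 8, by norm_num, by norm_num⟩
  have hJ : ContDiff ℝ 2 J := J.contDiff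
  have hJ0 : ∀ t : ℝ, J t ≠ 0 → 1 / 4 < t ∧ t < 1 := by
    intro t ht
    have : t ∈ Metric.ball (5 / 8 : ℝ) (3 / 8) := by
      have := J.support_eq
      rw [← show J.rOut = 3 / 8 from rfl, ← this]; exact ht
    rw [Metric.mem_ball, Real.dist_eq, abs_lt] at this
    constructor <;> linarith
  have hdJ0 : ∀ t : ℝ, deriv J t ≠ 0 → t ≤ 1 := by
    intro t ht
    have h1 : t ∈ tsupport J := support_deriv_subset ht
    rw [J.tsupport_eq, Metric.mem_closedBall, Real.dist_eq, abs_le] at h1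
    have : J.rOut = 3 / 8 := rfl
    linarith
  have hdJ : Continuous (deriv J) := hJ.continuous_deriv (by norm_num)
  have hdiff : ∀ t, HasDerivAt J (deriv J t) t := fun t =>
    (hJ.differentiable (by norm_num) t).hasDerivAt
  have hn : ∀ z : R4, HasFDerivAt (fun z : R4 => ‖z‖ ^ 2) (2 • innerSL ℝ z) z := fun z =>
    (hasStrictFDerivAt_norm_sq z).hasFDerivAt
  have hle : ∀ z : R4, ‖z‖ ^ 2 ≤ 1 → ‖z‖ ≤ 1 := fun z h => by
    nlinarith [norm_nonneg z]
  have hQd : ContDiff ℝ 1 (fun z : R4 => J (‖z‖ ^ 2)) :=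
    (hJ.of_le (by norm_num)).comp (contDiff_norm_sq ℝ)
  have hQc : HasCompactSupport (fun z : R4 => J (‖z‖ ^ 2)) := by
    refine HasCompactSupport.of_support_subset_isCompact (isCompact_closedBall (0 : R4) 1) ?_
    intro z hz
    simpa using hle z (hJ0 _ hz).2.le
  have hQf : ∀ z v : R4, fderiv ℝ (fun z : R4 => J (‖z‖ ^ 2)) z v
      = deriv J (‖z‖ ^ 2) * (2 * inner ℝ z v) := by
    intro z v
    have h := ((hdiff (‖z‖ ^ 2)).comp_hasFDerivAt z (hn z)).fderiv
    rw [show (fun z : R4 => J (‖z‖ ^ 2)) = J ∘ fun z : R4 => ‖z‖ ^ 2 from rfl, h]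
    simp
  refine ⟨fun z => -2 * (J (‖z‖ ^ 2) + ‖z‖ ^ 2 * deriv J (‖z‖ ^ 2)),
    fun z => ‖z‖ ^ 2 * J (‖z‖ ^ 2), ?_, ?_, ?_, ?_, ?_, ?_, ?_⟩
  · have := J.continuous
    fun_prop
  · exact (contDiff_norm_sq ℝ).mul hQd
  · intro z v
    have h := (hn z).mul ((hdiff (‖z‖ ^ 2)).comp_hasFDerivAt z (hn z))
    have h2 : fderiv ℝ (fun z : R4 => ‖z‖ ^ 2 * J (‖z‖ ^ 2)) z = _ := h.fderiv
    rw [h2]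
    simp
    ring
  · intro z hz
    have h1 := hJ0 (‖z‖ ^ 2) (by rintro h; simp [h] at hz)
    exact ⟨by nlinarith [norm_nonneg z], hle z h1.2.le⟩
  · intro z hz
    by_contra hcon
    apply hz
    have h1 : J (‖z‖ ^ 2) = 0 := by
      by_contra h; exact hcon (hle z (hJ0 _ h).2.le)
    have h2 : deriv J (‖z‖ ^ 2) = 0 := by
      by_contra h; exact hcon (hle z (hdJ0 _ h))
    simp [h1, h2]
  · intro z
    by_cases h : J (‖z‖ ^ 2) = 0
    · simp [h]
    · rw [abs_of_nonneg (mul_nonneg (by positivity) J.nonneg)]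
      exact mul_le_one₀ (hJ0 _ h).2.le J.nonneg J.le_one
  · have hrad := integral_fderiv_radial hQd hQc
    have hiQ : Integrable (fun z : R4 => J (‖z‖ ^ 2)) :=
      hQd.continuous.integrable_of_hasCompactSupport hQc
    have hid : Integrable (fun z : R4 => fderiv ℝ (fun z : R4 => J (‖z‖ ^ 2)) z z) := by
      refine Continuous.integrable_of_hasCompactSupport
        ((hQd.continuous_fderiv (by norm_num)).clm_apply continuous_id) ?_
      refine (hQc.fderiv ℝ).mono fun z hz => ?_
      simp only [Function.mem_support] at hz ⊢
      rintro h0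
      simp [h0] at hz
    have heq : ∀ z : R4, -2 * (J (‖z‖ ^ 2) + ‖z‖ ^ 2 * deriv J (‖z‖ ^ 2))
        = -2 * J (‖z‖ ^ 2) - fderiv ℝ (fun z : R4 => J (‖z‖ ^ 2)) z z := by
      intro z
      rw [hQf, real_inner_self_eq_norm_sq]; ring
    simp_rw [heq]
    rw [integral_sub (hiQ.const_mul _) hid, hrad, integral_const_mul]
    have hpos : 0 < ∫ z : R4, J (‖z‖ ^ 2) := by
      refine hQd.continuous.integral_pos_of_hasCompactSupport_nonneg_nonzero hQc
        (fun z => J.nonneg) (x := (Real.sqrt (5 / 8)) • EuclideanSpace.single (0 : Fin 4) (1 : ℝ)) ?_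
      have : ‖(Real.sqrt (5 / 8)) • EuclideanSpace.single (0 : Fin 4) (1 : ℝ)‖ ^ 2 = 5 / 8 := by
        rw [norm_smul, mul_pow, Real.norm_eq_abs, sq_abs, Real.sq_sqrt (by norm_num)]
        simp
      simp only [this]
      exact (J.pos_of_mem_ball (Metric.mem_ball_self J.rOut_pos)).ne'
    linarith

/-- The value `u x` is recovered from its `η`-average at scale `ε` and a superposition over the
scales `s ≤ ε` of weighted shell averages of the Laplacian. -/
lemma representation {η P u : R4 → ℝ} (hη : Continuous η) (hP : ContDiff ℝ 1 P)
    (hPd : ∀ z v, fderiv ℝ P z v = -(η z * inner ℝ z v))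
    (hP0 : ∀ z, P z ≠ 0 → ‖z‖ ≤ 1) (hη0 : ∀ z, η z ≠ 0 → ‖z‖ ≤ 1)
    (hu : ContDiff ℝ 2 u) (x : R4) {ε : ℝ} (hε : 0 < ε) :
    (∫ z, η z) * u x = (∫ z, η z * u (x + ε • z))
      - ∫ s in Set.Ioc 0 ε, ∫ z, s * (P z * lapl u (x + s • z)) := by
  have hηc : HasCompactSupport η :=
    HasCompactSupport.of_support_subset_isCompact (isCompact_closedBall (0 : R4) 1)
      fun z hz => by simpa using hη0 z hz
  have hPc : HasCompactSupport P :=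
    HasCompactSupport.of_support_subset_isCompact (isCompact_closedBall (0 : R4) 1)
      fun z hz => by simpa using hP0 z hz
  have hdu : ContDiff ℝ 1 (fderiv ℝ u) := hu.fderiv_right (by norm_num)
  have hduc := hdu.continuous
  have huc := hu.continuous
  have hd2 : Continuous (fderiv ℝ (fderiv ℝ u)) := hdu.continuous_fderiv (by norm_num)
  have hdP : Continuous (fderiv ℝ P) := hP.continuous_fderiv (by norm_num)
  have hPcont := hP.continuous
  have hdPc : HasCompactSupport (fderiv ℝ P) := hPc.fderiv ℝ
  -- the divergence theorem at a fixed scale, where `η(z) z = -∇P(z)` enters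
  have hdiv : ∀ s : ℝ, ∫ z, s * (P z * lapl u (x + s • z))
      = ∫ z, η z * fderiv ℝ u (x + s • z) z := by
    intro s
    have hL : ∀ (i : Fin 4) (z : R4), HasFDerivAt
        (fun z : R4 => fderiv ℝ u (x + s • z) (EuclideanSpace.single i 1))
        ((s • fderiv ℝ (fderiv ℝ u) (x + s • z)).flip (EuclideanSpace.single i 1)) z := by
      intro i z
      have h1 : HasFDerivAt (fun z : R4 => x + s • z) (s • ContinuousLinearMap.id ℝ R4) z :=
        ((hasFDerivAt_id z).const_smul s).const_add x
      have h2 := (hdu.differentiable (by norm_num) (x + s • z)).hasFDerivAt.comp z h1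
      have h3 := h2.clm_apply (hasFDerivAt_const (EuclideanSpace.single i (1 : ℝ)) z)
      refine h3.congr_fderiv ?_
      ext v
      simp
    have hi1 : ∀ i : Fin 4, Integrable (fun z => fderiv ℝ P z (EuclideanSpace.single i 1) *
        fderiv ℝ u (x + s • z) (EuclideanSpace.single i 1)) := by
      intro i
      refine Continuous.integrable_of_hasCompactSupport (by fun_prop) ?_
      refine hdPc.mono fun z hz => ?_
      simp only [Function.mem_support] at hz ⊢
      rintro h0
      simp [h0] at hz
    have hi2 : ∀ i : Fin 4, Integrable (fun z => P z *
        (s * fderiv ℝ (fderiv ℝ u) (x + s • z) (EuclideanSpace.single i 1)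
          (EuclideanSpace.single i 1))) := by
      intro i
      exact Continuous.integrable_of_hasCompactSupport (by fun_prop) hPc.mul_right
    have key : ∀ i : Fin 4, ∫ z, P z *
        (s * fderiv ℝ (fderiv ℝ u) (x + s • z) (EuclideanSpace.single i 1)
          (EuclideanSpace.single i 1)) = - ∫ z, fderiv ℝ P z (EuclideanSpace.single i 1) *
        fderiv ℝ u (x + s • z) (EuclideanSpace.single i 1) := by
      intro i
      have hL' : ∀ z, fderiv ℝ (fun z : R4 => fderiv ℝ u (x + s • z) (EuclideanSpace.single i 1)) z
          (EuclideanSpace.single i 1) = s * fderiv ℝ (fderiv ℝ u) (x + s • z)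
          (EuclideanSpace.single i 1) (EuclideanSpace.single i 1) := by
        intro z
        rw [(hL i z).fderiv]; simp
      have := integral_mul_fderiv_eq_neg_fderiv_mul_of_integrable (μ := (volume : Measure R4))
        (f := P) (g := fun z : R4 => fderiv ℝ u (x + s • z) (EuclideanSpace.single i 1))
        (v := EuclideanSpace.single i 1) (hi1 i) (by simpa only [hL'] using hi2 i)
        (Continuous.integrable_of_hasCompactSupport (by fun_prop) hPc.mul_right)
        (fun z _ => hP.differentiable (by norm_num) z) (fun z _ => (hL i z).differentiableAt)
      simpa only [hL'] using this
    have e1 : ∀ z, s * (P z * lapl u (x + s • z)) = ∑ i : Fin 4, P z *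
        (s * fderiv ℝ (fderiv ℝ u) (x + s • z) (EuclideanSpace.single i 1)
          (EuclideanSpace.single i 1)) := by
      intro z
      simp only [lapl, iteratedFDeriv_two_apply, Matrix.cons_val_zero, Matrix.cons_val_one]
      rw [Finset.mul_sum, Finset.mul_sum]
      exact Finset.sum_congr rfl fun i _ => by ring
    have e2 : ∀ z, η z * fderiv ℝ u (x + s • z) z
        = -∑ i : Fin 4, fderiv ℝ P z (EuclideanSpace.single i 1) *
        fderiv ℝ u (x + s • z) (EuclideanSpace.single i 1) := by
      intro z
      have : fderiv ℝ u (x + s • z) z = ∑ i : Fin 4, z i * fderiv ℝ u (x + s • z)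
          (EuclideanSpace.single i 1) := clm_apply_eq_sum _ _
      rw [this, Finset.mul_sum, ← Finset.sum_neg_distrib]
      refine Finset.sum_congr rfl fun i _ => ?_
      rw [hPd]
      have : inner ℝ z (EuclideanSpace.single i (1 : ℝ)) = z i := by
        simp [EuclideanSpace.inner_single_right]
      rw [this]; ring
    simp_rw [e1, e2]
    rw [integral_finsetSum _ fun i _ => hi2 i, integral_neg, integral_finsetSum _ fun i _ => hi1 i]
    simp [key]
  simp_rw [hdiv]
  have hcont : Continuous (fun p : ℝ × R4 => η p.2 * fderiv ℝ u (x + p.1 • p.2) p.2) := by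
    fun_prop
  have hint : Integrable (Function.uncurry fun (s : ℝ) (z : R4) =>
      η z * fderiv ℝ u (x + s • z) z) ((volume.restrict (Set.Ioc 0 ε)).prod volume) := by
    have h1 : IntegrableOn (fun p : ℝ × R4 => η p.2 * fderiv ℝ u (x + p.1 • p.2) p.2)
        (Set.Ioc 0 ε ×ˢ Set.univ) (volume.prod volume) := by
      refine IntegrableOn.of_forall_sdiff_eq_zero (s := Set.Icc 0 ε ×ˢ Metric.closedBall (0 : R4) 1)
        (hcont.continuousOn.integrableOn_compact (isCompact_Icc.prod (isCompact_closedBall _ _)))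
        (measurableSet_Ioc.prod MeasurableSet.univ) ?_
      rintro ⟨s, z⟩ ⟨⟨hs, -⟩, h⟩
      have : η z = 0 := by
        by_contra h0
        exact h ⟨Set.Ioc_subset_Icc_self hs, by simpa using hη0 z h0⟩
      simp [this]
    rw [IntegrableOn, ← Measure.prod_restrict, Measure.restrict_univ] at h1
    exact h1
  -- integrating in the scale first reduces to the fundamental theorem of calculus on a segment
  rw [integral_integral_swap hint]
  have hftc : ∀ z, ∫ s in Set.Ioc 0 ε, η z * fderiv ℝ u (x + s • z) z
      = η z * u (x + ε • z) - η z * u x := by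
    intro z
    rw [integral_const_mul, ← intervalIntegral.integral_of_le hε.le]
    have hd : ∀ s ∈ Set.uIcc 0 ε, HasDerivAt (fun s : ℝ => u (x + s • z))
        (fderiv ℝ u (x + s • z) z) s := by
      intro s _
      have h1 : HasDerivAt (fun s : ℝ => x + s • z) z s := by
        simpa using ((hasDerivAt_id s).smul_const z).const_add x
      exact (hu.differentiable (by norm_num) (x + s • z)).hasFDerivAt.comp_hasDerivAt s h1
    rw [intervalIntegral.integral_eq_sub_of_hasDerivAt hd
      (Continuous.intervalIntegrable (by fun_prop) _ _)]
    simp [mul_sub]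
  simp_rw [hftc]
  rw [integral_sub, integral_mul_const]
  · ring
  · exact Continuous.integrable_of_hasCompactSupport (by fun_prop) hηc.mul_right
  · exact Continuous.integrable_of_hasCompactSupport (by fun_prop) hηc.mul_right

/-! ### Estimates for the scale potential -/

/-- The closed shell `1/2 ≤ |z| ≤ 1` in `ℝ⁴`. -/
def shell : Set R4 := {z | 1 / 2 ≤ ‖z‖ ∧ ‖z‖ ≤ 1}

lemma measurableSet_shell : MeasurableSet shell :=
  (measurableSet_le measurable_const measurable_norm).inter
    (measurableSet_le measurable_norm measurable_const)

lemma volume_shell_lt_top : volume shell < ⊤ :=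
  (measure_mono fun z hz => by simpa using hz.2).trans_lt
    (measure_closedBall_lt_top (x := (0 : R4)) (r := 1))

/-- The contribution of the scales in `(a, b]` to the second-order potential of `f`:
`∫_a^b ∫_{shell} s f(x + s z) dz ds`. -/
def pot (f : R4 → ℝ≥0∞) (a b : ℝ) (x : R4) : ℝ≥0∞ :=
  ∫⁻ p, ENNReal.ofReal p.1 * f (x + p.1 • p.2)
    ∂((volume.restrict (Set.Ioc a b)).prod (volume.restrict shell))

/-- The Cauchy-Schwarz inequality, free of fractional powers. -/
lemma lintegral_mul_sq_le {β : Type*} [MeasurableSpace β] (μ : Measure β) {g h : β → ℝ≥0∞}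
    (hg : Measurable g) (hh : Measurable h) :
    (∫⁻ x, g x * h x ∂μ) ^ 2 ≤ (∫⁻ x, g x ^ 2 ∂μ) * ∫⁻ x, h x ^ 2 ∂μ := by
  have h1 := ENNReal.lintegral_mul_le_Lp_mul_Lq μ Real.HolderConjugate.two_two
    hg.aemeasurable hh.aemeasurable
  have h2 : ∀ a : ℝ≥0∞, (a ^ (1 / 2 : ℝ)) ^ 2 = a := by
    intro a
    rw [← ENNReal.rpow_natCast, ← ENNReal.rpow_mul]
    norm_num
  calc _ ≤ _ := pow_le_pow_left₀ (zero_le) h1 2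
    _ = _ := by
      rw [mul_pow, h2, h2]
      simp

lemma lintegral_comp_add_smul (G : R4 → ℝ≥0∞) (x : R4) {s : ℝ} (hs : 0 < s) :
    ∫⁻ z, G (x + s • z) = ENNReal.ofReal ((s ^ 4)⁻¹) * ∫⁻ y, G y := by
  have h1 : ∫⁻ z, G (x + s • z) = ∫⁻ y, G (x + y) ∂(Measure.map (s • ·) volume) :=
    ((Homeomorph.smulOfNeZero s hs.ne').measurableEmbedding.lintegral_map (fun y => G (x + y))).symm
  rw [h1, Measure.map_addHaar_smul _ hs.ne', lintegral_smul_measure, lintegral_add_left_eq_self]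
  simp [abs_of_pos hs]

lemma measurable_pot_integrand {f : R4 → ℝ≥0∞} (hf : Measurable f) :
    Measurable fun q : R4 × (ℝ × R4) => ENNReal.ofReal q.2.1 * f (q.1 + q.2.1 • q.2.2) := by
  fun_prop

lemma measurable_pot {f : R4 → ℝ≥0∞} (hf : Measurable f) (a b : ℝ) : Measurable (pot f a b) :=
  (measurable_pot_integrand hf).lintegral_prod_right'

/-- The scales below `δ` have `L²` norm at most `δ² |shell| ‖f‖₂`: the potential is at most `δ` times
an integral of translates of `f` over a set of measure `δ |shell|`. -/
lemma lintegral_pot_sq_le {f : R4 → ℝ≥0∞} (hf : Measurable f) {δ : ℝ} (hδ : 0 < δ) :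
    ∫⁻ x, pot f 0 δ x ^ 2
      ≤ ENNReal.ofReal (δ ^ 4) * (volume shell ^ 2 * ∫⁻ y, f y ^ 2) := by
  set ν := (volume.restrict (Set.Ioc 0 δ)).prod (volume.restrict shell) with hν
  have hνu : ν Set.univ = ENNReal.ofReal δ * volume shell := by
    rw [hν, ← Set.univ_prod_univ, Measure.prod_prod]
    simp
  have h1 : ∀ x, pot f 0 δ x ≤ ∫⁻ p, ENNReal.ofReal δ * f (x + p.1 • p.2) ∂ν := by
    intro x
    rw [pot, hν, Measure.prod_restrict]
    refine setLIntegral_mono'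
      ((measurableSet_Ioc : MeasurableSet (Set.Ioc 0 δ)).prod measurableSet_shell) ?_
    rintro ⟨s, z⟩ ⟨hs, -⟩
    exact mul_le_mul_left (ENNReal.ofReal_le_ofReal hs.2) _
  have h2 : ∀ x, pot f 0 δ x ^ 2 ≤ ENNReal.ofReal δ ^ 2 * ν Set.univ
      * ∫⁻ p, f (x + p.1 • p.2) ^ 2 ∂ν := by
    intro x
    have hm : Measurable fun p : ℝ × R4 => f (x + p.1 • p.2) := by fun_prop
    refine (pow_le_pow_left₀ (zero_le) (h1 x) 2).trans
      ((lintegral_mul_sq_le ν measurable_const hm).trans_eq ?_)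
    rw [lintegral_const]
  refine (lintegral_mono h2).trans ?_
  have hm : Measurable fun q : R4 × (ℝ × R4) => f (q.1 + q.2.1 • q.2.2) ^ 2 := by fun_prop
  rw [lintegral_const_mul _ hm.lintegral_prod_right',
    lintegral_lintegral_swap (f := fun (x : R4) (p : ℝ × R4) => f (x + p.1 • p.2) ^ 2)
      hm.aemeasurable]
  have h3 : ∀ p : ℝ × R4, ∫⁻ x, f (x + p.1 • p.2) ^ 2 = ∫⁻ y, f y ^ 2 := fun p =>
    lintegral_add_right_eq_self (fun y => f y ^ 2) _
  simp_rw [h3]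
  rw [lintegral_const, hνu, ENNReal.ofReal_pow hδ.le]
  exact le_of_eq (by ring)

/-- The pairs `(y, s)` such that `y - x` lies in the shell dilated by `s`. -/
def scaleCone (x : R4) : Set (R4 × ℝ) := {q | q.2 / 2 ≤ ‖q.1 - x‖ ∧ ‖q.1 - x‖ ≤ q.2}

lemma measurableSet_scaleCone (x : R4) : MeasurableSet (scaleCone x) :=
  (measurableSet_le (f := fun q : R4 × ℝ => q.2 / 2) (g := fun q => ‖q.1 - x‖)
    (by fun_prop) (by fun_prop)).inter
  (measurableSet_le (f := fun q : R4 × ℝ => ‖q.1 - x‖) (g := fun q => q.2)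
    (by fun_prop) (by fun_prop))

/-- The scales between `a` and `b` contribute at most the square root of a logarithm: write
`s = s^{-1/2} s^{3/2}` and apply Cauchy-Schwarz. The first factor yields `log (b / a)`. In the second,
the substitution `y = x + s z` leaves `∫ f(y)² ∫ s⁻¹ ds dy`, where for fixed `y` only the scales
`|y - x| ≤ s ≤ 2 |y - x|` occur. -/
lemma pot_sq_le {f : R4 → ℝ≥0∞} (hf : Measurable f) {a b : ℝ} (ha : 0 < a) (hab : a ≤ b)
    (x : R4) :
    pot f a b x ^ 2 ≤ ENNReal.ofReal (Real.log (b / a)) * volume shell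
      * ∫⁻ y in Metric.closedBall x b, f y ^ 2 := by
  set ν := (volume.restrict (Set.Ioc a b)).prod (volume.restrict shell) with hν
  have h1 : pot f a b x = ∫⁻ p, ENNReal.ofReal (Real.sqrt p.1⁻¹)
      * (ENNReal.ofReal (p.1 * Real.sqrt p.1) * f (x + p.1 • p.2)) ∂ν := by
    rw [pot, hν, Measure.prod_restrict]
    refine setLIntegral_congr_fun
      ((measurableSet_Ioc : MeasurableSet (Set.Ioc a b)).prod measurableSet_shell) ?_
    rintro ⟨s, z⟩ ⟨hs, -⟩
    have hs0 : 0 < s := ha.trans hs.1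
    simp only
    rw [← mul_assoc, ← ENNReal.ofReal_mul (Real.sqrt_nonneg _), Real.sqrt_inv]
    congr 2
    have := Real.sqrt_pos.2 hs0
    field_simp
  rw [h1]
  refine (lintegral_mul_sq_le ν (by fun_prop) (by fun_prop)).trans (mul_le_mul' ?_ ?_)
  · -- the logarithm comes from the scale integral
    have hs : ∀ s ∈ Set.Ioc a b, ENNReal.ofReal (Real.sqrt s⁻¹) ^ 2 = ENNReal.ofReal s⁻¹ := by
      intro s hs
      rw [← ENNReal.ofReal_pow (Real.sqrt_nonneg _), Real.sq_sqrt (inv_nonneg.2 (ha.trans hs.1).le)]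
    rw [hν, lintegral_prod _ (by fun_prop)]
    simp only [lintegral_const, Measure.restrict_apply MeasurableSet.univ, Set.univ_inter]
    rw [lintegral_mul_const _ (by fun_prop), setLIntegral_congr_fun measurableSet_Ioc hs,
      ← ofReal_integral_eq_lintegral_ofReal, ← intervalIntegral.integral_of_le hab,
      integral_inv_of_pos ha (ha.trans_le hab)]
    · have : IntervalIntegrable (fun s : ℝ => s⁻¹) volume a b := by
        rw [intervalIntegrable_inv_iff]
        right
        rw [Set.uIcc_of_le hab]
        exact fun h => (ha.trans_le h.1).ne' rfl
      exact (intervalIntegrable_iff_integrableOn_Ioc_of_le hab).1 this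
    · exact (ae_restrict_iff' measurableSet_Ioc).2
        (Eventually.of_forall fun s hs => inv_nonneg.2 (ha.trans hs.1).le)
  · -- each point is seen only by the scales between its distance to `x` and twice that distance
    have hinner : ∀ s ∈ Set.Ioc a b, ∫⁻ z in shell,
        (ENNReal.ofReal (s * Real.sqrt s) * f (x + s • z)) ^ 2
        = ∫⁻ y, (scaleCone x).indicator
            (fun q => ENNReal.ofReal q.2⁻¹ * f q.1 ^ 2) (y, s) := by
      intro s hs
      have hs0 : 0 < s := ha.trans hs.1
      have e := lintegral_comp_add_smul (fun y =>
        (scaleCone x).indicator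
            (fun q => ENNReal.ofReal q.2⁻¹ * f q.1 ^ 2) (y, s)) x hs0
      have e2 : ∫⁻ z in shell, (ENNReal.ofReal (s * Real.sqrt s) * f (x + s • z)) ^ 2
          = ENNReal.ofReal (s ^ 4) * ∫⁻ z, (scaleCone x).indicator
            (fun q => ENNReal.ofReal q.2⁻¹ * f q.1 ^ 2) (x + s • z, s) := by
        rw [← lintegral_const_mul' _ _ ENNReal.ofReal_ne_top,
          ← lintegral_indicator measurableSet_shell]
        refine lintegral_congr fun z => ?_
        have hiff : z ∈ shell ↔ (x + s • z, s) ∈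
            scaleCone x := by
          simp only [shell, scaleCone, Set.mem_ofPred_eq, add_sub_cancel_left, norm_smul, Real.norm_eq_abs,
            abs_of_pos hs0]
          refine and_congr ⟨fun h => ?_, fun h => ?_⟩ ⟨fun h => ?_, fun h => ?_⟩ <;> nlinarith
        by_cases hz : z ∈ shell
        · rw [Set.indicator_of_mem hz, Set.indicator_of_mem (hiff.1 hz), mul_pow, ← mul_assoc,
            ← ENNReal.ofReal_mul (by positivity), ← ENNReal.ofReal_pow (by positivity), mul_pow,
            Real.sq_sqrt hs0.le]
          congr 2
          field_simp
        · rw [Set.indicator_of_notMem hz, Set.indicator_of_notMem (fun h => hz (hiff.2 h)),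
            mul_zero]
      rw [e2, e, ← mul_assoc, ← ENNReal.ofReal_mul (by positivity),
        mul_inv_cancel₀ (by positivity), ENNReal.ofReal_one, one_mul]
    have hmI : Measurable ((scaleCone x).indicator
            (fun q => ENNReal.ofReal q.2⁻¹ * f q.1 ^ 2)) :=
      Measurable.indicator (by fun_prop) (measurableSet_scaleCone x)
    rw [hν, lintegral_prod _ (by fun_prop), setLIntegral_congr_fun measurableSet_Ioc hinner,
      lintegral_lintegral_swap (f := fun s y => (scaleCone x).indicator (fun q => ENNReal.ofReal q.2⁻¹ * f q.1 ^ 2) (y, s))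
        (hmI.comp measurable_swap).aemeasurable,
      ← lintegral_indicator measurableSet_closedBall]
    refine lintegral_mono fun y => ?_
    by_cases hy : y ∈ Metric.closedBall x b
    · rw [Set.indicator_of_mem hy]
      have hle : ∀ s ∈ Set.Ioc a b, (scaleCone x).indicator (fun q => ENNReal.ofReal q.2⁻¹ * f q.1 ^ 2) (y, s)
          ≤ (Set.Icc ‖y - x‖ (2 * ‖y - x‖)).indicator
            (fun _ => ENNReal.ofReal ‖y - x‖⁻¹ * f y ^ 2) s := by
        intro s hs
        by_cases h : (y, s) ∈ scaleCone x
        · have h' : s / 2 ≤ ‖y - x‖ ∧ ‖y - x‖ ≤ s := h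
          have hs0 : 0 < s := ha.trans hs.1
          have hsI : s ∈ Set.Icc ‖y - x‖ (2 * ‖y - x‖) := ⟨h'.2, by linarith⟩
          rw [Set.indicator_of_mem h, Set.indicator_of_mem hsI]
          exact mul_le_mul_left (ENNReal.ofReal_le_ofReal
            (inv_anti₀ (by linarith) h'.2)) _
        · rw [Set.indicator_of_notMem h]; exact zero_le
      calc _ ≤ ∫⁻ s in Set.Ioc a b, (Set.Icc ‖y - x‖ (2 * ‖y - x‖)).indicator
            (fun _ => ENNReal.ofReal ‖y - x‖⁻¹ * f y ^ 2) s :=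
          setLIntegral_mono' measurableSet_Ioc hle
        _ ≤ ∫⁻ s, (Set.Icc ‖y - x‖ (2 * ‖y - x‖)).indicator
            (fun _ => ENNReal.ofReal ‖y - x‖⁻¹ * f y ^ 2) s := setLIntegral_le_lintegral _ _
        _ = ENNReal.ofReal (‖y - x‖⁻¹ * ‖y - x‖) * f y ^ 2 := by
          rw [lintegral_indicator_const measurableSet_Icc, Real.volume_Icc,
            ENNReal.ofReal_mul (by positivity), two_mul, add_sub_cancel_right]
          ring
        _ ≤ 1 * f y ^ 2 := mul_le_mul_left (ENNReal.ofReal_le_one.2 inv_mul_le_one) _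
        _ = f y ^ 2 := one_mul _
    · rw [Set.indicator_of_notMem hy, nonpos_iff_eq_zero,
        setLIntegral_congr_fun (g := fun _ => 0) measurableSet_Ioc, lintegral_zero]
      intro s hs
      refine Set.indicator_of_notMem (fun h => hy ?_) _
      rw [Metric.mem_closedBall, dist_eq_norm]
      exact h.2.trans hs.2

lemma pot_add_pot (f : R4 → ℝ≥0∞) {a b c : ℝ} (hab : a ≤ b) (hbc : b ≤ c) (x : R4) :
    pot f a c x ≤ pot f a b x + pot f b c x := by
  simp only [pot, Measure.prod_restrict]
  rw [← Set.Ioc_union_Ioc_eq_Ioc hab hbc, Set.union_prod]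
  exact lintegral_union_le _ _ _

/-! ### Exponential integrability -/

/-- If `c U` is at most `B + w j + V j` for every `j` and `V j` grows at most like `√(k j)` with `k`
small compared with `c² / α`, then `e^{α U²} - 1` is controlled by `U²` and the series
`∑ e^j (w j)²`. -/
lemma exp_sub_one_le_tsum {α c B U k : ℝ} (hα : 0 < α) (hc : 0 < c) (hU : 0 ≤ U)
    (hk0 : 0 ≤ k) (hk : 16 * k * α ≤ c ^ 2) {V w : ℕ → ℝ≥0∞}
    (hUVw : ∀ j, ENNReal.ofReal (c * U) ≤ ENNReal.ofReal B + (w j + V j))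
    (hV : ∀ j : ℕ, V j ^ 2 ≤ ENNReal.ofReal (k * j)) :
    ENNReal.ofReal (Real.exp (α * U ^ 2) - 1)
      ≤ ENNReal.ofReal (α * Real.exp (α * (2 * B / c) ^ 2)) * ENNReal.ofReal (U ^ 2)
        + ENNReal.ofReal (α * (16 / c ^ 2) * Real.exp 1)
          * ∑' j : ℕ, ENNReal.ofReal (Real.exp j) * w j ^ 2 := by
  have hexp : ∀ t : ℝ, Real.exp t - 1 ≤ t * Real.exp t := by
    intro t
    have h1 := Real.add_one_le_exp (-t)
    have h2 : Real.exp (-t) * Real.exp t = 1 := by rw [← Real.exp_add]; simp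
    nlinarith [Real.exp_pos t]
  -- if `U` is bounded, `e^{α U²} - 1` is comparable to `U²`
  by_cases hB : c * U ≤ 2 * B
  · refine le_add_right ?_
    rw [← ENNReal.ofReal_mul (by positivity)]
    refine ENNReal.ofReal_le_ofReal ((hexp _).trans ?_)
    have h1 : U ≤ 2 * B / c := by rw [le_div_iff₀ hc]; linarith
    have h2 : Real.exp (α * U ^ 2) ≤ Real.exp (α * (2 * B / c) ^ 2) := by gcongr
    calc α * U ^ 2 * Real.exp (α * U ^ 2) ≤ α * U ^ 2 * Real.exp (α * (2 * B / c) ^ 2) := by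
          gcongr
      _ = _ := by ring
  · push Not at hB
    refine le_add_left ?_
    -- for this `j`, `V j` is at most a quarter of `c U`, and `B` is less than half of it
    set j := ⌊α * U ^ 2⌋₊ with hj
    have hj1 : (j : ℝ) ≤ α * U ^ 2 := Nat.floor_le (by positivity)
    have hj2 : α * U ^ 2 < j + 1 := Nat.lt_floor_add_one _
    have hVj : V j ≤ ENNReal.ofReal (c * U / 4) := by
      have h1 : V j ^ 2 ≤ ENNReal.ofReal (c * U / 4) ^ 2 := by
        rw [← ENNReal.ofReal_pow (by positivity)]
        refine (hV j).trans (ENNReal.ofReal_le_ofReal ?_)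
        calc k * j ≤ k * (α * U ^ 2) := by gcongr
          _ = (16 * k * α) * U ^ 2 / 16 := by ring
          _ ≤ c ^ 2 * U ^ 2 / 16 := by gcongr
          _ = _ := by ring
      by_contra h
      exact absurd h1 (not_le.2 (ENNReal.pow_lt_pow_left (n := 2) (by norm_num) (not_le.1 h)))
    have hwj : ENNReal.ofReal (c * U / 4) ≤ w j := by
      by_cases hwt : w j = ⊤
      · simp [hwt]
      lift w j to NNReal using hwt with w' hw'
      have h1 := (hUVw j).trans (add_le_add_right (add_le_add_right hVj _) _)
      rw [← hw', ← ENNReal.ofReal_coe_nnreal, ← ENNReal.ofReal_add w'.coe_nonneg (by positivity)] at h1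
      rw [← ENNReal.ofReal_coe_nnreal]
      refine ENNReal.ofReal_le_ofReal ?_
      by_contra hlt
      push Not at hlt
      by_cases hB0 : 0 ≤ B
      · rw [← ENNReal.ofReal_add hB0 (by positivity),
          ENNReal.ofReal_le_ofReal_iff (by positivity)] at h1
        linarith
      · rw [ENNReal.ofReal_of_nonpos (not_le.1 hB0).le, zero_add,
          ENNReal.ofReal_le_ofReal_iff (by positivity)] at h1
        have : 0 ≤ c * U := by positivity
        have : (0 : ℝ) ≤ w' := w'.coe_nonneg
        linarith
    calc ENNReal.ofReal (Real.exp (α * U ^ 2) - 1)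
        ≤ ENNReal.ofReal (α * (16 / c ^ 2) * Real.exp 1 * (Real.exp j * (c * U / 4) ^ 2)) := by
          refine ENNReal.ofReal_le_ofReal ((hexp _).trans ?_)
          calc α * U ^ 2 * Real.exp (α * U ^ 2) ≤ α * U ^ 2 * Real.exp (j + 1) := by gcongr
            _ = _ := by rw [Real.exp_add]; field_simp; ring
      _ = ENNReal.ofReal (α * (16 / c ^ 2) * Real.exp 1)
          * (ENNReal.ofReal (Real.exp j) * ENNReal.ofReal (c * U / 4) ^ 2) := by
          rw [← ENNReal.ofReal_pow (by positivity), ← ENNReal.ofReal_mul (by positivity),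
            ← ENNReal.ofReal_mul (by positivity)]
      _ ≤ ENNReal.ofReal (α * (16 / c ^ 2) * Real.exp 1)
          * (ENNReal.ofReal (Real.exp j) * w j ^ 2) := by gcongr
      _ ≤ _ := by
          gcongr
          exact ENNReal.le_tsum (f := fun j : ℕ => ENNReal.ofReal (Real.exp j) * w j ^ 2) j

/-- The mass of an integrable function on small balls is small, uniformly in the center. -/
lemma exists_radius {F : R4 → ℝ≥0∞} (hF : ∫⁻ y, F y ≠ ⊤) {τ : ℝ} (hτ : 0 < τ) :
    ∃ ε : ℝ, 0 < ε ∧ ∀ x, ∫⁻ y in Metric.closedBall x ε, F y ≤ ENNReal.ofReal τ := by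
  obtain ⟨d, hd, h⟩ := exists_pos_setLIntegral_lt_of_measure_lt hF
    (ε := ENNReal.ofReal τ) (by simpa using hτ)
  have ht : Tendsto (fun r : ℝ => ENNReal.ofReal (r ^ 4) * volume (Metric.ball (0 : R4) 1))
      (𝓝[>] 0) (𝓝 0) := by
    have h1 : Tendsto (fun r : ℝ => ENNReal.ofReal (r ^ 4)) (𝓝[>] 0) (𝓝 0) := by
      have : Continuous fun r : ℝ => ENNReal.ofReal (r ^ 4) :=
        ENNReal.continuous_ofReal.comp (by fun_prop)
      simpa using (this.tendsto 0).mono_left nhdsWithin_le_nhds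
    simpa using ENNReal.Tendsto.mul_const h1 (Or.inr measure_ball_lt_top.ne)
  obtain ⟨ε, hε, hε0⟩ := ((ht.eventually (gt_mem_nhds hd)).and self_mem_nhdsWithin).exists
  refine ⟨ε, hε0, fun x => (h _ ?_).le⟩
  have hε0' : 0 ≤ ε := le_of_lt hε0
  rw [Measure.addHaar_closedBall _ _ hε0']
  simpa using hε

/-- Theorem 1.2 (first part): for every `α > 0` and every smooth `u` with finite
`W^{2,2}`-norm, `∫_{ℝ⁴} (e^{αu²} − 1) dx < ∞`. -/
theorem stmt_0 (α : ℝ) (hα : 0 < α) (u : R4 → ℝ) (hu : ContDiff ℝ (⊤ : ℕ∞) u)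
    (hfin : (∫⁻ x : R4,
        ENNReal.ofReal ((lapl u x) ^ 2 + ‖gradient u x‖ ^ 2 + (u x) ^ 2)) < ⊤) :
    (∫⁻ x : R4, ENNReal.ofReal (Real.exp (α * (u x) ^ 2) - 1)) < ⊤ := by
  obtain ⟨η, P, hη, hP, hPd, hPs, hη0, hP1, hc⟩ := exists_profile
  set c := ∫ z, η z with hc_def
  have hu2 : ContDiff ℝ 2 u := contDiff_infty.1 hu 2
  have huc : Continuous u := hu.continuous
  have hlc : Continuous (lapl u) := by
    unfold lapl
    have := hu2.continuous_iteratedFDeriv (m := 2) le_rfl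
    fun_prop
  set f : R4 → ℝ≥0∞ := fun x => ‖lapl u x‖ₑ with hf_def
  have hf : Measurable f := hlc.measurable.enorm
  have hN : ∫⁻ y, f y ^ 2 < ⊤ := by
    refine (lintegral_mono fun y => ?_).trans_lt hfin
    simp only [hf_def, ← ofReal_norm, ← ENNReal.ofReal_pow (norm_nonneg _)]
    refine ENNReal.ofReal_le_ofReal ?_
    rw [Real.norm_eq_abs, sq_abs]
    nlinarith [sq_nonneg ‖gradient u y‖, sq_nonneg (u y)]
  have hU : ∫⁻ y, ENNReal.ofReal (u y ^ 2) < ⊤ := by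
    refine (lintegral_mono fun y => ENNReal.ofReal_le_ofReal ?_).trans_lt hfin
    nlinarith [sq_nonneg ‖gradient u y‖, sq_nonneg (lapl u y)]
  set m := (volume shell).toReal with hm_def
  have hm : volume shell = ENNReal.ofReal m :=
    (ENNReal.ofReal_toReal volume_shell_lt_top.ne).symm
  have hm0 : 0 ≤ m := ENNReal.toReal_nonneg
  -- the threshold that makes `16 (m τ) α ≤ c²`, as `exp_sub_one_le_tsum` requires
  set τ := c ^ 2 / (16 * α * (m + 1)) with hτ_def
  have hτ : 0 < τ := by positivity
  obtain ⟨ε, hε, hsmall⟩ := exists_radius hN.ne hτ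
  -- the averages of `u` at scale `ε` are bounded
  set A : ℝ≥0∞ := (∫⁻ z, ‖η z‖ₑ ^ 2) + ENNReal.ofReal ((ε ^ 4)⁻¹) * ∫⁻ y, ENNReal.ofReal (u y ^ 2)
    with hA_def
  have hA : A < ⊤ := by
    refine ENNReal.add_lt_top.2 ⟨?_, ENNReal.mul_lt_top ENNReal.ofReal_lt_top hU⟩
    have hηc : HasCompactSupport (fun z => η z ^ 2) :=
      HasCompactSupport.of_support_subset_isCompact (isCompact_closedBall (0 : R4) 1)
        fun z hz => by simpa using hη0 z (by rintro h; simp [h] at hz)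
    have h1 : Integrable (fun z => η z ^ 2) :=
      Continuous.integrable_of_hasCompactSupport (by fun_prop) hηc
    simpa only [HasFiniteIntegral, enorm_pow] using h1.hasFiniteIntegral
  have hAx : ∀ x, ‖∫ z, η z * u (x + ε • z)‖ₑ ≤ A := by
    intro x
    refine (enorm_integral_le_lintegral_enorm _).trans ?_
    rw [hA_def, ← lintegral_comp_add_smul _ x hε, ← lintegral_add_left (by fun_prop)]
    refine lintegral_mono fun z => ?_
    simp only [← ofReal_norm, ← ENNReal.ofReal_pow (norm_nonneg _)]
    rw [← ENNReal.ofReal_add (by positivity) (by positivity)]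
    refine ENNReal.ofReal_le_ofReal ?_
    rw [norm_mul, Real.norm_eq_abs, Real.norm_eq_abs, ← sq_abs (u _)]
    nlinarith [sq_nonneg (|η z| - |u (x + ε • z)|), sq_nonneg (|η z|), sq_nonneg (|u (x + ε • z)|)]
  have hmain : ∀ x, ENNReal.ofReal (c * |u x|) ≤ ENNReal.ofReal A.toReal + pot f 0 ε x := by
    intro x
    rw [ENNReal.ofReal_toReal hA.ne]
    have hrep := representation hη hP hPd (fun z hz => (hPs z hz).2) hη0 hu2 x hε
    have h1 : ENNReal.ofReal (c * |u x|) = ‖c * u x‖ₑ := by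
      rw [← ofReal_norm, norm_mul, Real.norm_eq_abs, Real.norm_eq_abs, abs_of_pos hc]
    rw [h1, hrep]
    refine (enorm_sub_le).trans (add_le_add (hAx x) ?_)
    refine (enorm_integral_le_lintegral_enorm _).trans ?_
    rw [pot, lintegral_prod _ (by fun_prop)]
    refine setLIntegral_mono' measurableSet_Ioc fun s hs => ?_
    refine (enorm_integral_le_lintegral_enorm _).trans ?_
    rw [← lintegral_indicator measurableSet_shell]
    refine lintegral_mono fun z => ?_
    by_cases hz : P z = 0
    · simp [hz]
    · rw [Set.indicator_of_mem (show z ∈ shell from hPs z hz), enorm_mul, enorm_mul,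
        Real.enorm_of_nonneg hs.1.le]
      gcongr
      refine (mul_le_mul_left (b := ‖P z‖ₑ) (c := 1) ?_ _).trans_eq (one_mul _)
      rw [← ofReal_norm]
      exact ENNReal.ofReal_le_one.2 (hP1 z)
  have hδ : ∀ j : ℕ, 0 < ε * Real.exp (-j) := fun j => by positivity
  have hδε : ∀ j : ℕ, ε * Real.exp (-j) ≤ ε := fun j =>
    mul_le_of_le_one_right hε.le (Real.exp_le_one_iff.2 (by simp))
  have hpt : ∀ x, ENNReal.ofReal (Real.exp (α * (u x) ^ 2) - 1)
      ≤ ENNReal.ofReal (α * Real.exp (α * (2 * A.toReal / c) ^ 2)) * ENNReal.ofReal (u x ^ 2)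
        + ENNReal.ofReal (α * (16 / c ^ 2) * Real.exp 1)
          * ∑' j : ℕ, ENNReal.ofReal (Real.exp j) * pot f 0 (ε * Real.exp (-j)) x ^ 2 := by
    intro x
    have := exp_sub_one_le_tsum (U := |u x|) (k := m * τ) (B := A.toReal) hα hc (abs_nonneg _)
      (by positivity) ?_ (V := fun j : ℕ => pot f (ε * Real.exp (-j)) ε x)
      (w := fun j : ℕ => pot f 0 (ε * Real.exp (-j)) x) ?_ ?_
    · simpa only [sq_abs] using this
    · have h1 : τ * (16 * α * (m + 1)) = c ^ 2 := by rw [hτ_def]; field_simp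
      nlinarith [mul_pos hτ hα]
    · intro j
      exact (hmain x).trans (add_le_add_right (pot_add_pot f (hδ j).le (hδε j) x) _)
    · intro j
      refine (pot_sq_le hf (hδ j) (hδε j) x).trans ?_
      have hlog : Real.log (ε / (ε * Real.exp (-j))) = j := by
        rw [div_mul_cancel_left₀ hε.ne', ← Real.exp_neg, neg_neg, Real.log_exp]
      rw [hlog, hm, show m * τ * j = j * m * τ by ring, ENNReal.ofReal_mul (by positivity),
        ENNReal.ofReal_mul (by positivity)]
      gcongr
      exact hsmall x
  refine (lintegral_mono hpt).trans_lt ?_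
  have hmw : ∀ j : ℕ, Measurable fun x =>
      ENNReal.ofReal (Real.exp j) * pot f 0 (ε * Real.exp (-j)) x ^ 2 := fun j =>
    ((measurable_pot hf _ _).pow_const 2).const_mul _
  rw [lintegral_add_left (by fun_prop), lintegral_const_mul _ (by fun_prop),
    lintegral_const_mul _ (Measurable.tsum hmw), lintegral_tsum fun j => (hmw j).aemeasurable]
  refine ENNReal.add_lt_top.2 ⟨ENNReal.mul_lt_top ENNReal.ofReal_lt_top hU,
    ENNReal.mul_lt_top ENNReal.ofReal_lt_top ?_⟩
  have hterm : ∀ j : ℕ, ∫⁻ x, ENNReal.ofReal (Real.exp j) * pot f 0 (ε * Real.exp (-j)) x ^ 2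
      ≤ ENNReal.ofReal (ε ^ 4 * Real.exp (-3) ^ j) * (volume shell ^ 2 * ∫⁻ y, f y ^ 2) := by
    intro j
    rw [lintegral_const_mul _ ((measurable_pot hf _ _).pow_const 2)]
    refine (mul_le_mul_right (lintegral_pot_sq_le hf (hδ j)) _).trans_eq ?_
    rw [← mul_assoc, ← ENNReal.ofReal_mul (by positivity)]
    congr 2
    rw [mul_pow, ← Real.exp_nat_mul, ← Real.exp_nat_mul, mul_left_comm, ← Real.exp_add]
    congr 2
    push_cast
    ring
  refine (ENNReal.tsum_le_tsum hterm).trans_lt ?_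
  rw [ENNReal.tsum_mul_right]
  refine ENNReal.mul_lt_top ?_ (ENNReal.mul_lt_top (ENNReal.pow_lt_top volume_shell_lt_top) hN)
  have hs : Summable fun j : ℕ => ε ^ 4 * Real.exp (-3) ^ j :=
    (summable_geometric_of_lt_one (Real.exp_pos _).le
      (Real.exp_lt_one_iff.2 (by norm_num))).mul_left _
  exact hs.tsum_ofReal_lt_top
end
end

section
/- Let τ > 0 and σ > 0. There exists a constant C > 0 (depending only on τ and σ) such that for every smooth function u : ℝ⁴ → ℝ satisfying ∫_{ℝ⁴}(|Δu|² + τ|∇u|² + σ u²) dx ≤ 1, one has ∫_{ℝ⁴}(e^{32π² u²} − 1) dx ≤ C. -/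
open MeasureTheory Real Filter Topology ENNReal

noncomputable section

/-!
The proof represents `u` by heat potentials, extracts a two-level estimate with the sharp constant,
and concludes by a layer-cake argument.

Let `p_t` be the heat kernel `gk t`. Since `∂ₜ p_t = Δ p_t`, Green's formula (`green`) gives
`u = -∫₀¹ p_t * Δu dt + p_1 * u`, hence a pointwise bound of `|u|` by positive potentials of `|Δu|`
and `|u|` (`abs_le_heat`). In dimension four `∫₀¹ p_t dt` is, up to a bounded error, the kernel
`1/(4π²|z|²)` which produces the sharp exponent.

Test this bound against a probability measure `μ` and use the Cauchy-Schwarz inequality. By the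
semigroup property the square norm of `∫₀¹ p_t * μ dt` equals `∫₀¹∫₀¹ ⟨μ, p_{s+t} * μ⟩ ds dt`, and
when `μ` is uniform on a set of measure `m` the bound `p_r ≤ 1/(16π²r²)`, together with the mass
bound `1/m`, yields `(1/32π²) log (1/m) + O(1)` (`lintegral_gm_le`). Applied to one superlevel set
this only gives `|{32π²u² > y}| ≤ e^{C-y}`, which is not enough to integrate `e^{32π²u²}`. For `μ` the
average of the uniform measures on two superlevel sets `{32π²u² > y₁} ⊇ {32π²u² > y₂}`, of measures
`m₁ ≥ m₂`, one gets (`two_level`)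

  `(√y₁ + √y₂)² ≤ 3 (log (1/m₁) + C) + (log (1/m₂) + C)`.

If both levels nearly saturate the one-level bound, `log (1/mᵢ) + C ≤ yᵢ + ℓ`, this becomes
`√(y₁y₂) ≤ y₁ + 2ℓ`, so that `y₂ ≤ y₁ + 8ℓ` once `y₁ ≥ ℓ`. Thus the set of levels saturating up to
`ℓ` has measure at most `9ℓ`, and integrating in `ℓ` against `e^{-ℓ}` gives the exponential bound
(`lintegral_exp_le`).
-/

/-! ### The heat kernel -/

/-- The heat kernel `(4πt)⁻² exp(-|z|²/4t)` of `ℝ⁴` at time `t`. -/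
def gk (t : ℝ) (z : R4) : ℝ := (16 * π ^ 2 * t ^ 2)⁻¹ * rexp (-‖z‖ ^ 2 / (4 * t))

lemma gk_nonneg (t : ℝ) (z : R4) : 0 ≤ gk t z := by
  unfold gk; positivity

lemma gk_le {t : ℝ} (ht : 0 < t) (z : R4) : gk t z ≤ (16 * π ^ 2 * t ^ 2)⁻¹ := by
  unfold gk
  apply mul_le_of_le_one_right (by positivity)
  rw [Real.exp_le_one_iff]
  apply div_nonpos_of_nonpos_of_nonneg
  · nlinarith [sq_nonneg ‖z‖]
  · positivity

lemma gk_sub_comm (t : ℝ) (x y : R4) : gk t (x - y) = gk t (y - x) := by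
  unfold gk; rw [norm_sub_rev]

lemma measurable_gk : Measurable (fun p : ℝ × R4 => gk p.1 p.2) := by
  unfold gk; fun_prop

lemma measurable_gk_sub : Measurable (fun p : (ℝ × R4) × R4 => gk p.1.1 (p.1.2 - p.2)) := by
  unfold gk; fun_prop

lemma continuous_gk (t : ℝ) : Continuous (gk t) := by
  unfold gk; fun_prop

lemma integral_gk {t : ℝ} (ht : 0 < t) : ∫ z : R4, gk t z = 1 := by
  unfold gk
  rw [integral_const_mul]
  have h := GaussianFourier.integral_rexp_neg_mul_sq_norm (V := R4) (b := (4 * t)⁻¹)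
    (by positivity)
  have e : (fun z : R4 => rexp (-‖z‖ ^ 2 / (4 * t))) = fun z => rexp (-(4 * t)⁻¹ * ‖z‖ ^ 2) := by
    ext z; congr 1; field_simp
  rw [e, h]
  have : ((Module.finrank ℝ R4 : ℝ) / 2) = (2 : ℕ) := by
    rw [finrank_euclideanSpace_fin]; norm_num
  rw [this, Real.rpow_natCast]
  field_simp
  norm_num

lemma integrable_gk {t : ℝ} (ht : 0 < t) : Integrable (gk t) :=
  integrable_of_integral_eq_one (integral_gk ht)

lemma lintegral_gk {t : ℝ} (ht : 0 < t) : ∫⁻ z : R4, ENNReal.ofReal (gk t z) = 1 := by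
  rw [← ofReal_integral_eq_lintegral_ofReal (integrable_gk ht)
    (Eventually.of_forall (gk_nonneg t)), integral_gk ht, ENNReal.ofReal_one]

lemma lintegral_gk_sub {t : ℝ} (ht : 0 < t) (a : R4) :
    ∫⁻ z : R4, ENNReal.ofReal (gk t (z - a)) = 1 := by
  rw [lintegral_sub_right_eq_self (fun z => ENNReal.ofReal (gk t z)) a, lintegral_gk ht]

/-- Completing the square in a product of two heat kernels. -/
lemma gk_mul_gk {s t : ℝ} (hs : 0 < s) (ht : 0 < t) (x x' y : R4) :
    gk s (x - y) * gk t (x' - y) = gk (s + t) (x - x') *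
      gk (s * t / (s + t)) (y - (s + t)⁻¹ • (t • x + s • x')) := by
  unfold gk
  have hst : 0 < s + t := by positivity
  rw [mul_mul_mul_comm, ← Real.exp_add,
    mul_mul_mul_comm (16 * π ^ 2 * (s + t) ^ 2)⁻¹, ← Real.exp_add]
  congr 1
  · field_simp
  · congr 1
    simp only [EuclideanSpace.norm_sq_eq, Fin.sum_univ_four, PiLp.sub_apply, PiLp.smul_apply,
      PiLp.add_apply, smul_eq_mul, Real.norm_eq_abs, sq_abs]
    field_simp
    ring

/-- The semigroup property of the heat kernel. -/
lemma lintegral_gk_mul_gk {s t : ℝ} (hs : 0 < s) (ht : 0 < t) (x x' : R4) :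
    ∫⁻ y, ENNReal.ofReal (gk s (x - y)) * ENNReal.ofReal (gk t (x' - y)) =
      ENNReal.ofReal (gk (s + t) (x - x')) := by
  simp_rw [← ENNReal.ofReal_mul (gk_nonneg _ _), gk_mul_gk hs ht,
    ENNReal.ofReal_mul (gk_nonneg _ _)]
  rw [lintegral_const_mul' _ _ ENNReal.ofReal_ne_top, lintegral_gk_sub (by positivity), mul_one]

/-! ### Cauchy-Schwarz and the two-time integral -/

/-- Tonelli for the square of a kernel potential. -/
lemma sq_lintegral_kernel {α β : Type*} [MeasurableSpace α] [MeasurableSpace β]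
    (κ : Measure α) [SFinite κ] (ν : Measure β) [SFinite ν] (k : α → β → ℝ≥0∞)
    (hk : Measurable (Function.uncurry k)) :
    ∫⁻ y, (∫⁻ a, k a y ∂κ) ^ 2 ∂ν = ∫⁻ a, ∫⁻ b, ∫⁻ y, k a y * k b y ∂ν ∂κ ∂κ := by
  have hy : ∀ y, Measurable (fun a => k a y) := fun y =>
    hk.comp (measurable_id.prodMk measurable_const)
  have h1 : ∀ y, (∫⁻ a, k a y ∂κ) ^ 2 = ∫⁻ a, ∫⁻ b, k a y * k b y ∂κ ∂κ := by
    intro y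
    rw [sq, ← lintegral_mul_const _ (hy y)]
    refine lintegral_congr fun a => ?_
    rw [lintegral_const_mul _ (hy y)]
  have hm3 : Measurable (fun p : (β × α) × α => k p.1.2 p.1.1 * k p.2 p.1.1) :=
    (hk.comp (measurable_fst.snd.prodMk measurable_fst.fst)).mul
      (hk.comp (measurable_snd.prodMk measurable_fst.fst))
  simp_rw [h1]
  rw [lintegral_lintegral_swap]
  · refine lintegral_congr fun a => ?_
    rw [lintegral_lintegral_swap]
    exact ((hk.comp (measurable_const.prodMk measurable_fst)).mul
      (hk.comp (measurable_snd.prodMk measurable_fst))).aemeasurable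
  · exact hm3.lintegral_prod_right'.aemeasurable

lemma lintegral_mul_le_sqrt {β : Type*} [MeasurableSpace β] (ν : Measure β) {f g : β → ℝ≥0∞}
    (hf : Measurable f) (hg : Measurable g) {a b : ℝ}
    (hfa : ∫⁻ y, f y ^ 2 ∂ν ≤ ENNReal.ofReal a) (hgb : ∫⁻ y, g y ^ 2 ∂ν ≤ ENNReal.ofReal b) :
    ∫⁻ y, f y * g y ∂ν ≤ ENNReal.ofReal (√a * √b) := by
  have h := ENNReal.lintegral_mul_le_Lp_mul_Lq ν Real.HolderConjugate.two_two hf.aemeasurable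
    hg.aemeasurable
  simp only [Pi.mul_apply, ENNReal.rpow_two] at h
  refine h.trans ?_
  rw [ENNReal.ofReal_mul (Real.sqrt_nonneg _), Real.sqrt_eq_rpow, Real.sqrt_eq_rpow]
  have key : ∀ c : ℝ, ENNReal.ofReal c ^ (1 / 2 : ℝ) ≤ ENNReal.ofReal (c ^ (1 / 2 : ℝ)) := by
    intro c
    rcases le_total 0 c with hc | hc
    · rw [ENNReal.ofReal_rpow_of_nonneg hc (by norm_num)]
    · rw [ENNReal.ofReal_of_nonpos hc]; simp
  exact mul_le_mul' ((ENNReal.rpow_le_rpow hfa (by norm_num)).trans (key a))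
    ((ENNReal.rpow_le_rpow hgb (by norm_num)).trans (key b))

/-- The upper bound `min (1/m) (1/(16π²r²))` for the mean of the heat kernel at time `r` over a
set of measure `m`. -/
def gm (m r : ℝ) : ℝ := min m⁻¹ (16 * π ^ 2 * r ^ 2)⁻¹

lemma gm_nonneg {m : ℝ} (hm : 0 < m) (r : ℝ) : 0 ≤ gm m r := by
  unfold gm; positivity

lemma measurable_gm (m : ℝ) : Measurable (gm m) := by
  unfold gm; fun_prop

lemma lintegral_inv_sq_le {a b s c : ℝ} (hc : 0 ≤ c) (hs : 0 < s + a) (hab : a ≤ b) :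
    ∫⁻ t in Set.Ioc a b, ENNReal.ofReal (c * ((s + t) ^ 2)⁻¹) ≤ ENNReal.ofReal (c * (s + a)⁻¹) := by
  have hpos : ∀ t ∈ Set.uIcc a b, 0 < s + t := by
    intro t ht
    rw [Set.uIcc_of_le hab] at ht
    linarith [ht.1]
  have hcont : ContinuousOn (fun t => c * ((s + t) ^ 2)⁻¹) (Set.uIcc a b) := by
    apply ContinuousOn.mul continuousOn_const
    apply ContinuousOn.inv₀ (by fun_prop)
    intro t ht
    have := hpos t ht
    positivity
  have hd : ∀ t ∈ Set.uIcc a b, HasDerivAt (fun t => -(c * (s + t)⁻¹)) (c * ((s + t) ^ 2)⁻¹) t := by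
    intro t ht
    have h0 := (hpos t ht).ne'
    have h1 : HasDerivAt (fun t => s + t) 1 t := by
      simpa using (hasDerivAt_id t).const_add s
    convert! ((h1.inv h0).const_mul c).neg using 1
    ring
  have hI := hcont.intervalIntegrable (μ := volume)
  have h := intervalIntegral.integral_eq_sub_of_hasDerivAt hd hI
  rw [intervalIntegrable_iff_integrableOn_Ioc_of_le hab] at hI
  rw [intervalIntegral.integral_of_le hab] at h
  rw [← ofReal_integral_eq_lintegral_ofReal hI
    (Eventually.of_forall fun t => by positivity), h]
  apply ENNReal.ofReal_le_ofReal
  have : 0 ≤ c * (s + b)⁻¹ := by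
    have := hpos b Set.right_mem_uIcc
    positivity
  linarith

/-- The two-time integral of the heat kernel bound, whose leading term carries the sharp
constant `1/(32π²)`. -/
lemma lintegral_gm_le {m : ℝ} (hm : 0 < m) (hm1 : m ≤ 1) :
    ∫⁻ s in Set.Ioc (0 : ℝ) 1, ∫⁻ t in Set.Ioc (0 : ℝ) 1, ENNReal.ofReal (gm m (s + t)) ≤
      ENNReal.ofReal ((32 * π ^ 2)⁻¹ * Real.log m⁻¹ + (1 + (16 * π ^ 2)⁻¹)) := by
  set c : ℝ := (16 * π ^ 2)⁻¹ with hc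
  have hc0 : 0 ≤ c := by positivity
  set δ : ℝ := √m with hδ
  have hδ0 : 0 < δ := Real.sqrt_pos.2 hm
  have hδ1 : δ ≤ 1 := Real.sqrt_le_one.2 hm1
  have hδm : δ * δ = m := Real.mul_self_sqrt hm.le
  have hg2 : ∀ r, gm m r ≤ c * (r ^ 2)⁻¹ := by
    intro r
    unfold gm
    rw [hc, ← mul_inv]
    exact min_le_right _ _
  have hg1 : ∀ r, gm m r ≤ m⁻¹ := fun r => min_le_left _ _
  have hsplit : Set.Ioc (0 : ℝ) 1 = Set.Ioc 0 δ ∪ Set.Ioc δ 1 :=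
    (Set.Ioc_union_Ioc_eq_Ioc hδ0.le hδ1).symm
  have hA : ∀ s, 0 < s → ∫⁻ t in Set.Ioc (0 : ℝ) 1, ENNReal.ofReal (gm m (s + t)) ≤
      ENNReal.ofReal (c * s⁻¹) := by
    intro s hs
    have := lintegral_inv_sq_le (a := 0) (b := 1) (s := s) hc0 (by linarith) zero_le_one
    rw [add_zero] at this
    exact (lintegral_mono fun t => ENNReal.ofReal_le_ofReal (hg2 _)).trans this
  have hB : ∀ s, 0 < s → ∫⁻ t in Set.Ioc (0 : ℝ) 1, ENNReal.ofReal (gm m (s + t)) ≤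
      ENNReal.ofReal (δ * m⁻¹ + c * δ⁻¹) := by
    intro s hs
    rw [hsplit, ENNReal.ofReal_add (by positivity) (by positivity)]
    refine (lintegral_union_le _ _ _).trans (add_le_add ?_ ?_)
    · refine (lintegral_mono fun t => ENNReal.ofReal_le_ofReal (hg1 _)).trans ?_
      rw [setLIntegral_const, Real.volume_Ioc, sub_zero, ← ENNReal.ofReal_mul (by positivity),
        mul_comm]
    · have := lintegral_inv_sq_le (a := δ) (b := 1) (s := 0) hc0 (by linarith) hδ1
      rw [zero_add] at this
      refine le_trans (setLIntegral_mono' measurableSet_Ioc fun t ht =>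
        ENNReal.ofReal_le_ofReal ((hg2 _).trans ?_)) this
      have ht0 : 0 < t := hδ0.trans ht.1
      rw [zero_add]
      gcongr
      linarith
  have hlog : ∫⁻ s in Set.Ioc δ 1, ENNReal.ofReal (c * s⁻¹) =
      ENNReal.ofReal ((32 * π ^ 2)⁻¹ * Real.log m⁻¹) := by
    have h0 : (0 : ℝ) ∉ Set.uIcc δ 1 := by
      rw [Set.uIcc_of_le hδ1]
      exact fun h => absurd h.1 (not_le.2 hδ0)
    have hI : IntervalIntegrable (fun s : ℝ => c * s⁻¹) volume δ 1 := by
      apply IntervalIntegrable.const_mul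
      exact intervalIntegral.intervalIntegrable_inv (fun x hx h => h0 (h ▸ hx)) continuousOn_id
    have h : ∫ s in δ..1, c * s⁻¹ = (32 * π ^ 2)⁻¹ * Real.log m⁻¹ := by
      rw [intervalIntegral.integral_const_mul, integral_inv h0, one_div, ← hδm,
        mul_inv δ δ, Real.log_mul (by positivity) (by positivity), hc]
      field_simp
      ring
    rw [intervalIntegrable_iff_integrableOn_Ioc_of_le hδ1] at hI
    rw [intervalIntegral.integral_of_le hδ1] at h
    rw [← h, ofReal_integral_eq_lintegral_ofReal hI]
    filter_upwards [ae_restrict_mem measurableSet_Ioc] with s hs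
    have : 0 < s := hδ0.trans hs.1
    exact mul_nonneg hc0 (by positivity)
  have hl : 0 ≤ Real.log m⁻¹ := Real.log_nonneg ((one_le_inv₀ hm).2 hm1)
  rw [hsplit]
  refine (lintegral_union_le _ _ _).trans ?_
  rw [← hsplit, add_comm, ENNReal.ofReal_add (by positivity) (by positivity)]
  refine add_le_add ?_ ?_
  · rw [← hlog]
    exact setLIntegral_mono' measurableSet_Ioc fun s hs => hA s (hδ0.trans hs.1)
  · refine (setLIntegral_mono' measurableSet_Ioc fun s hs => hB s hs.1).trans ?_
    rw [setLIntegral_const, Real.volume_Ioc, sub_zero, ← ENNReal.ofReal_mul (by positivity)]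
    apply ENNReal.ofReal_le_ofReal
    rw [← hδm]
    apply le_of_eq
    field_simp

/-! ### Energy of averaged measures -/

/-- The normalized Lebesgue measure on a set `E` of volume `m`. -/
def nu (E : Set R4) (m : ℝ) : Measure R4 := (ENNReal.ofReal m)⁻¹ • volume.restrict E

instance (E : Set R4) (m : ℝ) : SFinite (nu E m) := by
  unfold nu; infer_instance

lemma nu_univ {E : Set R4} {m : ℝ} (hm : 0 < m) (hE : volume E = ENNReal.ofReal m) :
    nu E m Set.univ = 1 := by
  have : ENNReal.ofReal m ≠ 0 := by simpa using hm
  simp [nu, hE, ENNReal.inv_mul_cancel this ENNReal.ofReal_ne_top]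

lemma lintegral_nu_gk_le {E : Set R4} {m r : ℝ} (hm : 0 < m) (hr : 0 < r)
    (hE : volume E = ENNReal.ofReal m) (x' : R4) :
    ∫⁻ x, ENNReal.ofReal (gk r (x - x')) ∂(nu E m) ≤ ENNReal.ofReal (gm m r) := by
  unfold gm
  rw [ENNReal.ofReal_min]
  refine le_min ?_ ?_
  · rw [nu, lintegral_smul_measure, smul_eq_mul, ENNReal.ofReal_inv_of_pos hm]
    refine mul_le_of_le_one_right' ?_
    exact (setLIntegral_le_lintegral _ _).trans (lintegral_gk_sub hr x').le
  · refine (lintegral_mono fun x => ENNReal.ofReal_le_ofReal (gk_le hr _)).trans ?_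
    rw [lintegral_const, nu_univ hm hE, mul_one]

lemma lintegral_nu_nu_le {E F : Set R4} {m n r : ℝ} (hm : 0 < m) (hn : 0 < n) (hr : 0 < r)
    (hE : volume E = ENNReal.ofReal m) (hF : volume F = ENNReal.ofReal n) :
    ∫⁻ x', ∫⁻ x, ENNReal.ofReal (gk r (x' - x)) ∂(nu E m) ∂(nu F n) ≤
      ENNReal.ofReal (gm m r) := by
  have h : ∀ x', ∫⁻ x, ENNReal.ofReal (gk r (x' - x)) ∂(nu E m) ≤ ENNReal.ofReal (gm m r) :=
    fun x' => (lintegral_congr fun x => by rw [gk_sub_comm]).trans_le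
      (lintegral_nu_gk_le hm hr hE x')
  refine (lintegral_mono h).trans ?_
  rw [lintegral_const, nu_univ hn hF, mul_one]

lemma lintegral_nu_nu_le' {E F : Set R4} {m n r : ℝ} (hm : 0 < m) (hn : 0 < n) (hr : 0 < r)
    (hE : volume E = ENNReal.ofReal m) (hF : volume F = ENNReal.ofReal n) :
    ∫⁻ x', ∫⁻ x, ENNReal.ofReal (gk r (x' - x)) ∂(nu F n) ∂(nu E m) ≤
      ENNReal.ofReal (gm m r) := by
  rw [lintegral_lintegral_swap]
  · refine (lintegral_mono fun x' => lintegral_nu_gk_le hm hr hE x').trans ?_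
    rw [lintegral_const, nu_univ hn hF, mul_one]
  · have : Measurable (fun p : R4 × R4 => gk r (p.1 - p.2)) :=
      (continuous_gk r).measurable.comp (measurable_fst.sub measurable_snd)
    exact this.ennreal_ofReal.aemeasurable

/-- The average of two normalized Lebesgue measures. -/
def mu (E₁ E₂ : Set R4) (m₁ m₂ : ℝ) : Measure R4 :=
  ENNReal.ofReal (1 / 2) • (nu E₁ m₁ + nu E₂ m₂)

instance (E₁ E₂ : Set R4) (m₁ m₂ : ℝ) : SFinite (mu E₁ E₂ m₁ m₂) := by
  unfold mu; infer_instance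

/-- Self-energy of `mu`: both mixed terms are bounded by means over `E₁`, which gives the
weights `3/4` and `1/4`. -/
lemma lintegral_mu_mu_le {E₁ E₂ : Set R4} {m₁ m₂ r : ℝ} (h₁ : 0 < m₁) (h₂ : 0 < m₂) (hr : 0 < r)
    (hE₁ : volume E₁ = ENNReal.ofReal m₁) (hE₂ : volume E₂ = ENNReal.ofReal m₂) :
    ∫⁻ x', ∫⁻ x, ENNReal.ofReal (gk r (x' - x)) ∂(mu E₁ E₂ m₁ m₂) ∂(mu E₁ E₂ m₁ m₂) ≤
      ENNReal.ofReal (3 / 4) * ENNReal.ofReal (gm m₁ r) +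
        ENNReal.ofReal (1 / 4) * ENNReal.ofReal (gm m₂ r) := by
  have hm : ∀ (κ : Measure R4) [SFinite κ], Measurable
      (fun x' : R4 => ∫⁻ x, ENNReal.ofReal (gk r (x' - x)) ∂κ) := by
    intro κ _
    have : Measurable (fun p : R4 × R4 => gk r (p.1 - p.2)) :=
      (continuous_gk r).measurable.comp (measurable_fst.sub measurable_snd)
    exact this.ennreal_ofReal.lintegral_prod_right'
  unfold mu
  simp only [lintegral_smul_measure, lintegral_add_measure, smul_eq_mul]
  rw [lintegral_const_mul' _ _ ENNReal.ofReal_ne_top, lintegral_const_mul' _ _ ENNReal.ofReal_ne_top,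
    lintegral_add_left (hm _), lintegral_add_left (hm _)]
  have a11 := lintegral_nu_nu_le h₁ h₁ hr hE₁ hE₁
  have a12 := lintegral_nu_nu_le h₁ h₂ hr hE₁ hE₂
  have a21 := lintegral_nu_nu_le' h₁ h₂ hr hE₁ hE₂
  have a22 := lintegral_nu_nu_le h₂ h₂ hr hE₂ hE₂
  have g1 := gm_nonneg h₁ r
  have g2 := gm_nonneg h₂ r
  calc _ ≤ ENNReal.ofReal (1 / 2) * (ENNReal.ofReal (1 / 2) *
        (ENNReal.ofReal (gm m₁ r) + ENNReal.ofReal (gm m₁ r)) +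
        ENNReal.ofReal (1 / 2) * (ENNReal.ofReal (gm m₁ r) + ENNReal.ofReal (gm m₂ r))) := by
        gcongr
    _ = _ := by
        rw [← ENNReal.ofReal_add g1 g1, ← ENNReal.ofReal_add g1 g2,
          ← ENNReal.ofReal_mul (by norm_num), ← ENNReal.ofReal_mul (by norm_num),
          ← ENNReal.ofReal_mul (by norm_num), ← ENNReal.ofReal_mul (by norm_num),
          ← ENNReal.ofReal_add (by positivity) (by positivity),
          ← ENNReal.ofReal_mul (by norm_num),
          ← ENNReal.ofReal_add (by positivity) (by positivity)]
        congr 1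
        ring

lemma mu_univ {E₁ E₂ : Set R4} {m₁ m₂ : ℝ} (h₁ : 0 < m₁) (h₂ : 0 < m₂)
    (hE₁ : volume E₁ = ENNReal.ofReal m₁) (hE₂ : volume E₂ = ENNReal.ofReal m₂) :
    mu E₁ E₂ m₁ m₂ Set.univ = 1 := by
  rw [mu, Measure.smul_apply, Measure.add_apply, nu_univ h₁ hE₁, nu_univ h₂ hE₂, smul_eq_mul,
    ← ENNReal.ofReal_one, ← ENNReal.ofReal_add (by norm_num) (by norm_num),
    ← ENNReal.ofReal_mul (by norm_num)]
  norm_num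

/-- The time-integrated heat potential of `μ`, i.e. `∫₀¹ e^{tΔ}μ dt`. -/
def heatPot (μ : Measure R4) (y : R4) : ℝ≥0∞ :=
  ∫⁻ a, ENNReal.ofReal (gk a.1 (a.2 - y)) ∂((volume.restrict (Set.Ioc (0 : ℝ) 1)).prod μ)

lemma measurable_heatPot (μ : Measure R4) [SFinite μ] : Measurable (heatPot μ) :=
  Measurable.lintegral_prod_left' (f := fun p : (ℝ × R4) × R4 =>
    ENNReal.ofReal (gk p.1.1 (p.1.2 - p.2))) measurable_gk_sub.ennreal_ofReal

/-- Squaring the heat potential and applying the semigroup property gives a two-time self-energy. -/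
lemma lintegral_heatPot_sq (μ : Measure R4) [SFinite μ] :
    ∫⁻ y, heatPot μ y ^ 2 = ∫⁻ s in Set.Ioc (0 : ℝ) 1, ∫⁻ t in Set.Ioc (0 : ℝ) 1,
      ∫⁻ x', ∫⁻ x, ENNReal.ofReal (gk (s + t) (x' - x)) ∂μ ∂μ := by
  unfold heatPot
  have hk : Measurable (Function.uncurry
      (fun (a : ℝ × R4) (y : R4) => ENNReal.ofReal (gk a.1 (a.2 - y)))) := by
    rw [Function.uncurry_def]
    exact measurable_gk_sub.ennreal_ofReal
  rw [sq_lintegral_kernel _ _ (fun (a : ℝ × R4) (y : R4) => ENNReal.ofReal (gk a.1 (a.2 - y))) hk]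
  set I := volume.restrict (Set.Ioc (0 : ℝ) 1)
  have hI : ∀ᵐ s ∂I, 0 < s := by
    filter_upwards [ae_restrict_mem measurableSet_Ioc] with s hs using hs.1
  have hIμ : ∀ᵐ a ∂(I.prod μ), 0 < a.1 := Measure.quasiMeasurePreserving_fst.ae hI
  have h1 : ∀ᵐ a ∂(I.prod μ), ∫⁻ b, ∫⁻ y, ENNReal.ofReal (gk a.1 (a.2 - y)) *
      ENNReal.ofReal (gk b.1 (b.2 - y)) ∂volume ∂(I.prod μ) =
      ∫⁻ b, ENNReal.ofReal (gk (a.1 + b.1) (a.2 - b.2)) ∂(I.prod μ) := by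
    filter_upwards [hIμ] with a ha
    refine lintegral_congr_ae ?_
    filter_upwards [hIμ] with b hb
    exact lintegral_gk_mul_gk ha hb _ _
  rw [lintegral_congr_ae h1]
  have hM : Measurable (fun p : (ℝ × R4) × (ℝ × R4) =>
      ENNReal.ofReal (gk (p.1.1 + p.2.1) (p.1.2 - p.2.2))) :=
    (measurable_gk.comp ((measurable_fst.fst.add measurable_snd.fst).prodMk
      (measurable_fst.snd.sub measurable_snd.snd))).ennreal_ofReal
  rw [lintegral_prod _ hM.lintegral_prod_right'.aemeasurable]
  refine lintegral_congr fun s => ?_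
  have h2 : ∀ x' : R4, ∫⁻ b, ENNReal.ofReal (gk (s + b.1) (x' - b.2)) ∂(I.prod μ) =
      ∫⁻ t, ∫⁻ x, ENNReal.ofReal (gk (s + t) (x' - x)) ∂μ ∂I := by
    intro x'
    rw [lintegral_prod]
    exact (hM.comp ((measurable_const (a := (s, x'))).prodMk measurable_id)).aemeasurable
  simp only [h2]
  rw [lintegral_lintegral_swap]
  have h3 : Measurable (fun q : (R4 × ℝ) × R4 =>
      ENNReal.ofReal (gk (s + q.1.2) (q.1.1 - q.2))) :=
    (measurable_gk.comp ((measurable_const.add measurable_fst.snd).prodMk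
      (measurable_fst.fst.sub measurable_snd))).ennreal_ofReal
  exact h3.lintegral_prod_right'.aemeasurable

/-! ### The two-level estimate -/

/-- The heat evolution `e^Δ μ` at time `1`. -/
def heatOne (μ : Measure R4) (y : R4) : ℝ≥0∞ := ∫⁻ x, ENNReal.ofReal (gk 1 (x - y)) ∂μ

lemma measurable_gk_one : Measurable (fun p : R4 × R4 => gk 1 (p.1 - p.2)) :=
  (continuous_gk 1).measurable.comp (measurable_fst.sub measurable_snd)

lemma measurable_heatOne (μ : Measure R4) [SFinite μ] : Measurable (heatOne μ) :=
  Measurable.lintegral_prod_left' (f := fun p : R4 × R4 =>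
    ENNReal.ofReal (gk 1 (p.1 - p.2))) measurable_gk_one.ennreal_ofReal

lemma lintegral_heatOne_sq_le (μ : Measure R4) [SFinite μ] (hμ : μ Set.univ = 1) :
    ∫⁻ y, heatOne μ y ^ 2 ≤ ENNReal.ofReal (64 * π ^ 2)⁻¹ := by
  unfold heatOne
  have hk : Measurable (Function.uncurry
      (fun (x : R4) (y : R4) => ENNReal.ofReal (gk 1 (x - y)))) := by
    rw [Function.uncurry_def]
    exact measurable_gk_one.ennreal_ofReal
  rw [sq_lintegral_kernel _ _ (fun (x : R4) (y : R4) => ENNReal.ofReal (gk 1 (x - y))) hk]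
  simp_rw [lintegral_gk_mul_gk one_pos one_pos]
  calc _ ≤ ∫⁻ _, ∫⁻ _, ENNReal.ofReal (64 * π ^ 2)⁻¹ ∂μ ∂μ := by
        refine lintegral_mono fun x => lintegral_mono fun x' => ENNReal.ofReal_le_ofReal ?_
        refine (gk_le (by norm_num) _).trans (le_of_eq ?_)
        congr 1; ring
    _ = _ := by simp [hμ]

/-- Duality for the potential representation: integrating the pointwise heat representation of
`u` against `μ` and applying the Cauchy-Schwarz inequality twice. -/
lemma lintegral_abs_le {u f : R4 → ℝ} (hu : Measurable u) (hf : Measurable f)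
    (hrep : ∀ x, ENNReal.ofReal |u x| ≤
      (∫⁻ t in Set.Ioc (0 : ℝ) 1, ∫⁻ y, ENNReal.ofReal (gk t (x - y)) * ENNReal.ofReal |f y|) +
      ∫⁻ y, ENNReal.ofReal (gk 1 (x - y)) * ENNReal.ofReal |u y|)
    (μ : Measure R4) [SFinite μ] (hμ : μ Set.univ = 1) {h a b : ℝ}
    (hh : ∫⁻ y, heatPot μ y ^ 2 ≤ ENNReal.ofReal h)
    (ha : ∫⁻ y, ENNReal.ofReal (f y ^ 2) ≤ ENNReal.ofReal a)
    (hb : ∫⁻ y, ENNReal.ofReal (u y ^ 2) ≤ ENNReal.ofReal b) :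
    ∫⁻ x, ENNReal.ofReal |u x| ∂μ ≤ ENNReal.ofReal (√h * √a + √((64 * π ^ 2)⁻¹) * √b) := by
  have hAm : Measurable (fun y => ENNReal.ofReal |f y|) := by fun_prop
  have hBm : Measurable (fun y => ENNReal.ofReal |u y|) := by fun_prop
  have hsq : ∀ v : ℝ, ENNReal.ofReal |v| ^ 2 = ENNReal.ofReal (v ^ 2) := by
    intro v
    rw [← ENNReal.ofReal_pow (abs_nonneg _), sq_abs]
  have hA := lintegral_mul_le_sqrt volume (measurable_heatPot μ) hAm hh (by simpa only [hsq] using ha)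
  have hB := lintegral_mul_le_sqrt volume (measurable_heatOne μ) hBm (lintegral_heatOne_sq_le μ hμ)
    (by simpa only [hsq] using hb)
  rw [ENNReal.ofReal_add (by positivity) (by positivity)]
  refine le_trans ?_ (add_le_add hA hB)
  have m3 : Measurable (fun p : (ℝ × R4) × R4 =>
      ENNReal.ofReal (gk p.1.1 (p.1.2 - p.2)) * ENNReal.ofReal |f p.2|) :=
    measurable_gk_sub.ennreal_ofReal.mul (hAm.comp measurable_snd)
  have m2 : Measurable (fun p : R4 × R4 =>
      ENNReal.ofReal (gk 1 (p.1 - p.2)) * ENNReal.ofReal |u p.2|) :=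
    measurable_gk_one.ennreal_ofReal.mul (hBm.comp measurable_snd)
  have e1 : ∫⁻ y, heatPot μ y * ENNReal.ofReal |f y| = ∫⁻ x, ∫⁻ t in Set.Ioc (0 : ℝ) 1, ∫⁻ y,
      ENNReal.ofReal (gk t (x - y)) * ENNReal.ofReal |f y| ∂volume ∂volume ∂μ := by
    unfold heatPot
    have : ∀ y : R4, (∫⁻ a, ENNReal.ofReal (gk a.1 (a.2 - y))
        ∂((volume.restrict (Set.Ioc (0 : ℝ) 1)).prod μ)) * ENNReal.ofReal |f y| =
        ∫⁻ a, ENNReal.ofReal (gk a.1 (a.2 - y)) * ENNReal.ofReal |f y|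
        ∂((volume.restrict (Set.Ioc (0 : ℝ) 1)).prod μ) := fun y =>
      (lintegral_mul_const' _ _ ENNReal.ofReal_ne_top).symm
    simp only [this]
    rw [lintegral_lintegral_swap]
    · rw [lintegral_prod _ m3.lintegral_prod_right'.aemeasurable, lintegral_lintegral_swap]
      exact m3.lintegral_prod_right'.aemeasurable
    · exact (m3.comp measurable_swap).aemeasurable
  have e2 : ∫⁻ y, heatOne μ y * ENNReal.ofReal |u y| =
      ∫⁻ x, ∫⁻ y, ENNReal.ofReal (gk 1 (x - y)) * ENNReal.ofReal |u y| ∂volume ∂μ := by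
    unfold heatOne
    have : ∀ y : R4, (∫⁻ x, ENNReal.ofReal (gk 1 (x - y)) ∂μ) * ENNReal.ofReal |u y| =
        ∫⁻ x, ENNReal.ofReal (gk 1 (x - y)) * ENNReal.ofReal |u y| ∂μ := fun y =>
      (lintegral_mul_const' _ _ ENNReal.ofReal_ne_top).symm
    simp only [this]
    rw [lintegral_lintegral_swap]
    exact (m2.comp measurable_swap).aemeasurable
  rw [e1, e2, ← lintegral_add_right _ m2.lintegral_prod_right']
  exact lintegral_mono hrep

/-- The constant added to `log (1/m)` in the two-level estimate. -/
def C0 (σ : ℝ) : ℝ := 32 * π ^ 2 * (1 + (16 * π ^ 2)⁻¹ + (64 * π ^ 2)⁻¹ / σ)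

/-- The two-level estimate for lower bounds `l₁, l₂` of `|u|` on sets of measure `m₁, m₂`: test the
heat representation against `mu E₁ E₂ m₁ m₂`, for which `∫ |u|` is at least `(l₁ + l₂) / 2`. -/
lemma two_level {u f : R4 → ℝ} {σ : ℝ} (hσ : 0 < σ) (hu : Measurable u) (hf : Measurable f)
    (hrep : ∀ x, ENNReal.ofReal |u x| ≤
      (∫⁻ t in Set.Ioc (0 : ℝ) 1, ∫⁻ y, ENNReal.ofReal (gk t (x - y)) * ENNReal.ofReal |f y|) +
      ∫⁻ y, ENNReal.ofReal (gk 1 (x - y)) * ENNReal.ofReal |u y|)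
    (hen : ∫⁻ y, ENNReal.ofReal (f y ^ 2 + σ * u y ^ 2) ≤ 1)
    {E₁ E₂ : Set R4} (hE₁ : MeasurableSet E₁) (hE₂ : MeasurableSet E₂) {m₁ m₂ l₁ l₂ : ℝ}
    (hm₁ : 0 < m₁) (hm₂ : 0 < m₂) (hm₁' : m₁ ≤ 1) (hm₂' : m₂ ≤ 1)
    (hv₁ : volume E₁ = ENNReal.ofReal m₁) (hv₂ : volume E₂ = ENNReal.ofReal m₂)
    (hl₁ : 0 ≤ l₁) (hl₂ : 0 ≤ l₂) (hul₁ : ∀ x ∈ E₁, l₁ ≤ |u x|) (hul₂ : ∀ x ∈ E₂, l₂ ≤ |u x|) :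
    32 * π ^ 2 * (l₁ + l₂) ^ 2 ≤ 3 * (Real.log m₁⁻¹ + C0 σ) + (Real.log m₂⁻¹ + C0 σ) := by
  set μ := mu E₁ E₂ m₁ m₂ with hμdef
  have hμ : μ Set.univ = 1 := mu_univ hm₁ hm₂ hv₁ hv₂
  have hL : ∀ m : ℝ, 0 < m → m ≤ 1 → 0 ≤ Real.log m⁻¹ := fun m h h' =>
    Real.log_nonneg ((one_le_inv₀ h).2 h')
  have L1 := hL m₁ hm₁ hm₁'
  have L2 := hL m₂ hm₂ hm₂'
  set K : ℝ := 1 + (16 * π ^ 2)⁻¹ with hK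
  set h : ℝ := 3 / 4 * ((32 * π ^ 2)⁻¹ * Real.log m₁⁻¹ + K) +
    1 / 4 * ((32 * π ^ 2)⁻¹ * Real.log m₂⁻¹ + K) with hh
  have hK0 : 0 ≤ K := by positivity
  have hh0 : 0 ≤ h := by positivity
  have hpot : ∫⁻ y, heatPot μ y ^ 2 ≤ ENNReal.ofReal h := by
    rw [lintegral_heatPot_sq]
    have mg : ∀ m, Measurable (fun p : ℝ × ℝ => ENNReal.ofReal (gm m (p.1 + p.2))) := fun m =>
      ((measurable_gm m).comp (measurable_fst.add measurable_snd)).ennreal_ofReal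
    calc _ ≤ ∫⁻ s in Set.Ioc (0 : ℝ) 1, ∫⁻ t in Set.Ioc (0 : ℝ) 1,
          (ENNReal.ofReal (3 / 4) * ENNReal.ofReal (gm m₁ (s + t)) +
            ENNReal.ofReal (1 / 4) * ENNReal.ofReal (gm m₂ (s + t))) := by
          refine setLIntegral_mono' measurableSet_Ioc fun s hs =>
            setLIntegral_mono' measurableSet_Ioc fun t ht => ?_
          exact lintegral_mu_mu_le hm₁ hm₂ (add_pos hs.1 ht.1) hv₁ hv₂
      _ = ENNReal.ofReal (3 / 4) * (∫⁻ s in Set.Ioc (0 : ℝ) 1, ∫⁻ t in Set.Ioc (0 : ℝ) 1,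
            ENNReal.ofReal (gm m₁ (s + t))) +
          ENNReal.ofReal (1 / 4) * (∫⁻ s in Set.Ioc (0 : ℝ) 1, ∫⁻ t in Set.Ioc (0 : ℝ) 1,
            ENNReal.ofReal (gm m₂ (s + t))) := by
          rw [← lintegral_const_mul' _ _ ENNReal.ofReal_ne_top,
            ← lintegral_const_mul' _ _ ENNReal.ofReal_ne_top,
            ← lintegral_add_left ((mg m₁).lintegral_prod_right'.const_mul _)]
          refine lintegral_congr fun s => ?_
          rw [lintegral_add_left, lintegral_const_mul' _ _ ENNReal.ofReal_ne_top,
            lintegral_const_mul' _ _ ENNReal.ofReal_ne_top]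
          exact ((mg m₁).comp (measurable_const.prodMk measurable_id)).const_mul _
      _ ≤ _ := by
          rw [hh, ENNReal.ofReal_add (by positivity) (by positivity),
            ENNReal.ofReal_mul (by norm_num), ENNReal.ofReal_mul (by norm_num)]
          exact add_le_add (mul_le_mul_right (lintegral_gm_le hm₁ hm₁') _)
            (mul_le_mul_right (lintegral_gm_le hm₂ hm₂') _)
  have hen' : (∫⁻ y, ENNReal.ofReal (f y ^ 2)) +
      ENNReal.ofReal σ * (∫⁻ y, ENNReal.ofReal (u y ^ 2)) ≤ 1 := by
    rw [← lintegral_const_mul' _ _ ENNReal.ofReal_ne_top, ← lintegral_add_left (by fun_prop)]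
    refine le_trans (le_of_eq (lintegral_congr fun y => ?_)) hen
    rw [ENNReal.ofReal_add (by positivity) (by positivity), ENNReal.ofReal_mul hσ.le]
  set A := ∫⁻ y, ENNReal.ofReal (f y ^ 2) with hA
  set B := ∫⁻ y, ENNReal.ofReal (u y ^ 2) with hB
  have hA1 : A ≠ ⊤ := ((le_self_add.trans hen').trans_lt ENNReal.one_lt_top).ne
  have hB1 : B ≠ ⊤ := by
    intro hBt
    rw [hBt, ENNReal.mul_top (by simpa using hσ)] at hen'
    simp at hen'
  have hab : A.toReal + σ * B.toReal ≤ 1 := by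
    have := ENNReal.toReal_mono ENNReal.one_ne_top hen'
    rwa [ENNReal.toReal_add hA1 (ENNReal.mul_ne_top ENNReal.ofReal_ne_top hB1), ENNReal.toReal_mul,
      ENNReal.toReal_ofReal hσ.le, ENNReal.toReal_one] at this
  have key := lintegral_abs_le hu hf hrep μ hμ (h := h) (a := A.toReal) (b := B.toReal) hpot
    (ENNReal.ofReal_toReal hA1).ge (ENNReal.ofReal_toReal hB1).ge
  have lnu : ∀ (E : Set R4) (m l : ℝ), MeasurableSet E → 0 < m → volume E = ENNReal.ofReal m →
      (∀ x ∈ E, l ≤ |u x|) → ENNReal.ofReal l ≤ ∫⁻ x, ENNReal.ofReal |u x| ∂(nu E m) := by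
    intro E m l hE hm hv hl
    calc ENNReal.ofReal l = ∫⁻ _, ENNReal.ofReal l ∂(nu E m) := by
          rw [lintegral_const, nu_univ hm hv, mul_one]
      _ ≤ _ := by
          unfold nu
          rw [lintegral_smul_measure, lintegral_smul_measure]
          refine mul_le_mul_right ?_ _
          exact setLIntegral_mono' hE fun x hx => ENNReal.ofReal_le_ofReal (hl x hx)
  have low : ENNReal.ofReal (1 / 2 * (l₁ + l₂)) ≤ ∫⁻ x, ENNReal.ofReal |u x| ∂μ := by
    rw [hμdef, mu, lintegral_smul_measure, lintegral_add_measure, ENNReal.ofReal_mul (by norm_num),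
      ENNReal.ofReal_add hl₁ hl₂]
    exact mul_le_mul_right (add_le_add (lnu E₁ m₁ l₁ hE₁ hm₁ hv₁ hul₁)
      (lnu E₂ m₂ l₂ hE₂ hm₂ hv₂ hul₂)) _
  have fin := (ENNReal.ofReal_le_ofReal_iff (by positivity)).1 (low.trans key)
  set a := A.toReal
  set b := B.toReal
  set q : ℝ := (64 * π ^ 2)⁻¹ with hq
  have ha0 : 0 ≤ a := ENNReal.toReal_nonneg
  have hb0 : 0 ≤ b := ENNReal.toReal_nonneg
  have hq0 : 0 ≤ q := by positivity
  -- The planar Cauchy-Schwarz inequality for the vectors `(√h, √(q/σ))` and `(√a, √(σ b))`.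
  have cs : (√h * √a + √q * √b) ^ 2 ≤ (h + q / σ) * (a + σ * b) := by
    have e1 := Real.sq_sqrt hh0
    have e2 := Real.sq_sqrt ha0
    have e3 := Real.sq_sqrt hq0
    have e4 := Real.sq_sqrt hb0
    have : (h + q / σ) * (a + σ * b) - (√h * √a + √q * √b) ^ 2 =
        σ⁻¹ * (σ * (√h * √b) - √q * √a) ^ 2 := by
      have h1 : (√h * √a + √q * √b) ^ 2 = h * a + q * b + 2 * (√h * √a * √q * √b) := by
        rw [← e1, ← e2, ← e3, ← e4]
        simp only [Real.sqrt_sq (Real.sqrt_nonneg _)]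
        ring
      have h2 : (σ * (√h * √b) - √q * √a) ^ 2 =
          σ ^ 2 * (h * b) + q * a - 2 * σ * (√h * √a * √q * √b) := by
        rw [← e1, ← e2, ← e3, ← e4]
        simp only [Real.sqrt_sq (Real.sqrt_nonneg _)]
        ring
      rw [h1, h2]
      field_simp
      ring
    have h3 : 0 ≤ σ⁻¹ * (σ * (√h * √b) - √q * √a) ^ 2 := by positivity
    linarith
  have hhq : 0 ≤ h + q / σ := by positivity
  have cs2 : (1 / 2 * (l₁ + l₂)) ^ 2 ≤ h + q / σ := by
    calc (1 / 2 * (l₁ + l₂)) ^ 2 ≤ (√h * √a + √q * √b) ^ 2 := by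
          gcongr
      _ ≤ (h + q / σ) * (a + σ * b) := cs
      _ ≤ (h + q / σ) * 1 := by gcongr
      _ = _ := mul_one _
  have e : 3 * (Real.log m₁⁻¹ + C0 σ) + (Real.log m₂⁻¹ + C0 σ) =
      4 * (32 * π ^ 2) * (h + q / σ) := by
    rw [hh, hq, hK, C0]
    field_simp
    ring
  rw [e]
  have hp : 0 < 32 * π ^ 2 := by positivity
  nlinarith [mul_le_mul_of_nonneg_left cs2 hp.le]

/-! ### The layer-cake argument -/

/-- The dominating function `9 log (1/θ)` of the second layer-cake integration in
`lintegral_exp_le`. -/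
lemma lintegral_nine_log : ∫⁻ θ in Set.Ioc (0 : ℝ) 1, ENNReal.ofReal (9 * Real.log θ⁻¹) =
    ENNReal.ofReal 9 := by
  have hI : IntervalIntegrable (fun θ : ℝ => 9 * Real.log θ⁻¹) volume 0 1 := by
    simp_rw [Real.log_inv]
    exact (intervalIntegral.intervalIntegrable_log'.neg).const_mul 9
  have h : ∫ θ in (0 : ℝ)..1, 9 * Real.log θ⁻¹ = 9 := by
    simp_rw [Real.log_inv]
    rw [intervalIntegral.integral_const_mul, intervalIntegral.integral_neg, integral_log]
    simp
  rw [intervalIntegrable_iff_integrableOn_Ioc_of_le zero_le_one] at hI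
  rw [intervalIntegral.integral_of_le zero_le_one] at h
  rw [← ofReal_integral_eq_lintegral_ofReal hI, h]
  filter_upwards [ae_restrict_mem measurableSet_Ioc] with θ hθ
  exact mul_nonneg (by norm_num) (Real.log_nonneg ((one_le_inv₀ hθ.1).2 hθ.2))

/-- Exponential integrability from the two-level estimate `h2`. For each `ℓ > 0`, the levels
`t > y0` at which `|{v > t}| > e^{C-t-ℓ}` lie in `(0, ℓ]` together with a set of diameter at most
`8ℓ`. With `θ = e^{-ℓ}` this says that `G t = e^{t-C} |{v > t}|` exceeds `θ` on a set of measure at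
most `9 log (1/θ)`, and `∫ G` is computed by a second layer-cake formula. -/
lemma lintegral_exp_le {v : R4 → ℝ} (hv : Measurable v) (hv0 : ∀ x, 0 ≤ v x) {y0 M C : ℝ}
    (hy0 : 0 < y0) (hM : ∫⁻ x, ENNReal.ofReal (v x) ≤ ENNReal.ofReal M)
    (hfin : ∀ y, y0 < y → volume {x | y < v x} ≤ 1)
    (h2 : ∀ y₁ y₂, y0 < y₁ → y₁ ≤ y₂ → 0 < (volume {x | y₂ < v x}).toReal →
      (√y₁ + √y₂) ^ 2 ≤ 3 * (Real.log (volume {x | y₁ < v x}).toReal⁻¹ + C) +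
        (Real.log (volume {x | y₂ < v x}).toReal⁻¹ + C)) :
    ∫⁻ x, ENNReal.ofReal (rexp (v x) - 1) ≤
      ENNReal.ofReal (rexp y0) * ENNReal.ofReal M + ENNReal.ofReal (rexp C) * ENNReal.ofReal 9 := by
  have cake := lintegral_comp_eq_lintegral_meas_lt_mul (volume : Measure R4) (f := v) (g := rexp)
    (Eventually.of_forall hv0) hv.aemeasurable
    (fun t _ => Real.continuous_exp.intervalIntegrable _ _)
    (Eventually.of_forall fun t => (Real.exp_pos t).le)
  simp only [integral_exp, Real.exp_zero] at cake
  rw [cake, ← Set.Ioc_union_Ioi_eq_Ioi hy0.le]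
  refine (lintegral_union_le _ _ _).trans (add_le_add ?_ ?_)
  · calc ∫⁻ t in Set.Ioc 0 y0, volume {x | t < v x} * ENNReal.ofReal (rexp t)
        ≤ ∫⁻ t in Set.Ioc 0 y0, ENNReal.ofReal (rexp y0) * volume {x | t < v x} := by
          refine setLIntegral_mono' measurableSet_Ioc fun t ht => ?_
          rw [mul_comm]
          gcongr
          exact ht.2
      _ = ENNReal.ofReal (rexp y0) * ∫⁻ t in Set.Ioc 0 y0, volume {x | t < v x} :=
          lintegral_const_mul' _ _ ENNReal.ofReal_ne_top
      _ ≤ ENNReal.ofReal (rexp y0) * ∫⁻ t in Set.Ioi 0, volume {x | t < v x} := by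
          gcongr
          exact Set.Ioc_subset_Ioi_self
      _ ≤ _ := by
          rw [← lintegral_eq_lintegral_meas_lt volume (Eventually.of_forall hv0) hv.aemeasurable]
          gcongr
  set m : ℝ → ℝ := fun t => (volume {x | t < v x}).toReal with hm
  set G : ℝ → ℝ := fun t => rexp (t - C) * m t with hG
  have hmm : Measurable m := by
    have : Antitone fun t : ℝ => volume {x | t < v x} := fun s t hst =>
      measure_mono fun x (hx : t < v x) => lt_of_le_of_lt hst hx
    exact this.measurable.ennreal_toReal
  have hGm : Measurable G := by
    rw [hG]; fun_prop
  have hG0 : ∀ t, 0 ≤ G t := fun t => mul_nonneg (Real.exp_pos _).le ENNReal.toReal_nonneg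
  have e1 : ∫⁻ t in Set.Ioi y0, volume {x | t < v x} * ENNReal.ofReal (rexp t) =
      ENNReal.ofReal (rexp C) * ∫⁻ t in Set.Ioi y0, ENNReal.ofReal (G t) := by
    rw [← lintegral_const_mul' _ _ ENNReal.ofReal_ne_top]
    refine setLIntegral_congr_fun measurableSet_Ioi fun t ht => ?_
    have hne : volume {x | t < v x} ≠ ⊤ := ((hfin t ht).trans_lt ENNReal.one_lt_top).ne
    rw [← ENNReal.ofReal_mul (Real.exp_pos _).le]
    simp only [hG, hm]
    rw [← mul_assoc, ← Real.exp_add, ENNReal.ofReal_mul (Real.exp_pos _).le,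
      ENNReal.ofReal_toReal hne, mul_comm]
    congr 3
    ring
  rw [e1]
  gcongr
  rw [lintegral_eq_lintegral_meas_lt _ (Eventually.of_forall hG0) hGm.aemeasurable]
  have hS : ∀ θ, 0 < θ → ∀ t ∈ {t | θ < G t} ∩ Set.Ioi y0,
      0 < m t ∧ Real.log (m t)⁻¹ + C < t + Real.log θ⁻¹ := by
    rintro θ hθ t ⟨ht, -⟩
    have ht : θ < rexp (t - C) * m t := ht
    have hmt : 0 < m t := by
      by_contra hcon
      have : rexp (t - C) * m t ≤ 0 :=
        mul_nonpos_of_nonneg_of_nonpos (Real.exp_pos _).le (not_lt.1 hcon)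
      linarith
    refine ⟨hmt, ?_⟩
    have := Real.log_lt_log hθ ht
    rw [Real.log_mul (Real.exp_pos _).ne' hmt.ne', Real.log_exp] at this
    rw [Real.log_inv, Real.log_inv]
    linarith
  have hℓ : ∀ θ, 0 < θ → ∀ t ∈ {t | θ < G t} ∩ Set.Ioi y0, 0 < Real.log θ⁻¹ := by
    intro θ hθ t ht
    obtain ⟨hp, hlt⟩ := hS θ hθ t ht
    -- At equal levels the estimate reads `4t ≤ 4 (log (1/m) + C)`.
    have := h2 t t ht.2 le_rfl hp
    have ht0 : 0 ≤ t := (hy0.trans ht.2).le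
    have e : (√t + √t) ^ 2 = 4 * t := by
      rw [← two_mul, mul_pow, Real.sq_sqrt ht0]; norm_num
    rw [e] at this
    linarith
  have hbound : ∀ θ, 0 < θ → (volume.restrict (Set.Ioi y0)) {t | θ < G t} ≤
      Set.indicator (Set.Ioc 0 1) (fun θ => ENNReal.ofReal (9 * Real.log θ⁻¹)) θ := by
    intro θ hθ
    rw [Measure.restrict_apply (measurableSet_lt measurable_const hGm)]
    set S := {t | θ < G t} ∩ Set.Ioi y0 with hSdef
    rcases S.eq_empty_or_nonempty with hemp | ⟨t0, ht0⟩
    · rw [hemp]; simp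
    have hl := hℓ θ hθ t0 ht0
    set ℓ := Real.log θ⁻¹ with hldef
    have hθ1 : θ ≤ 1 := by
      by_contra hcon
      have : ℓ ≤ 0 := by
        rw [hldef, Real.log_inv]
        have := Real.log_nonneg (not_le.1 hcon).le
        linarith
      linarith
    rw [Set.indicator_of_mem (show θ ∈ Set.Ioc (0 : ℝ) 1 from ⟨hθ, hθ1⟩)]
    have hgap : ∀ t₁ ∈ S, ∀ t₂ ∈ S, ℓ ≤ t₁ → t₁ ≤ t₂ → t₂ ≤ t₁ + 8 * ℓ := by
      intro t₁ ht₁ t₂ ht₂ hlt₁ hle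
      obtain ⟨hp1, hlt1⟩ := hS θ hθ t₁ ht₁
      obtain ⟨hp2, hlt2⟩ := hS θ hθ t₂ ht₂
      have h := h2 t₁ t₂ ht₁.2 hle hp2
      have p1 : 0 < t₁ := hy0.trans ht₁.2
      have p2 : 0 < t₂ := hy0.trans ht₂.2
      have e1 := Real.sq_sqrt p1.le
      have e2 := Real.sq_sqrt p2.le
      -- The upper bounds on `log (1/m)` turn `h` into `(√t₁ + √t₂)² ≤ 3 t₁ + t₂ + 4ℓ`.
      have h3 : √t₁ * √t₂ ≤ t₁ + 2 * ℓ := by nlinarith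
      have h4 : t₁ * t₂ ≤ (t₁ + 2 * ℓ) ^ 2 := by
        calc t₁ * t₂ = (√t₁ * √t₂) ^ 2 := by rw [mul_pow, e1, e2]
          _ ≤ _ := by gcongr
      have h5 : t₁ * t₂ ≤ t₁ * (t₁ + 8 * ℓ) := by nlinarith
      exact le_of_mul_le_mul_left h5 p1
    have hsub : S ⊆ Set.Ioc 0 ℓ ∪ (S ∩ Set.Ici ℓ) := by
      intro t ht
      rcases le_total t ℓ with h | h
      · exact Or.inl ⟨hy0.trans ht.2, h⟩
      · exact Or.inr ⟨ht, h⟩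
    calc volume S ≤ volume (Set.Ioc 0 ℓ) + volume (S ∩ Set.Ici ℓ) :=
          (measure_mono hsub).trans (measure_union_le _ _)
      _ ≤ ENNReal.ofReal ℓ + ENNReal.ofReal (8 * ℓ) := by
          refine add_le_add (by simp) ((Real.volume_le_diam _).trans ?_)
          refine Metric.ediam_le fun t₁ ht₁ t₂ ht₂ => ?_
          rw [edist_dist]
          apply ENNReal.ofReal_le_ofReal
          rw [Real.dist_eq, abs_le]
          rcases le_total t₁ t₂ with h | h
          · have := hgap t₁ ht₁.1 t₂ ht₂.1 ht₁.2 h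
            constructor <;> linarith
          · have := hgap t₂ ht₂.1 t₁ ht₁.1 ht₂.2 h
            constructor <;> linarith
      _ = _ := by
          rw [← ENNReal.ofReal_add hl.le (by positivity)]
          congr 1
          ring
  calc ∫⁻ θ in Set.Ioi 0, (volume.restrict (Set.Ioi y0)) {t | θ < G t}
      ≤ ∫⁻ θ in Set.Ioi 0, Set.indicator (Set.Ioc 0 1)
          (fun θ => ENNReal.ofReal (9 * Real.log θ⁻¹)) θ :=
        setLIntegral_mono' measurableSet_Ioi hbound
    _ ≤ ∫⁻ θ, Set.indicator (Set.Ioc 0 1) (fun θ => ENNReal.ofReal (9 * Real.log θ⁻¹)) θ :=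
        setLIntegral_le_lintegral _ _
    _ = _ := by
        rw [lintegral_indicator measurableSet_Ioc, lintegral_nine_log]

/-! ### Derivatives of the heat kernel -/

/-- The common value `∂ₜ gk = Δ gk` of the time derivative and the Laplacian of the heat kernel. -/
def dgk (t : ℝ) (z : R4) : ℝ := (-2 / t + ‖z‖ ^ 2 / (4 * t ^ 2)) * gk t z

lemma norm_sq_mul_gk_le {t : ℝ} (ht : 0 < t) (z : R4) :
    ‖z‖ ^ 2 * gk t z ≤ 32 * t * gk (2 * t) z := by
  set r : ℝ := ‖z‖ ^ 2 / (8 * t) with hr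
  have e1 : -‖z‖ ^ 2 / (4 * t) = -r + -r := by rw [hr]; field_simp; ring
  have e2 : -‖z‖ ^ 2 / (4 * (2 * t)) = -r := by rw [hr]; field_simp; ring
  have e3 : ‖z‖ ^ 2 = 8 * t * r := by rw [hr]; field_simp
  have h : r * rexp (-r) ≤ 1 := by
    rw [Real.exp_neg, ← div_eq_mul_inv, div_le_one (Real.exp_pos _)]
    linarith [Real.add_one_le_exp r]
  have e4 : 32 * t * ((16 * π ^ 2 * (2 * t) ^ 2)⁻¹ * rexp (-r)) -
      8 * t * r * ((16 * π ^ 2 * t ^ 2)⁻¹ * (rexp (-r) * rexp (-r))) =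
      8 * t * (16 * π ^ 2 * t ^ 2)⁻¹ * rexp (-r) * (1 - r * rexp (-r)) := by
    field_simp
    ring
  unfold gk
  rw [e1, e2, Real.exp_add, e3]
  have : 0 ≤ 8 * t * (16 * π ^ 2 * t ^ 2)⁻¹ * rexp (-r) * (1 - r * rexp (-r)) :=
    mul_nonneg (by positivity) (by linarith)
  linarith

lemma gk_le_gk_two {t : ℝ} (ht : 0 < t) (z : R4) : gk t z ≤ 4 * gk (2 * t) z := by
  unfold gk
  have : rexp (-‖z‖ ^ 2 / (4 * t)) ≤ rexp (-‖z‖ ^ 2 / (4 * (2 * t))) := by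
    rw [Real.exp_le_exp, neg_div, neg_div, neg_le_neg_iff]
    gcongr
    linarith
  calc _ ≤ (16 * π ^ 2 * t ^ 2)⁻¹ * rexp (-‖z‖ ^ 2 / (4 * (2 * t))) := by gcongr
    _ = _ := by field_simp; norm_num

/-- Monotonicity of the exponential factor gives a bound uniform in `t ∈ [ε, 1]`. -/
lemma gk_le_gk_one {ε t : ℝ} (hε : 0 < ε) (h1 : ε ≤ t) (h2 : t ≤ 1) (z : R4) :
    gk t z ≤ (ε ^ 2)⁻¹ * gk 1 z := by
  unfold gk
  have ht : 0 < t := hε.trans_le h1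
  have : rexp (-‖z‖ ^ 2 / (4 * t)) ≤ rexp (-‖z‖ ^ 2 / (4 * 1)) := by
    rw [Real.exp_le_exp, neg_div, neg_div, neg_le_neg_iff]
    gcongr
  calc _ ≤ (16 * π ^ 2 * ε ^ 2)⁻¹ * rexp (-‖z‖ ^ 2 / (4 * 1)) := by gcongr
    _ = _ := by field_simp

/-- Domination of `∂ₜ gk` by one Gaussian, uniformly in `t ∈ [ε, 1]`. -/
lemma abs_dgk_le {ε t : ℝ} (hε : 0 < ε) (h1 : ε ≤ t) (h2 : t ≤ 1) (z : R4) :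
    |dgk t z| ≤ (ε ^ 2)⁻¹ * (8 / ε + 8 / ε ^ 2) * gk 2 z := by
  have ht : 0 < t := hε.trans_le h1
  have hg := gk_le_gk_one hε h1 h2 z
  have a1 := norm_sq_mul_gk_le one_pos z
  have a2 := gk_le_gk_two one_pos z
  simp only [mul_one] at a1 a2
  unfold dgk
  rw [abs_mul, abs_of_nonneg (gk_nonneg t z)]
  have hc : |-2 / t + ‖z‖ ^ 2 / (4 * t ^ 2)| ≤ 2 / ε + ‖z‖ ^ 2 / (4 * ε ^ 2) := by
    refine (abs_add_le _ _).trans (add_le_add ?_ ?_)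
    · rw [neg_div, abs_neg, abs_of_nonneg (by positivity)]
      gcongr
    · rw [abs_of_nonneg (by positivity)]
      gcongr
  calc _ ≤ (2 / ε + ‖z‖ ^ 2 / (4 * ε ^ 2)) * ((ε ^ 2)⁻¹ * gk 1 z) := by
        gcongr
        exact gk_nonneg _ _
    _ = (ε ^ 2)⁻¹ * (2 / ε * gk 1 z + (4 * ε ^ 2)⁻¹ * (‖z‖ ^ 2 * gk 1 z)) := by
        field_simp
    _ ≤ (ε ^ 2)⁻¹ * (2 / ε * (4 * gk 2 z) + (4 * ε ^ 2)⁻¹ * (32 * gk 2 z)) := by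
        have b1 := mul_le_mul_of_nonneg_left a2 (show 0 ≤ 2 / ε by positivity)
        have b2 := mul_le_mul_of_nonneg_left a1 (show 0 ≤ (4 * ε ^ 2)⁻¹ by positivity)
        exact mul_le_mul_of_nonneg_left (add_le_add b1 b2) (by positivity)
    _ = _ := by
        field_simp
        ring

lemma hasDerivAt_gk {t : ℝ} (ht : 0 < t) (z : R4) :
    HasDerivAt (fun t => gk t z) (dgk t z) t := by
  unfold dgk gk
  have h1 : HasDerivAt (fun t : ℝ => (16 * π ^ 2 * t ^ 2)⁻¹)
      (-(16 * π ^ 2 * (2 * t)) / (16 * π ^ 2 * t ^ 2) ^ 2) t := by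
    have := ((hasDerivAt_pow 2 t).const_mul (16 * π ^ 2)).inv (by positivity)
    convert! this using 1
    simp
  have h2 : HasDerivAt (fun t : ℝ => -‖z‖ ^ 2 / (4 * t)) (‖z‖ ^ 2 / (4 * t ^ 2)) t := by
    have := (((hasDerivAt_id t).const_mul 4).inv (by positivity)).const_mul (-‖z‖ ^ 2)
    convert! this using 1
    simp only [id]
    field_simp
  convert! h1.mul h2.exp using 1
  field_simp

lemma memLp_gk {t : ℝ} (ht : 0 < t) : MemLp (gk t) 2 := by
  rw [memLp_two_iff_integrable_sq (continuous_gk t).aestronglyMeasurable]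
  have : (fun z => gk t z ^ 2) = fun z => (64 * π ^ 2 * t ^ 2)⁻¹ * gk (t / 2) z := by
    ext z
    unfold gk
    rw [mul_pow, ← Real.exp_nat_mul, ← mul_assoc]
    congr 1
    · field_simp; norm_num
    · congr 1; push_cast; field_simp
  rw [this]
  exact (integrable_gk (by positivity)).const_mul _

lemma memLp_gk_sub {t : ℝ} (ht : 0 < t) (x : R4) : MemLp (fun y => gk t (x - y)) 2 := by
  simp_rw [gk_sub_comm t x]
  exact (memLp_gk ht).comp_measurePreserving (measurePreserving_sub_right volume x)

lemma integrable_gk_sub {t : ℝ} (ht : 0 < t) (x : R4) : Integrable (fun y => gk t (x - y)) := by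
  simp_rw [gk_sub_comm t x]
  exact (integrable_gk ht).comp_sub_right x

/-- A continuous function with Gaussian decay times an `L²` function is integrable. -/
lemma integrable_gauss_mul {g w : R4 → ℝ} {M s : ℝ} {x : R4} (hs : 0 < s) (hg : Continuous g)
    (hb : ∀ y, |g y| ≤ M * gk s (x - y)) (hw : MemLp w 2) : Integrable (fun y => g y * w y) := by
  have h : Integrable (fun y => gk s (x - y) * w y) :=
    (memLp_gk_sub hs x).integrable_mul hw
  refine (h.norm.const_mul M).mono' (hg.aestronglyMeasurable.mul hw.aestronglyMeasurable)
    (Eventually.of_forall fun y => ?_)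
  rw [norm_mul, norm_mul, Real.norm_eq_abs, Real.norm_eq_abs, Real.norm_eq_abs,
    abs_of_nonneg (gk_nonneg _ _), ← mul_assoc]
  gcongr
  exact hb y

/-- The coordinate vector `eᵢ`. -/
def ei (i : Fin 4) : R4 := EuclideanSpace.single i 1

lemma lapl_eq {u : R4 → ℝ} (hu : ContDiff ℝ (⊤ : ℕ∞) u) (x : R4) :
    lapl u x = ∑ i, fderiv ℝ (fun y => fderiv ℝ u y (ei i)) x (ei i) := by
  unfold lapl
  refine Finset.sum_congr rfl fun i _ => ?_
  have hd : DifferentiableAt ℝ (fderiv ℝ u) x :=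
    (hu.fderiv_right (m := 1) (by norm_cast)).differentiable (by norm_num) x
  rw [iteratedFDeriv_two_apply, fderiv_clm_apply hd (differentiableAt_const _)]
  simp [ei]

lemma measurable_lapl {u : R4 → ℝ} (hu : ContDiff ℝ (⊤ : ℕ∞) u) : Measurable (lapl u) := by
  rw [show lapl u = fun x => ∑ i, fderiv ℝ (fun y => fderiv ℝ u y (ei i)) x (ei i) from
    funext (lapl_eq hu)]
  exact Finset.measurable_sum _ fun i _ => measurable_fderiv_apply_const ℝ _ _

lemma hasFDerivAt_gk_sub (t : ℝ) (x y : R4) :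
    HasFDerivAt (fun y => gk t (x - y))
      ((gk t (x - y) * (2 * (4 * t)⁻¹)) • innerSL ℝ (x - y)) y := by
  unfold gk
  have h1 : HasFDerivAt (fun y : R4 => x - y) (-ContinuousLinearMap.id ℝ R4) y :=
    (hasFDerivAt_id y).const_sub x
  have h2 := ((h1.norm_sq.const_mul (-(4 * t)⁻¹)).exp).const_mul (16 * π ^ 2 * t ^ 2)⁻¹
  convert! h2 using 1
  · ext y
    congr 2
    ring
  · ext v
    have : -‖x - y‖ ^ 2 / (4 * t) = -(4 * t)⁻¹ * ‖x - y‖ ^ 2 := by ring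
    rw [this]
    simp
    ring

lemma fderiv_gk_sub (t : ℝ) (x y : R4) (i : Fin 4) :
    fderiv ℝ (fun y => gk t (x - y)) y (ei i) = (x i - y i) / (2 * t) * gk t (x - y) := by
  rw [(hasFDerivAt_gk_sub t x y).fderiv]
  simp [ei, EuclideanSpace.inner_single_right]
  ring

lemma fderiv_coord_gk (t : ℝ) (x y : R4) (i : Fin 4) :
    fderiv ℝ (fun y : R4 => (x i - y i) / (2 * t) * gk t (x - y)) y (ei i) =
      (-1 / (2 * t) + (x i - y i) ^ 2 / (4 * t ^ 2)) * gk t (x - y) := by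
  have hp : HasFDerivAt (fun y : R4 => y i) (EuclideanSpace.proj (𝕜 := ℝ) i : R4 →L[ℝ] ℝ) y :=
    (EuclideanSpace.proj (𝕜 := ℝ) i : R4 →L[ℝ] ℝ).hasFDerivAt
  have h1 := ((hp.const_sub (x i)).mul_const (2 * t)⁻¹)
  have h := h1.fun_mul (hasFDerivAt_gk_sub t x y)
  simp_rw [div_eq_mul_inv]
  rw [h.fderiv]
  simp [ei, EuclideanSpace.inner_single_right]
  ring

lemma sum_fderiv_coord_gk (t : ℝ) (x y : R4) :
    ∑ i, (-1 / (2 * t) + (x i - y i) ^ 2 / (4 * t ^ 2)) * gk t (x - y) = dgk t (x - y) := by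
  rw [← Finset.sum_mul, dgk, EuclideanSpace.norm_sq_eq]
  congr 1
  simp only [Fin.sum_univ_four, PiLp.sub_apply, Real.norm_eq_abs, sq_abs]
  ring

lemma sq_coord_le (z : R4) (i : Fin 4) : z i ^ 2 ≤ ‖z‖ ^ 2 := by
  rw [← sq_abs, ← Real.norm_eq_abs]
  gcongr
  exact PiLp.norm_apply_le z i

/-! ### Green's formula against the heat kernel -/

/-- Divergence theorem `∫ q div w = -∫ ∇q · w` on `ℝ⁴`. Only the full divergence, not the
individual terms `q ∂ᵢwᵢ`, is assumed integrable against `q`, so a cutoff is needed. -/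
lemma integral_mul_div {q : R4 → ℝ} {w : Fin 4 → R4 → ℝ} (hq : ContDiff ℝ 1 q)
    (hw : ∀ i, ContDiff ℝ 1 (w i))
    (h1 : Integrable (fun y => q y * ∑ i, fderiv ℝ (w i) y (ei i)))
    (h2 : ∀ i, Integrable (fun y => fderiv ℝ q y (ei i) * w i y))
    (h3 : ∀ i, Integrable (fun y => q y * w i y)) :
    ∫ y, q y * ∑ i, fderiv ℝ (w i) y (ei i) = -∑ i, ∫ y, fderiv ℝ q y (ei i) * w i y := by
  let f : ContDiffBump (0 : R4) := ⟨1, 2, one_pos, one_lt_two⟩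
  let χ : ℕ → R4 → ℝ := fun n y => f (((n : ℝ) + 1)⁻¹ • y)
  have hf1 : ContDiff ℝ 1 (f : R4 → ℝ) := f.contDiff
  have hpos : ∀ n : ℕ, (0 : ℝ) < ((n : ℝ) + 1)⁻¹ := fun n => by positivity
  have hχ : ∀ n, ContDiff ℝ 1 (χ n) := fun n => hf1.comp (contDiff_const_smul _)
  have hχs : ∀ n, HasCompactSupport (χ n) := fun n =>
    f.hasCompactSupport.comp_homeomorph (Homeomorph.smulOfNeZero _ (hpos n).ne')
  obtain ⟨C, hC⟩ := (hf1.continuous_fderiv one_ne_zero).norm.bounded_above_of_compact_support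
    (f.hasCompactSupport.fderiv ℝ).norm
  simp only [norm_norm] at hC
  have hC0 : 0 ≤ C := (norm_nonneg _).trans (hC 0)
  have hei : ∀ i, ‖ei i‖ = 1 := fun i => by simp [ei]
  have hχd : ∀ n y i, |fderiv ℝ (χ n) y (ei i)| ≤ ((n : ℝ) + 1)⁻¹ * C := fun n y i => by
    have e : fderiv ℝ (χ n) y = ((n : ℝ) + 1)⁻¹ • fderiv ℝ f (((n : ℝ) + 1)⁻¹ • y) :=
      fderiv_comp_smul _
    rw [e]
    change |((n : ℝ) + 1)⁻¹ * fderiv ℝ f (((n : ℝ) + 1)⁻¹ • y) (ei i)| ≤ _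
    rw [abs_mul, abs_of_pos (hpos n)]
    refine mul_le_mul_of_nonneg_left ?_ (hpos n).le
    have := (fderiv ℝ f (((n : ℝ) + 1)⁻¹ • y)).le_opNorm (ei i)
    rw [hei, mul_one] at this
    exact this.trans (hC _)
  have hχ1 : ∀ n y, |χ n y| ≤ 1 := fun n y => by
    rw [abs_of_nonneg f.nonneg]; exact f.le_one
  have hχlim : ∀ y, Tendsto (fun n => χ n y) atTop (𝓝 1) := fun y => by
    have t1 : Tendsto (fun n : ℕ => ((n : ℝ) + 1)⁻¹ • y) atTop (𝓝 ((0 : ℝ) • y)) :=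
      (tendsto_inv_atTop_zero.comp
        (tendsto_atTop_add_const_right _ _ tendsto_natCast_atTop_atTop)).smul_const y
    rw [zero_smul] at t1
    have t2 := (f.continuous.tendsto 0).comp t1
    rwa [f.one_of_mem_closedBall (Metric.mem_closedBall_self f.rIn_pos.le)] at t2
  have hdc : ∀ i, Continuous fun y => fderiv ℝ q y (ei i) := fun i =>
    (hq.continuous_fderiv one_ne_zero).clm_apply continuous_const
  have hwc : ∀ i, Continuous fun y => fderiv ℝ (w i) y (ei i) := fun i =>
    ((hw i).continuous_fderiv one_ne_zero).clm_apply continuous_const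
  have hxc : ∀ n i, Continuous fun y => fderiv ℝ (χ n) y (ei i) := fun n i =>
    ((hχ n).continuous_fderiv one_ne_zero).clm_apply continuous_const
  have hprod : ∀ n y i, fderiv ℝ (fun y => q y * χ n y) y (ei i) =
      q y * fderiv ℝ (χ n) y (ei i) + fderiv ℝ q y (ei i) * χ n y := fun n y i => by
    rw [fderiv_fun_mul (hq.differentiable one_ne_zero y) ((hχ n).differentiable one_ne_zero y)]
    simp
    ring
  have key : ∀ n, ∫ y, (q y * ∑ i, fderiv ℝ (w i) y (ei i)) * χ n y =
      -∑ i, ∫ y, (q y * w i y * fderiv ℝ (χ n) y (ei i) +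
        fderiv ℝ q y (ei i) * w i y * χ n y) := fun n => by
    have hs : HasCompactSupport (fun y => q y * χ n y) := (hχs n).mul_left
    have ibp : ∀ i, ∫ y, (q y * χ n y) * fderiv ℝ (w i) y (ei i) =
        -∫ y, fderiv ℝ (fun y => q y * χ n y) y (ei i) * w i y := fun i => by
      apply integral_mul_fderiv_eq_neg_fderiv_mul_of_integrable
      · refine Continuous.integrable_of_hasCompactSupport ?_ (((hs.fderiv ℝ).comp_left
          (g := fun L : R4 →L[ℝ] ℝ => L (ei i)) rfl).mul_right)
        exact (((hq.mul (hχ n)).continuous_fderiv one_ne_zero).clm_apply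
          continuous_const).mul (hw i).continuous
      · exact Continuous.integrable_of_hasCompactSupport
          ((hq.continuous.mul (hχ n).continuous).mul (hwc i)) hs.mul_right
      · exact Continuous.integrable_of_hasCompactSupport
          ((hq.continuous.mul (hχ n).continuous).mul (hw i).continuous) hs.mul_right
      · exact fun y _ => (hq.mul (hχ n)).differentiable one_ne_zero y
      · exact fun y _ => (hw i).differentiable one_ne_zero y
    have e : ∀ y, (q y * ∑ i, fderiv ℝ (w i) y (ei i)) * χ n y =
        ∑ i, (q y * χ n y) * fderiv ℝ (w i) y (ei i) := fun y => by
      rw [← Finset.mul_sum]; ring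
    simp_rw [e]
    rw [integral_finsetSum, ← Finset.sum_neg_distrib]
    · refine Finset.sum_congr rfl fun i _ => ?_
      rw [ibp i]
      congr 2
      ext y
      rw [hprod]
      ring
    · exact fun i _ => Continuous.integrable_of_hasCompactSupport
          ((hq.continuous.mul (hχ n).continuous).mul (hwc i)) hs.mul_right
  have L1 : Tendsto (fun n => ∫ y, (q y * ∑ i, fderiv ℝ (w i) y (ei i)) * χ n y) atTop
      (𝓝 (∫ y, q y * ∑ i, fderiv ℝ (w i) y (ei i))) := by
    refine tendsto_integral_of_dominated_convergence _ (fun n => ?_) h1.norm (fun n => ?_) ?_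
    · exact h1.aestronglyMeasurable.mul (hχ n).continuous.aestronglyMeasurable
    · refine Eventually.of_forall fun y => ?_
      rw [norm_mul]
      exact mul_le_of_le_one_right (norm_nonneg _) (hχ1 n y)
    · refine Eventually.of_forall fun y => ?_
      simpa using (hχlim y).const_mul (q y * ∑ i, fderiv ℝ (w i) y (ei i))
  have L2 : ∀ i, Tendsto (fun n => ∫ y, (q y * w i y * fderiv ℝ (χ n) y (ei i) +
        fderiv ℝ q y (ei i) * w i y * χ n y)) atTop
      (𝓝 (∫ y, fderiv ℝ q y (ei i) * w i y)) := fun i => by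
    refine tendsto_integral_of_dominated_convergence
      (fun y => ‖q y * w i y‖ * C + ‖fderiv ℝ q y (ei i) * w i y‖) (fun n => ?_)
      (((h3 i).norm.mul_const C).add (h2 i).norm) (fun n => ?_) ?_
    · exact (((h3 i).aestronglyMeasurable.mul (hxc n i).aestronglyMeasurable).add
        ((h2 i).aestronglyMeasurable.mul (hχ n).continuous.aestronglyMeasurable))
    · refine Eventually.of_forall fun y => (norm_add_le _ _).trans (add_le_add ?_ ?_)
      · rw [norm_mul]
        refine mul_le_mul_of_nonneg_left ((hχd n y i).trans ?_) (norm_nonneg _)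
        refine mul_le_of_le_one_left hC0 (inv_le_one_of_one_le₀ ?_)
        linarith [Nat.cast_nonneg (α := ℝ) n]
      · rw [norm_mul]
        exact mul_le_of_le_one_right (norm_nonneg _) (hχ1 n y)
    · refine Eventually.of_forall fun y => ?_
      have t0 : Tendsto (fun n => fderiv ℝ (χ n) y (ei i)) atTop (𝓝 0) := by
        refine squeeze_zero_norm (fun n => hχd n y i) ?_
        have := (tendsto_inv_atTop_zero.comp (tendsto_atTop_add_const_right _ (1 : ℝ)
          tendsto_natCast_atTop_atTop)).mul_const C
        simpa using this
      simpa using (t0.const_mul (q y * w i y)).add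
        ((hχlim y).const_mul (fderiv ℝ q y (ei i) * w i y))
  simp_rw [key] at L1
  exact tendsto_nhds_unique L1 (tendsto_finsetSum _ fun i _ => L2 i).neg

lemma contDiff_gk_sub (t : ℝ) (x : R4) : ContDiff ℝ 1 (fun y => gk t (x - y)) := by
  unfold gk
  have : ContDiff ℝ 1 fun y : R4 => ‖x - y‖ ^ 2 := (contDiff_const.sub contDiff_id).norm_sq ℝ
  exact contDiff_const.mul ((this.neg.div_const _).exp)

/-- Green's formula against the heat kernel: `∫ p_t(x - y) Δu(y) dy = ∫ (Δp_t)(x - y) u(y) dy`. -/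
lemma green {u : R4 → ℝ} (hu : ContDiff ℝ (⊤ : ℕ∞) u) (h0 : MemLp u 2)
    (h1 : ∀ i, MemLp (fun y => fderiv ℝ u y (ei i)) 2) (h2 : MemLp (lapl u) 2)
    {t : ℝ} (ht : 0 < t) (x : R4) :
    ∫ y, gk t (x - y) * lapl u y = ∫ y, dgk t (x - y) * u y := by
  have hu1 : ContDiff ℝ 1 u := hu.of_le (by norm_cast)
  have hdu : ∀ i, ContDiff ℝ 1 fun y => fderiv ℝ u y (ei i) := fun i =>
    (hu.fderiv_right (m := 1) (by norm_cast)).clm_apply contDiff_const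
  have hgc : Continuous fun y => gk t (x - y) := (contDiff_gk_sub t x).continuous
  have hxi : ∀ i, ContDiff ℝ 1 fun y : R4 => x i - y i := fun i =>
    contDiff_const.sub (EuclideanSpace.proj (𝕜 := ℝ) i : R4 →L[ℝ] ℝ).contDiff
  have hqi : ∀ i, ContDiff ℝ 1 fun y : R4 => (x i - y i) / (2 * t) * gk t (x - y) := fun i =>
    ((hxi i).div_const _).mul (contDiff_gk_sub t x)
  have b0 : ∀ y, |gk t (x - y)| ≤ 4 * gk (2 * t) (x - y) := fun y => by
    rw [abs_of_nonneg (gk_nonneg _ _)]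
    exact gk_le_gk_two ht _
  have hz : ∀ i (z : R4), |z i| ≤ 1 + ‖z‖ ^ 2 := fun i z => by
    have := sq_coord_le z i
    rw [← sq_abs] at this
    nlinarith [sq_nonneg (|z i| - 1)]
  have b1 : ∀ i y, |(x i - y i) / (2 * t) * gk t (x - y)| ≤
      (2 * t)⁻¹ * (4 + 32 * t) * gk (2 * t) (x - y) := fun i y => by
    have a1 := norm_sq_mul_gk_le ht (x - y)
    have a2 := gk_le_gk_two ht (x - y)
    have a3 := mul_le_mul_of_nonneg_right (hz i (x - y)) (gk_nonneg t (x - y))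
    rw [abs_mul, abs_of_nonneg (gk_nonneg _ _), abs_div, abs_of_pos (show 0 < 2 * t by positivity),
      div_eq_inv_mul, mul_assoc, mul_assoc]
    refine mul_le_mul_of_nonneg_left ?_ (by positivity)
    rw [PiLp.sub_apply] at a3
    linarith
  have b2 : ∀ i y, |(-1 / (2 * t) + (x i - y i) ^ 2 / (4 * t ^ 2)) * gk t (x - y)| ≤
      ((2 * t)⁻¹ * 4 + (4 * t ^ 2)⁻¹ * (32 * t)) * gk (2 * t) (x - y) := fun i y => by
    have a1 := norm_sq_mul_gk_le ht (x - y)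
    have a2 := gk_le_gk_two ht (x - y)
    have a3 := sq_coord_le (x - y) i
    rw [PiLp.sub_apply] at a3
    rw [abs_mul, abs_of_nonneg (gk_nonneg _ _)]
    have a4 : |-1 / (2 * t) + (x i - y i) ^ 2 / (4 * t ^ 2)| ≤
        (2 * t)⁻¹ + (4 * t ^ 2)⁻¹ * ‖x - y‖ ^ 2 := by
      refine (abs_add_le _ _).trans (add_le_add ?_ ?_)
      · rw [neg_div, abs_neg, abs_of_nonneg (by positivity), one_div]
      · rw [abs_of_nonneg (by positivity), div_eq_inv_mul]
        gcongr
    have a5 := mul_le_mul_of_nonneg_right a4 (gk_nonneg t (x - y))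
    have a6 := mul_le_mul_of_nonneg_left a1 (show 0 ≤ (4 * t ^ 2)⁻¹ by positivity)
    have a7 := mul_le_mul_of_nonneg_left a2 (show 0 ≤ (2 * t)⁻¹ by positivity)
    linarith
  have ht2 : 0 < 2 * t := by positivity
  have A : ∫ y, gk t (x - y) * lapl u y =
      -∑ i, ∫ y, (x i - y i) / (2 * t) * gk t (x - y) * fderiv ℝ u y (ei i) := by
    have := integral_mul_div (q := fun y => gk t (x - y))
      (w := fun i y => fderiv ℝ u y (ei i)) (contDiff_gk_sub t x) hdu ?_ ?_ ?_
    · simp_rw [fderiv_gk_sub, ← lapl_eq hu] at this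
      exact this
    · simp_rw [← lapl_eq hu]
      exact integrable_gauss_mul ht2 hgc b0 h2
    · intro i
      simp_rw [fderiv_gk_sub]
      exact integrable_gauss_mul ht2 (hqi i).continuous (b1 i) (h1 i)
    · exact fun i => integrable_gauss_mul ht2 hgc b0 (h1 i)
  have hq2 : ∀ i, Integrable fun y =>
      (-1 / (2 * t) + (x i - y i) ^ 2 / (4 * t ^ 2)) * gk t (x - y) * u y := fun i => by
    refine integrable_gauss_mul ht2 ?_ (b2 i) h0
    exact (continuous_const.add (((hxi i).continuous.pow 2).div_const _)).mul hgc
  have B : ∀ i, ∫ y, (x i - y i) / (2 * t) * gk t (x - y) * fderiv ℝ u y (ei i) =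
      -∫ y, (-1 / (2 * t) + (x i - y i) ^ 2 / (4 * t ^ 2)) * gk t (x - y) * u y := fun i => by
    rw [integral_mul_fderiv_eq_neg_fderiv_mul_of_integrable]
    · simp_rw [fderiv_coord_gk]
    · simp_rw [fderiv_coord_gk]
      exact hq2 i
    · exact integrable_gauss_mul ht2 (hqi i).continuous (b1 i) (h1 i)
    · exact integrable_gauss_mul ht2 (hqi i).continuous (b1 i) h0
    · exact fun y _ => (hqi i).differentiable one_ne_zero y
    · exact fun y _ => hu1.differentiable one_ne_zero y
  rw [A]
  simp_rw [B]
  rw [Finset.sum_neg_distrib, neg_neg, ← integral_finsetSum _ fun i _ => hq2 i]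
  congr 1
  ext y
  rw [← Finset.sum_mul, sum_fderiv_coord_gk]

/-! ### The heat representation -/

/-- `∂ₜ (p_t * u) = p_t * Δu`, integrated over `ε ≤ t ≤ 1`. -/
lemma heat_sub {u : R4 → ℝ} (hu : Continuous u) (h0 : MemLp u 2) {ε : ℝ} (hε : 0 < ε)
    (hε1 : ε ≤ 1) (x : R4) :
    (∫ y, gk 1 (x - y) * u y) - ∫ y, gk ε (x - y) * u y =
      ∫ t in ε..1, ∫ y, dgk t (x - y) * u y := by
  have hI : ∀ {s : ℝ}, 0 < s → Integrable fun y => gk s (x - y) * u y := fun hs =>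
    (memLp_gk_sub hs x).integrable_mul h0
  have hcont : ∀ y, ContinuousOn (fun t => dgk t (x - y) * u y) (Set.Icc ε 1) := fun y => by
    have hne : ∀ t ∈ Set.Icc ε 1, t ≠ 0 := fun t ht => (hε.trans_le ht.1).ne'
    unfold dgk gk
    refine ContinuousOn.mul (ContinuousOn.mul ?_ ?_) continuousOn_const
    · refine ContinuousOn.add (continuousOn_const.div continuousOn_id hne) ?_
      exact continuousOn_const.div (by fun_prop) fun t ht => by have := hne t ht; positivity
    · refine ContinuousOn.mul (ContinuousOn.inv₀ (by fun_prop) fun t ht => ?_) ?_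
      · have := hne t ht; positivity
      · refine Real.continuous_exp.comp_continuousOn ?_
        exact continuousOn_const.div (by fun_prop) fun t ht => by have := hne t ht; positivity
  have hmeas : Measurable fun p : ℝ × R4 => dgk p.1 (x - p.2) * u p.2 := by
    have := hu.measurable
    unfold dgk gk
    fun_prop
  have hfin : IsFiniteMeasure (volume.restrict (Set.uIoc ε 1)) := by
    rw [Set.uIoc_of_le hε1]
    infer_instance
  have hprodInt : Integrable (fun p : ℝ × R4 => dgk p.1 (x - p.2) * u p.2)
      ((volume.restrict (Set.uIoc ε 1)).prod volume) := by
    have hd : Integrable (fun p : ℝ × R4 =>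
        (ε ^ 2)⁻¹ * (8 / ε + 8 / ε ^ 2) * ‖gk 2 (x - p.2) * u p.2‖)
        ((volume.restrict (Set.uIoc ε 1)).prod volume) :=
      (((hI two_pos).norm).comp_snd _).const_mul _
    refine hd.mono' hmeas.aestronglyMeasurable ?_
    have : ∀ᵐ p ∂((volume.restrict (Set.uIoc ε 1)).prod (volume : Measure R4)),
        p.1 ∈ Set.uIoc ε 1 :=
      Measure.quasiMeasurePreserving_fst.ae (ae_restrict_mem measurableSet_uIoc)
    filter_upwards [this] with p hp
    rw [Set.uIoc_of_le hε1] at hp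
    rw [norm_mul, norm_mul, ← mul_assoc, Real.norm_eq_abs, Real.norm_eq_abs (gk _ _),
      abs_of_nonneg (gk_nonneg _ _)]
    exact mul_le_mul_of_nonneg_right (abs_dgk_le hε hp.1.le hp.2 _) (norm_nonneg _)
  rw [intervalIntegral_integral_swap hprodInt, ← integral_sub (hI one_pos) (hI hε)]
  congr 1
  ext y
  rw [intervalIntegral.integral_eq_sub_of_hasDerivAt (f := fun t => gk t (x - y) * u y)]
  · intro t ht
    rw [Set.uIcc_of_le hε1] at ht
    exact (hasDerivAt_gk (hε.trans_le ht.1) _).mul_const _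
  · exact ContinuousOn.intervalIntegrable (by rw [Set.uIcc_of_le hε1]; exact hcont y)

lemma ofReal_abs_integral_gk_mul_le (t : ℝ) (x : R4) (w : R4 → ℝ) :
    ENNReal.ofReal |∫ y, gk t (x - y) * w y| ≤
      ∫⁻ y, ENNReal.ofReal (gk t (x - y)) * ENNReal.ofReal |w y| := by
  rw [← Real.norm_eq_abs, ofReal_norm]
  refine (enorm_integral_le_lintegral_enorm _).trans (lintegral_mono fun y => le_of_eq ?_)
  rw [enorm_mul, Real.enorm_of_nonneg (gk_nonneg _ _), Real.enorm_eq_ofReal_abs]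

/-- Duhamel bound for the heat regularization `p_ε * u`. -/
lemma heat_le {u : R4 → ℝ} (hu : ContDiff ℝ (⊤ : ℕ∞) u) (h0 : MemLp u 2)
    (h1 : ∀ i, MemLp (fun y => fderiv ℝ u y (ei i)) 2) (h2 : MemLp (lapl u) 2)
    {ε : ℝ} (hε : 0 < ε) (hε1 : ε ≤ 1) (x : R4) :
    ENNReal.ofReal |∫ y, gk ε (x - y) * u y| ≤
      (∫⁻ t in Set.Ioc (0 : ℝ) 1, ∫⁻ y, ENNReal.ofReal (gk t (x - y)) *
        ENNReal.ofReal |lapl u y|) +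
      ∫⁻ y, ENNReal.ofReal (gk 1 (x - y)) * ENNReal.ofReal |u y| := by
  have e : ∫ y, gk ε (x - y) * u y = -(∫ t in Set.Ioc ε 1, ∫ y, gk t (x - y) * lapl u y) +
      ∫ y, gk 1 (x - y) * u y := by
    have := heat_sub hu.continuous h0 hε hε1 x
    rw [intervalIntegral.integral_of_le hε1] at this
    have e2 : ∫ t in Set.Ioc ε 1, ∫ y, gk t (x - y) * lapl u y =
        ∫ t in Set.Ioc ε 1, ∫ y, dgk t (x - y) * u y :=
      setIntegral_congr_fun measurableSet_Ioc fun t ht => green hu h0 h1 h2 (hε.trans ht.1) x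
    linarith
  rw [e]
  refine (ENNReal.ofReal_le_ofReal (abs_add_le _ _)).trans ?_
  rw [ENNReal.ofReal_add (abs_nonneg _) (abs_nonneg _)]
  refine add_le_add ?_ (ofReal_abs_integral_gk_mul_le _ _ _)
  rw [abs_neg, ← Real.norm_eq_abs, ofReal_norm]
  refine (enorm_integral_le_lintegral_enorm _).trans ?_
  refine (lintegral_mono fun t => ?_).trans
    (lintegral_mono_set (Set.Ioc_subset_Ioc_left hε.le))
  rw [Real.enorm_eq_ofReal_abs]
  exact ofReal_abs_integral_gk_mul_le _ _ _

/-- Decay of the fixed Gaussian `gk 2`, as required of a peak kernel. -/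
lemma tendsto_norm_pow_mul_gk :
    Tendsto (fun z : R4 => ‖z‖ ^ Module.finrank ℝ R4 * gk 2 z) (Bornology.cobounded R4)
      (𝓝 0) := by
  have h1 : Tendsto (fun z : R4 => ‖z‖ ^ 2 / 8) (Bornology.cobounded R4) atTop :=
    ((tendsto_pow_atTop two_ne_zero).comp tendsto_norm_cobounded_atTop).atTop_div_const
      (by norm_num)
  have h2 := ((Real.tendsto_pow_mul_exp_neg_atTop_nhds_zero 2).comp h1).const_mul
    (64 * (16 * π ^ 2 * 2 ^ 2)⁻¹)
  rw [mul_zero] at h2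
  refine h2.congr fun z => ?_
  have e : -‖z‖ ^ 2 / (4 * 2) = -(‖z‖ ^ 2 / 8) := by ring
  rw [finrank_euclideanSpace_fin, gk, e]
  simp only [Function.comp]
  ring

/-- For a small time `1/c²`, the heat kernel is dominated by a rescaled Gaussian times a fixed one. -/
lemma gk_inv_sq_le {c : ℝ} (hc : 1 ≤ c) (z : R4) :
    gk (c ^ 2)⁻¹ z ≤ 256 * π ^ 2 * ((c ^ 4 * gk 2 (c • z)) * gk 2 z) := by
  have hc0 : 0 < c := by linarith
  unfold gk
  rw [norm_smul, Real.norm_eq_abs, abs_of_pos hc0]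
  have h : rexp (-‖z‖ ^ 2 / (4 * (c ^ 2)⁻¹)) ≤
      rexp (-(c * ‖z‖) ^ 2 / (4 * 2)) * rexp (-‖z‖ ^ 2 / (4 * 2)) := by
    rw [← Real.exp_add, Real.exp_le_exp]
    have : -‖z‖ ^ 2 / (4 * (c ^ 2)⁻¹) = -(c ^ 2 * ‖z‖ ^ 2) / 4 := by field_simp
    rw [this]
    have : 1 * ‖z‖ ^ 2 ≤ c ^ 2 * ‖z‖ ^ 2 :=
      mul_le_mul_of_nonneg_right (one_le_pow₀ hc) (by positivity)
    linarith [mul_pow c ‖z‖ 2]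
  calc _ ≤ (16 * π ^ 2 * (c ^ 2)⁻¹ ^ 2)⁻¹ *
        (rexp (-(c * ‖z‖) ^ 2 / (4 * 2)) * rexp (-‖z‖ ^ 2 / (4 * 2))) := by gcongr
    _ = _ := by
      field_simp
      ring

/-- `p_ε * u → u` pointwise along `ε = 1/c²`. As `u` need not be integrable, the peak-function
theorem is applied to `gk 2 (x - y) |u y - u x|`, which is integrable and vanishes at `y = x`. -/
lemma tendsto_heat {u : R4 → ℝ} (hu : Continuous u) (h0 : MemLp u 2) (x : R4) :
    Tendsto (fun c : ℝ => ∫ y, gk (c ^ 2)⁻¹ (x - y) * u y) atTop (𝓝 (u x)) := by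
  have hI : ∀ {s : ℝ}, 0 < s → Integrable fun y => gk s (x - y) * u y := fun hs =>
    (memLp_gk_sub hs x).integrable_mul h0
  have hgc : ∀ t, Continuous fun y => gk t (x - y) := fun t =>
    (contDiff_gk_sub t x).continuous
  set g : R4 → ℝ := fun y => gk 2 (x - y) * |u y - u x| with hg
  have hgcont : Continuous g := (hgc 2).mul (hu.sub continuous_const).abs
  have hgi : Integrable g := by
    have h := ((hI two_pos).sub ((integrable_gk_sub two_pos x).mul_const (u x))).norm
    refine h.congr (Eventually.of_forall fun y => ?_)
    simp only [Pi.sub_apply, hg]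
    rw [← mul_sub, norm_mul, Real.norm_eq_abs, abs_of_nonneg (gk_nonneg _ _), Real.norm_eq_abs]
  have hpeak := tendsto_integral_comp_smul_smul_of_integrable' (μ := (volume : Measure R4))
    (φ := gk 2) (gk_nonneg 2) (integral_gk two_pos) tendsto_norm_pow_mul_gk
    (x₀ := x) hgi hgcont.continuousAt
  have hgx : g x = 0 := by simp [hg]
  rw [hgx] at hpeak
  have hpeak2 := hpeak.const_mul (256 * π ^ 2)
  rw [mul_zero] at hpeak2
  rw [tendsto_iff_norm_sub_tendsto_zero]
  refine squeeze_zero' (Eventually.of_forall fun _ => norm_nonneg _) ?_ hpeak2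
  filter_upwards [eventually_ge_atTop (1 : ℝ)] with c hc
  have hc0 : 0 < c := by linarith
  have hcc : 0 < (c ^ 2)⁻¹ := by positivity
  have e1 : ∫ y, gk (c ^ 2)⁻¹ (x - y) = 1 := by
    rw [integral_sub_left_eq_self (fun y => gk (c ^ 2)⁻¹ y), integral_gk hcc]
  have e2 : (∫ y, gk (c ^ 2)⁻¹ (x - y) * u y) - u x =
      ∫ y, gk (c ^ 2)⁻¹ (x - y) * (u y - u x) := by
    simp_rw [mul_sub]
    rw [integral_sub (hI hcc) ((integrable_gk_sub hcc x).mul_const _), integral_mul_const, e1,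
      one_mul]
  rw [e2, ← integral_const_mul]
  refine norm_integral_le_of_norm_le ?_ (Eventually.of_forall fun y => ?_)
  · refine Integrable.const_mul ?_ _
    refine (hgi.const_mul (c ^ 4 * (16 * π ^ 2 * 2 ^ 2)⁻¹)).mono' ?_
      (Eventually.of_forall fun y => ?_)
    · have : Continuous fun y : R4 => gk 2 (c • (x - y)) :=
        (continuous_gk 2).comp (by fun_prop)
      exact ((continuous_const.mul this).smul hgcont).aestronglyMeasurable
    · have hgn : 0 ≤ g y := mul_nonneg (gk_nonneg _ _) (abs_nonneg _)
      rw [finrank_euclideanSpace_fin, smul_eq_mul, Real.norm_eq_abs, abs_of_nonneg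
        (mul_nonneg (mul_nonneg (by positivity) (gk_nonneg _ _)) hgn)]
      refine mul_le_mul_of_nonneg_right ?_ hgn
      exact mul_le_mul_of_nonneg_left (gk_le two_pos _) (by positivity)
  · rw [norm_mul, Real.norm_eq_abs, Real.norm_eq_abs, abs_of_nonneg (gk_nonneg _ _),
      finrank_euclideanSpace_fin, smul_eq_mul, hg]
    have := mul_le_mul_of_nonneg_right (gk_inv_sq_le hc (x - y)) (abs_nonneg (u y - u x))
    linarith

/-- Pointwise bound of `u` by heat potentials of `|Δu|` and `|u|`. -/
lemma abs_le_heat {u : R4 → ℝ} (hu : ContDiff ℝ (⊤ : ℕ∞) u) (h0 : MemLp u 2)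
    (h1 : ∀ i, MemLp (fun y => fderiv ℝ u y (ei i)) 2) (h2 : MemLp (lapl u) 2) (x : R4) :
    ENNReal.ofReal |u x| ≤
      (∫⁻ t in Set.Ioc (0 : ℝ) 1, ∫⁻ y, ENNReal.ofReal (gk t (x - y)) *
        ENNReal.ofReal |lapl u y|) +
      ∫⁻ y, ENNReal.ofReal (gk 1 (x - y)) * ENNReal.ofReal |u y| := by
  refine le_of_tendsto (ENNReal.tendsto_ofReal (tendsto_heat hu.continuous h0 x).abs) ?_
  filter_upwards [eventually_ge_atTop (1 : ℝ)] with c hc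
  exact heat_le hu h0 h1 h2 (by positivity) (inv_le_one_of_one_le₀ (one_le_pow₀ hc)) x

/-! ### Conclusion -/

/-- The inequality with explicit constants, applying `lintegral_exp_le` to `v = 32π²u²` with the
threshold `y0 = 32π²/σ`, above which Chebyshev's inequality gives `|{v > y}| ≤ 1`. The `L²` bound on
`∇u` is only used qualitatively. -/
lemma adams {σ : ℝ} (hσ : 0 < σ) {u : R4 → ℝ} (hu : ContDiff ℝ (⊤ : ℕ∞) u) (h0 : MemLp u 2)
    (h1 : ∀ i, MemLp (fun y => fderiv ℝ u y (ei i)) 2) (h2 : MemLp (lapl u) 2)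
    (hen : ∫⁻ y, ENNReal.ofReal (lapl u y ^ 2 + σ * u y ^ 2) ≤ 1) :
    ∫⁻ x, ENNReal.ofReal (rexp (32 * π ^ 2 * u x ^ 2) - 1) ≤
      ENNReal.ofReal (rexp (32 * π ^ 2 / σ)) * ENNReal.ofReal (32 * π ^ 2 / σ) +
        ENNReal.ofReal (rexp (C0 σ)) * ENNReal.ofReal 9 := by
  set a : ℝ := 32 * π ^ 2 with ha
  have ha0 : 0 < a := by positivity
  set v : R4 → ℝ := fun x => a * u x ^ 2 with hv
  have hvm : Measurable v := by
    have := hu.continuous.measurable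
    fun_prop
  have hlm : Measurable (lapl u) := measurable_lapl hu
  have hM : ∫⁻ x, ENNReal.ofReal (v x) ≤ ENNReal.ofReal (a / σ) := by
    calc ∫⁻ x, ENNReal.ofReal (v x)
        ≤ ∫⁻ x, ENNReal.ofReal (a / σ) * ENNReal.ofReal (lapl u x ^ 2 + σ * u x ^ 2) := by
          refine lintegral_mono fun x => ?_
          rw [← ENNReal.ofReal_mul (by positivity)]
          refine ENNReal.ofReal_le_ofReal ?_
          have : a / σ * (lapl u x ^ 2 + σ * u x ^ 2) = a / σ * lapl u x ^ 2 + v x := by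
            simp only [hv]; field_simp
          rw [this]
          have : 0 ≤ a / σ * lapl u x ^ 2 := by positivity
          linarith
      _ = ENNReal.ofReal (a / σ) * ∫⁻ x, ENNReal.ofReal (lapl u x ^ 2 + σ * u x ^ 2) :=
          lintegral_const_mul' _ _ ENNReal.ofReal_ne_top
      _ ≤ ENNReal.ofReal (a / σ) * 1 := by gcongr
      _ = _ := mul_one _
  have hy0 : 0 < a / σ := by positivity
  have hfin : ∀ y, a / σ < y → volume {x | y < v x} ≤ 1 := fun y hy => by
    have hyp : 0 < y := hy0.trans hy
    have hc := mul_meas_ge_le_lintegral (μ := (volume : Measure R4))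
      (f := fun x => ENNReal.ofReal (v x)) hvm.ennreal_ofReal (ENNReal.ofReal y)
    have hsub : {x | y < v x} ⊆ {x | ENNReal.ofReal y ≤ ENNReal.ofReal (v x)} :=
      fun x hx => ENNReal.ofReal_le_ofReal (le_of_lt hx)
    have h3 : ENNReal.ofReal y * volume {x | y < v x} ≤ ENNReal.ofReal y * 1 := by
      rw [mul_one]
      calc _ ≤ ENNReal.ofReal y * volume {x | ENNReal.ofReal y ≤ ENNReal.ofReal (v x)} := by
            gcongr
        _ ≤ _ := hc
        _ ≤ _ := hM
        _ ≤ _ := ENNReal.ofReal_le_ofReal hy.le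
    exact (ENNReal.mul_le_mul_iff_right (ENNReal.ofReal_pos.2 hyp).ne' ENNReal.ofReal_ne_top).1 h3
  refine lintegral_exp_le hvm (fun x => by positivity) hy0 hM hfin fun y₁ y₂ hy1 hy12 hpos => ?_
  have hm : ∀ y, a / σ < y → volume {x | y < v x} ≠ ∞ := fun y hy =>
    ((hfin y hy).trans_lt ENNReal.one_lt_top).ne
  have hle1 : ∀ y, a / σ < y → (volume {x | y < v x}).toReal ≤ 1 := fun y hy =>
    ENNReal.toReal_le_of_le_ofReal zero_le_one (by simpa using hfin y hy)
  have hpos1 : 0 < (volume {x | y₁ < v x}).toReal :=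
    hpos.trans_le (ENNReal.toReal_mono (hm y₁ hy1)
      (measure_mono fun x (hx : y₂ < v x) => hy12.trans_lt hx))
  have hlev : ∀ y, ∀ x ∈ {x | y < v x}, √(y / a) ≤ |u x| := fun y x hx => by
    rw [← Real.sqrt_sq_eq_abs]
    refine Real.sqrt_le_sqrt ?_
    rw [div_le_iff₀' ha0]
    exact le_of_lt hx
  have hy2 := hy1.trans_le hy12
  have key := two_level hσ hu.continuous.measurable hlm (abs_le_heat hu h0 h1 h2) hen
    (measurableSet_lt measurable_const hvm) (measurableSet_lt measurable_const hvm)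
    hpos1 hpos (hle1 y₁ hy1) (hle1 y₂ hy2) (ENNReal.ofReal_toReal (hm y₁ hy1)).symm
    (ENNReal.ofReal_toReal (hm y₂ hy2)).symm (Real.sqrt_nonneg _) (Real.sqrt_nonneg _)
    (hlev y₁) (hlev y₂)
  have e : 32 * π ^ 2 * (√(y₁ / a) + √(y₂ / a)) ^ 2 = (√y₁ + √y₂) ^ 2 := by
    rw [Real.sqrt_div' _ ha0.le, Real.sqrt_div' _ ha0.le, ← add_div, div_pow,
      Real.sq_sqrt ha0.le, ← ha]
    field_simp
  rwa [e] at key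

lemma memLp_two_of_le {w F : R4 → ℝ} {c : ℝ} (hc : 0 < c) (hw : Measurable w)
    (hle : ∀ x, c * w x ^ 2 ≤ F x) (hF : ∫⁻ x, ENNReal.ofReal (F x) ≤ 1) : MemLp w 2 := by
  rw [memLp_two_iff_integrable_sq hw.aestronglyMeasurable]
  have h : Integrable fun x => c * w x ^ 2 := by
    refine ⟨by fun_prop, ?_⟩
    rw [hasFiniteIntegral_iff_ofReal (Eventually.of_forall fun x => by positivity)]
    exact ((lintegral_mono fun x => ENNReal.ofReal_le_ofReal (hle x)).trans hF).trans_lt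
      ENNReal.one_lt_top
  have := h.const_mul c⁻¹
  refine this.congr (Eventually.of_forall fun x => ?_)
  simp only []
  field_simp

/-- Theorem 1.2 (second part, Adams-type inequality in `ℝ⁴`): for `τ, σ > 0` there is a
constant `C > 0` such that every smooth `u` with `∫(|Δu|² + τ|∇u|² + σu²) dx ≤ 1` satisfies
`∫ (e^{32π²u²} − 1) dx ≤ C`. -/
theorem stmt_1 (τ σ : ℝ) (hτ : 0 < τ) (hσ : 0 < σ) :
    ∃ C : ℝ, 0 < C ∧ ∀ u : R4 → ℝ, ContDiff ℝ (⊤ : ℕ∞) u →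
      (∫⁻ x : R4,
        ENNReal.ofReal ((lapl u x) ^ 2 + τ * ‖gradient u x‖ ^ 2 + σ * (u x) ^ 2)) ≤ 1 →
      (∫⁻ x : R4, ENNReal.ofReal (Real.exp (32 * π ^ 2 * (u x) ^ 2) - 1))
        ≤ ENNReal.ofReal C := by
  refine ⟨rexp (32 * π ^ 2 / σ) * (32 * π ^ 2 / σ) + rexp (C0 σ) * 9, by positivity,
    fun u hu hE => ?_⟩
  have hlm : Measurable (lapl u) := measurable_lapl hu
  have hgrad : ∀ i x, fderiv ℝ u x (ei i) ^ 2 ≤ ‖gradient u x‖ ^ 2 := fun i x => by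
    rw [← sq_abs, ← Real.norm_eq_abs, gradient, LinearIsometryEquiv.norm_map]
    have := (fderiv ℝ u x).le_opNorm (ei i)
    rw [show ‖ei i‖ = 1 by simp [ei], mul_one] at this
    gcongr
  have h0 : MemLp u 2 := memLp_two_of_le hσ hu.continuous.measurable (fun x => by
    have : 0 ≤ lapl u x ^ 2 + τ * ‖gradient u x‖ ^ 2 := by positivity
    linarith) hE
  have h1 : ∀ i, MemLp (fun y => fderiv ℝ u y (ei i)) 2 := fun i =>
    memLp_two_of_le hτ (measurable_fderiv_apply_const ℝ _ _) (fun x => by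
      have := mul_le_mul_of_nonneg_left (hgrad i x) hτ.le
      have : 0 ≤ lapl u x ^ 2 + σ * u x ^ 2 := by positivity
      linarith) hE
  have h2 : MemLp (lapl u) 2 := memLp_two_of_le one_pos hlm (fun x => by
    have : 0 ≤ τ * ‖gradient u x‖ ^ 2 + σ * u x ^ 2 := by positivity
    linarith) hE
  have hen : ∫⁻ y, ENNReal.ofReal (lapl u y ^ 2 + σ * u y ^ 2) ≤ 1 :=
    (lintegral_mono fun x => ENNReal.ofReal_le_ofReal (by
      have : 0 ≤ τ * ‖gradient u x‖ ^ 2 := by positivity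
      linarith)).trans hE
  refine (adams hσ hu h0 h1 h2 hen).trans (le_of_eq ?_)
  rw [ENNReal.ofReal_add (by positivity) (by positivity), ENNReal.ofReal_mul (by positivity),
    ENNReal.ofReal_mul (by positivity)]
end
end

section
/- Let τ > 0, σ > 0 and α > 32π². Then for every M > 0 there exists a smooth compactly supported function u : ℝ⁴ → ℝ with ∫_{ℝ⁴}(|Δu|² + τ|∇u|² + σ u²) dx ≤ 1 and ∫_{ℝ⁴}(e^{α u²} − 1) dx > M. In other words, the supremum of ∫_{ℝ⁴}(e^{α u²} − 1) dx over all such u is +∞. -/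
/-!
The extremizing family is a smoothed and truncated fundamental solution of the bilaplacian:
`u(x) = -c · cut(|x|²) · log(|x|² + ε)` with `ε → 0`.

For a radial function `u(x) = g(|x|²)` on `ℝ⁴` one has `Δu = 8 g' + 4 s g''` and
`|∇u|² = 4 s g'²`, where `s = |x|²` (`radial_lapl`, `radial_gradient`).  With
`g(s) = -log(s + ε)` near the origin this gives
`s (Δu)² ≤ 16 (1 / (s + ε) + ε / (s + ε)²)`, while the lower-order terms, and everything on the
region where the cutoff varies, contribute to `s · density` at most a constant independent of `ε`
(`dens_bound`).  Integrating in polar coordinates, where the measure is `2π² r³ dr`, bounds the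
energy by `c² (16π² log(1/ε) + C)` (`test_energy`).

Put `ε = e^{-L}` and normalize by `c² = 1 / (16π² L + C)`.  On the ball of radius `√ε`, whose
volume is `π² ε² / 2`, one has `u² ≥ c² (L - 1)²`, so the exponential integral is at least
`(exp(α c² (L - 1)²) - 1) π² e^{-2L} / 2`.  Since `α c² (L - 1)² ~ α L / (16π²)`, the exponent beats
`2L` by an arbitrarily large amount precisely because `α > 32π²` (`test_exp_lower`).
-/

open MeasureTheory Real Filter Topology ENNReal

noncomputable section

/-! ### Radial functions on `ℝ⁴` -/

theorem radial_fderiv {g g1 : ℝ → ℝ} (h1 : ∀ s, 0 ≤ s → HasDerivAt g (g1 s) s) (x : R4) :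
    HasFDerivAt (fun y : R4 => g (‖y‖ ^ 2)) ((2 * g1 (‖x‖ ^ 2)) • innerSL ℝ x) x := by
  have h := (h1 (‖x‖ ^ 2) (by positivity)).comp_hasFDerivAt x
    (hasStrictFDerivAt_norm_sq x).hasFDerivAt
  refine h.congr_fderiv ?_
  ext v
  simp
  ring

theorem radial_gradient {g g1 : ℝ → ℝ} (h1 : ∀ s, 0 ≤ s → HasDerivAt g (g1 s) s) (x : R4) :
    ‖gradient (fun y : R4 => g (‖y‖ ^ 2)) x‖ ^ 2 = 4 * ‖x‖ ^ 2 * g1 (‖x‖ ^ 2) ^ 2 := by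
  have h : gradient (fun y : R4 => g (‖y‖ ^ 2)) x = (2 * g1 (‖x‖ ^ 2)) • x := by
    refine HasGradientAt.gradient ?_
    rw [hasGradientAt_iff_hasFDerivAt]
    refine (radial_fderiv h1 x).congr_fderiv ?_
    ext v
    simp
  rw [h, norm_smul, mul_pow, Real.norm_eq_abs, sq_abs]
  ring

/-- The Laplacian of `g(|x|²)` on `ℝ⁴`; the coefficient `8` is twice the dimension. -/
theorem radial_lapl {g g1 g2 : ℝ → ℝ} (h1 : ∀ s, 0 ≤ s → HasDerivAt g (g1 s) s)
    (h2 : ∀ s, 0 ≤ s → HasDerivAt g1 (g2 s) s) (x : R4) :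
    lapl (fun y : R4 => g (‖y‖ ^ 2)) x = 8 * g1 (‖x‖ ^ 2) + 4 * ‖x‖ ^ 2 * g2 (‖x‖ ^ 2) := by
  have hf : fderiv ℝ (fun y : R4 => g (‖y‖ ^ 2)) =
      fun y => (2 * g1 (‖y‖ ^ 2)) • innerSL ℝ y := by
    funext y
    exact (radial_fderiv h1 y).fderiv
  have hd : HasFDerivAt (fun y : R4 => (2 * g1 (‖y‖ ^ 2)) • innerSL ℝ y) _ x :=
    ((radial_fderiv h2 x).const_mul 2).smul (innerSL ℝ (E := R4)).hasFDerivAt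
  have hn : ‖x‖ ^ 2 = x 0 ^ 2 + x 1 ^ 2 + x 2 ^ 2 + x 3 ^ 2 := by
    rw [EuclideanSpace.norm_sq_eq, Fin.sum_univ_four]
    simp
  unfold lapl
  have key : ∀ i : Fin 4, iteratedFDeriv ℝ 2 (fun y : R4 => g (‖y‖ ^ 2)) x
      ![EuclideanSpace.single i 1, EuclideanSpace.single i 1] =
      2 * g1 (‖x‖ ^ 2) + 4 * x i ^ 2 * g2 (‖x‖ ^ 2) := by
    intro i
    rw [iteratedFDeriv_two_apply, hf, hd.fderiv]
    have hs : innerSL ℝ (EuclideanSpace.single i (1:ℝ)) (EuclideanSpace.single i (1:ℝ)) = 1 := by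
      rw [innerSL_apply_apply, real_inner_self_eq_norm_sq]
      simp
    simp [hs, EuclideanSpace.inner_single_right]
    ring
  simp_rw [key, Fin.sum_univ_four]
  generalize g1 (‖x‖ ^ 2) = a
  generalize g2 (‖x‖ ^ 2) = b
  rw [hn]
  ring

/-! ### Integration in polar coordinates -/

/-- Polar coordinates for the weight `w(r) / r³` on the ball of radius `2`; the area of the unit
sphere `S³` is `2π²`. -/
theorem radial_integral (w : ℝ → ℝ) (hw : ContinuousOn w (Set.Icc 0 2)) :
    Integrable (fun x : R4 => Set.indicator (Set.Iio 2) (fun r => w r / r ^ 3) ‖x‖) ∧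
    ∫ x : R4, Set.indicator (Set.Iio 2) (fun r => w r / r ^ 3) ‖x‖
      = 2 * π ^ 2 * ∫ r in (0:ℝ)..2, w r := by
  have hfr : Module.finrank ℝ R4 = 4 := by simp
  have hvol : (volume : Measure R4).real (Metric.ball 0 1) = π ^ 2 / 2 := by
    rw [Measure.real, InnerProductSpace.volume_ball_of_dim_even (k := 2) hfr]
    rw [ENNReal.toReal_mul, ENNReal.toReal_ofReal (by positivity)]
    simp
  have heq : Set.EqOn (fun y : ℝ => y ^ (Module.finrank ℝ R4 - 1) •
      Set.indicator (Set.Iio 2) (fun r => w r / r ^ 3) y)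
      (Set.indicator (Set.Iio 2) w) (Set.Ioi 0) := by
    intro y hy
    have hy' : y ≠ 0 := ne_of_gt hy
    simp only [hfr, smul_eq_mul]
    by_cases h : y ∈ Set.Iio (2:ℝ)
    · simp only [Set.indicator_of_mem h]
      norm_num
      field_simp
    · simp [Set.indicator_of_notMem h]
  have hint : IntegrableOn w (Set.Ioc 0 2) :=
    (hw.integrableOn_Icc).mono_set Set.Ioc_subset_Icc_self
  constructor
  · rw [integrable_fun_norm_addHaar, integrableOn_congr_fun heq measurableSet_Ioi,
      IntegrableOn, integrable_indicator_iff measurableSet_Iio, IntegrableOn,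
      Measure.restrict_restrict measurableSet_Iio]
    exact hint.mono_set (fun y hy => ⟨hy.2, le_of_lt hy.1⟩)
  · rw [integral_fun_norm_addHaar, setIntegral_congr_fun measurableSet_Ioi heq,
      setIntegral_indicator measurableSet_Iio, intervalIntegral.integral_of_le (by norm_num),
      hvol, hfr, Set.Ioi_inter_Iio, integral_Ioc_eq_integral_Ioo]
    simp
    ring

/-- The explicit radial integral behind the constant `16π²`: the leading term `-8 log ε`
times the area `2π²` of the unit sphere is `16π² log(1/ε)`. -/
theorem w_integral {ε C : ℝ} (hε : 0 < ε) :
    ∫ r in (0:ℝ)..2, r * (16 * (1 / (r ^ 2 + ε) + ε / (r ^ 2 + ε) ^ 2) + C)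
      = 8 * (Real.log (4 + ε) - Real.log ε) - 8 * ε / (4 + ε) + 8 + 2 * C := by
  have hd : ∀ r ∈ Set.uIcc (0:ℝ) 2, HasDerivAt
      (fun r : ℝ => 8 * Real.log (r ^ 2 + ε) - 8 * ε / (r ^ 2 + ε) + C * r ^ 2 / 2)
      (r * (16 * (1 / (r ^ 2 + ε) + ε / (r ^ 2 + ε) ^ 2) + C)) r := by
    intro r _
    have hp : r ^ 2 + ε ≠ 0 := by positivity
    have h0 : HasDerivAt (fun r : ℝ => r ^ 2 + ε) (2 * r) r := by
      simpa using (hasDerivAt_pow 2 r).add_const ε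
    have h2 : HasDerivAt (fun r : ℝ => C * r ^ 2 / 2) (C * r) r := by
      refine (((hasDerivAt_pow 2 r).const_mul C).div_const 2).congr_deriv ?_
      simp
      ring
    refine ((((h0.log hp).const_mul 8).sub ((hasDerivAt_const r (8 * ε)).div h0 hp)).add
      h2).congr_deriv ?_
    field_simp
    ring
  rw [intervalIntegral.integral_eq_sub_of_hasDerivAt hd]
  · have : ε ≠ 0 := hε.ne'
    norm_num
    field_simp
    ring
  · apply ContinuousOn.intervalIntegrable
    apply Continuous.continuousOn
    have hp : ∀ r : ℝ, r ^ 2 + ε ≠ 0 := fun r => by positivity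
    have hp2 : ∀ r : ℝ, (r ^ 2 + ε) ^ 2 ≠ 0 := fun r => by positivity
    fun_prop (disch := first | exact hp | exact hp2 | assumption)

/-! ### The test profile -/

/-- A smooth cutoff on `ℝ`, equal to `1` for `s ≤ 2` and to `0` for `s ≥ 3`. -/
def cut (s : ℝ) : ℝ := Real.smoothTransition (3 - s)

theorem cut_contDiff {n : WithTop ℕ∞} (hn : n ≤ (⊤ : ℕ∞)) : ContDiff ℝ n cut :=
  (Real.smoothTransition.contDiff (n := ⊤) |>.of_le hn).comp (by fun_prop)

theorem cut_eventually_one {s : ℝ} (hs : s < 2) : cut =ᶠ[𝓝 s] fun _ => 1 := by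
  filter_upwards [Iio_mem_nhds hs] with t ht
  exact Real.smoothTransition.one_of_one_le (by linarith [Set.mem_Iio.1 ht])

theorem cut_eventually_zero {s : ℝ} (hs : 3 < s) : cut =ᶠ[𝓝 s] fun _ => 0 := by
  filter_upwards [Ioi_mem_nhds hs] with t ht
  exact Real.smoothTransition.zero_of_nonpos (by linarith [Set.mem_Ioi.1 ht])

theorem cut_low {s : ℝ} (hs : s < 2) : cut s = 1 ∧ deriv cut s = 0 ∧ deriv (deriv cut) s = 0 := by
  have h := cut_eventually_one hs
  refine ⟨h.eq_of_nhds, ?_, ?_⟩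
  · rw [h.deriv_eq]; simp
  · rw [h.deriv.deriv_eq]; simp

theorem cut_high {s : ℝ} (hs : 3 < s) : cut s = 0 ∧ deriv cut s = 0 ∧ deriv (deriv cut) s = 0 := by
  have h := cut_eventually_zero hs
  refine ⟨h.eq_of_nhds, ?_, ?_⟩
  · rw [h.deriv_eq]; simp
  · rw [h.deriv.deriv_eq]; simp

theorem deriv_cut_contDiff : ContDiff ℝ 1 (deriv cut) := by
  have h : ContDiff ℝ (1 + 1) cut := cut_contDiff (by
    norm_num
    exact WithTop.coe_le_coe.2 (le_top : (2 : ℕ∞) ≤ ⊤))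
  exact (contDiff_succ_iff_deriv.1 h).2.2

theorem cut_hasDerivAt (s : ℝ) : HasDerivAt cut (deriv cut s) s :=
  ((cut_contDiff (n := 1) (by exact_mod_cast le_top)).differentiable (by norm_num) s).hasDerivAt

theorem deriv_cut_hasDerivAt (s : ℝ) : HasDerivAt (deriv cut) (deriv (deriv cut) s) s :=
  (deriv_cut_contDiff.differentiable (by norm_num) s).hasDerivAt

theorem cut_bounded : ∃ B : ℝ, 0 ≤ B ∧ ∀ s ∈ Set.Icc (1:ℝ) 4,
    |cut s| ≤ B ∧ |deriv cut s| ≤ B ∧ |deriv (deriv cut) s| ≤ B := by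
  have c0 : Continuous cut := (cut_contDiff (n := 0) (by simp)).continuous
  have c2 : Continuous (deriv (deriv cut)) := deriv_cut_contDiff.continuous_deriv le_rfl
  obtain ⟨a, ha⟩ := isCompact_Icc.exists_bound_of_continuousOn (s := Set.Icc (1:ℝ) 4)
    c0.continuousOn
  obtain ⟨b, hb⟩ := isCompact_Icc.exists_bound_of_continuousOn (s := Set.Icc (1:ℝ) 4)
    deriv_cut_contDiff.continuous.continuousOn
  obtain ⟨c, hc⟩ := isCompact_Icc.exists_bound_of_continuousOn (s := Set.Icc (1:ℝ) 4)
    c2.continuousOn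
  have ha0 : 0 ≤ a := (norm_nonneg _).trans (ha 1 (by norm_num))
  have hb0 : 0 ≤ b := (norm_nonneg _).trans (hb 1 (by norm_num))
  have hc0 : 0 ≤ c := (norm_nonneg _).trans (hc 1 (by norm_num))
  refine ⟨a + b + c, by positivity, fun s hs => ⟨?_, ?_, ?_⟩⟩
  · linarith [ha s hs, Real.norm_eq_abs (cut s)]
  · linarith [hb s hs, Real.norm_eq_abs (deriv cut s)]
  · linarith [hc s hs, Real.norm_eq_abs (deriv (deriv cut) s)]

/-- The radial profile `-cut(s) log(s + ε)`, as a function of `s = |x|²`; it is only used for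
`s ≥ 0`, where the logarithm has a positive argument. -/
def prof (ε s : ℝ) : ℝ := -(cut s * Real.log (s + ε))

/-- The first derivative of `prof ε` on `[0, ∞)`. -/
def prof1 (ε s : ℝ) : ℝ := -(deriv cut s * Real.log (s + ε) + cut s / (s + ε))

/-- The second derivative of `prof ε` on `[0, ∞)`. -/
def prof2 (ε s : ℝ) : ℝ :=
  -(deriv (deriv cut) s * Real.log (s + ε) + 2 * deriv cut s / (s + ε) - cut s / (s + ε) ^ 2)

theorem prof_hasDerivAt {ε : ℝ} (hε : 0 < ε) (s : ℝ) (hs : 0 ≤ s) :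
    HasDerivAt (prof ε) (prof1 ε s) s := by
  have hp : s + ε ≠ 0 := by positivity
  have h0 : HasDerivAt (fun s : ℝ => s + ε) 1 s := (hasDerivAt_id s).add_const ε
  refine ((cut_hasDerivAt s).mul (h0.log hp)).neg.congr_deriv ?_
  unfold prof1
  ring

theorem prof1_hasDerivAt {ε : ℝ} (hε : 0 < ε) (s : ℝ) (hs : 0 ≤ s) :
    HasDerivAt (prof1 ε) (prof2 ε s) s := by
  have hp : s + ε ≠ 0 := by positivity
  have h0 : HasDerivAt (fun s : ℝ => s + ε) 1 s := (hasDerivAt_id s).add_const ε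
  refine (((deriv_cut_hasDerivAt s).mul (h0.log hp)).add
    ((cut_hasDerivAt s).div h0 hp)).neg.congr_deriv ?_
  unfold prof2
  field_simp
  ring

/-! ### Bounds for the energy density -/

/-- The energy density `(Δu)² + τ|∇u|² + σu²` of `u(x) = prof ε (|x|²)`, as a function of
`s = |x|²`. -/
def dens (τ σ ε s : ℝ) : ℝ :=
  (8 * prof1 ε s + 4 * s * prof2 ε s) ^ 2 + τ * (4 * s * prof1 ε s ^ 2) + σ * prof ε s ^ 2

theorem log_sq_le {t : ℝ} (ht : 0 < t) (ht2 : t ≤ 2) : Real.log t ^ 2 ≤ 4 / t := by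
  rcases le_total t 1 with h | h
  -- Below `1`, apply `log y ≥ 1 - 1/y` at `y = √t`.
  · have h1 : Real.log t = 2 * Real.log (√t) := by
      rw [Real.log_sqrt ht.le]; ring
    have hs : 0 < √t := Real.sqrt_pos.2 ht
    have h2 := Real.one_sub_inv_le_log_of_pos hs
    have h3 : Real.log (√t) ≤ 0 := Real.log_nonpos hs.le (Real.sqrt_le_one.2 h)
    have h4 : (√t)⁻¹ ^ 2 = 1 / t := by
      rw [inv_pow, Real.sq_sqrt ht.le, one_div]
    have h5 : Real.log (√t) ^ 2 ≤ (√t)⁻¹ ^ 2 := by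
      have : 0 < (√t)⁻¹ := by positivity
      nlinarith
    rw [h1, mul_pow]
    rw [h4] at h5
    calc _ ≤ 2 ^ 2 * (1 / t) := by gcongr
      _ = _ := by ring
  · have h1 := Real.log_nonneg h
    have h2 := Real.log_le_sub_one_of_pos ht
    rw [le_div_iff₀ ht]
    have : Real.log t ^ 2 ≤ 1 := by nlinarith
    nlinarith

/-- Where the cutoff is `1`: the Laplacian term carries the whole singularity, with its sharp
constant. -/
theorem dens_low {τ σ ε s : ℝ} (hτ : 0 < τ) (hσ : 0 < σ) (hε : 0 < ε) (hε1 : ε ≤ 1)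
    (hs : 0 < s) (hs1 : s ≤ 1) :
    s * dens τ σ ε s ≤ 16 * (1 / (s + ε) + ε / (s + ε) ^ 2) + (4 * τ + 4 * σ) := by
  obtain ⟨h0, h1, h2⟩ := cut_low (s := s) (by linarith)
  have hl := log_sq_le (t := s + ε) (by positivity) (by linarith)
  have hA : s * (8 * prof1 ε s + 4 * s * prof2 ε s) ^ 2 ≤
      16 * (1 / (s + ε) + ε / (s + ε) ^ 2) := by
    -- The exact deficit: with `t = s + ε`, `s (Δu)² = 16 (t - ε)(t + ε)² / t⁴`.
    have e : 16 * (1 / (s + ε) + ε / (s + ε) ^ 2) - s * (8 * prof1 ε s + 4 * s * prof2 ε s) ^ 2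
        = 16 * ε ^ 2 * (s + 2 * ε) / (s + ε) ^ 4 := by
      simp only [prof1, prof2, h0, h1, h2]
      field_simp
      ring
    have : 0 ≤ 16 * ε ^ 2 * (s + 2 * ε) / (s + ε) ^ 4 := by positivity
    linarith
  have hB : s * (4 * s * prof1 ε s ^ 2) ≤ 4 := by
    have e : s * (4 * s * prof1 ε s ^ 2) = 4 * (s / (s + ε)) ^ 2 := by
      simp only [prof1, h0, h1]
      field_simp
      ring
    have : s / (s + ε) ≤ 1 := by rw [div_le_one (by positivity)]; linarith
    have h' : 0 ≤ s / (s + ε) := by positivity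
    rw [e]
    nlinarith
  have hC : s * prof ε s ^ 2 ≤ 4 := by
    have : s * prof ε s ^ 2 ≤ s * (4 / (s + ε)) := by
      apply mul_le_mul_of_nonneg_left _ hs.le
      simpa [prof, h0] using hl
    refine this.trans ?_
    rw [mul_div_assoc', div_le_iff₀ (by positivity)]
    linarith
  unfold dens
  nlinarith

theorem dens_high {τ σ ε s : ℝ} (hs : 3 < s) : dens τ σ ε s = 0 := by
  obtain ⟨h0, h1, h2⟩ := cut_high hs
  simp [dens, prof, prof1, prof2, h0, h1, h2]

/-- In the annulus containing the transition region of the cutoff, the density is bounded uniformly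
in `ε`. -/
theorem dens_mid {τ σ : ℝ} (hτ : 0 < τ) (hσ : 0 < σ) : ∃ K : ℝ, 0 ≤ K ∧ ∀ ε s : ℝ, 0 < ε →
    ε ≤ 1 → 1 ≤ s → s ≤ 4 → s * dens τ σ ε s ≤ K := by
  obtain ⟨B, hB, h⟩ := cut_bounded
  refine ⟨4 * ((168 * B) ^ 2 + τ * (16 * (7 * B) ^ 2) + σ * (7 * B) ^ 2), by positivity, ?_⟩
  intro ε s hε hε1 hs1 hs4
  obtain ⟨h0, h1, h2⟩ := h s ⟨hs1, hs4⟩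
  have ht : 1 ≤ s + ε := by linarith
  have hl : |Real.log (s + ε)| ≤ 4 := by
    rw [abs_of_nonneg (Real.log_nonneg ht)]
    linarith [Real.log_le_sub_one_of_pos (show 0 < s + ε by linarith)]
  have hi : |(s + ε)⁻¹| ≤ 1 := by
    rw [abs_of_pos (by positivity)]
    exact inv_le_one_of_one_le₀ ht
  have hi2 : |((s + ε) ^ 2)⁻¹| ≤ 1 := by
    rw [abs_of_pos (by positivity)]
    exact inv_le_one_of_one_le₀ (one_le_pow₀ ht)
  have mulb : ∀ {a b c : ℝ}, |a| ≤ B → |b| ≤ c → |a * b| ≤ B * c := fun {a b c} ha hb => by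
    rw [abs_mul]
    exact mul_le_mul ha hb (abs_nonneg _) hB
  have p0 : |prof ε s| ≤ 7 * B := by
    have := mulb h0 hl
    rw [prof, abs_neg]
    linarith
  have p1 : |prof1 ε s| ≤ 7 * B := by
    have a := abs_le.1 (mulb h1 hl)
    have b := abs_le.1 (mulb h0 hi)
    rw [prof1, abs_neg, div_eq_mul_inv, abs_le]
    constructor <;> linarith [a.1, a.2, b.1, b.2]
  have p2 : |prof2 ε s| ≤ 7 * B := by
    have a := abs_le.1 (mulb h2 hl)
    have b := abs_le.1 (mulb h1 hi)
    have c := abs_le.1 (mulb h0 hi2)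
    rw [prof2, abs_neg, div_eq_mul_inv, div_eq_mul_inv, mul_assoc, abs_le]
    constructor <;> linarith [a.1, a.2, b.1, b.2, c.1, c.2]
  have q : |8 * prof1 ε s + 4 * s * prof2 ε s| ≤ 168 * B := by
    refine (abs_add_le _ _).trans ?_
    rw [abs_mul, abs_mul, abs_of_pos (show (0:ℝ) < 8 by norm_num),
      abs_of_pos (show (0:ℝ) < 4 * s by linarith)]
    nlinarith [abs_nonneg (prof2 ε s)]
  have s0 := sq_le_sq' (abs_le.1 p0).1 (abs_le.1 p0).2
  have s1 := sq_le_sq' (abs_le.1 p1).1 (abs_le.1 p1).2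
  have sq := sq_le_sq' (abs_le.1 q).1 (abs_le.1 q).2
  have hd : dens τ σ ε s ≤ (168 * B) ^ 2 + τ * (16 * (7 * B) ^ 2) + σ * (7 * B) ^ 2 := by
    unfold dens
    gcongr
    linarith
  have hd0 : 0 ≤ (168 * B) ^ 2 + τ * (16 * (7 * B) ^ 2) + σ * (7 * B) ^ 2 := by positivity
  calc _ ≤ s * ((168 * B) ^ 2 + τ * (16 * (7 * B) ^ 2) + σ * (7 * B) ^ 2) := by gcongr
    _ ≤ _ := by gcongr

theorem dens_bound {τ σ : ℝ} (hτ : 0 < τ) (hσ : 0 < σ) : ∃ C : ℝ, 0 ≤ C ∧ ∀ ε s : ℝ, 0 < ε →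
    ε ≤ 1 → 0 < s → s < 4 →
      s * dens τ σ ε s ≤ 16 * (1 / (s + ε) + ε / (s + ε) ^ 2) + C := by
  obtain ⟨K, hK, h⟩ := dens_mid hτ hσ
  refine ⟨K + (4 * τ + 4 * σ), by positivity, fun ε s hε hε1 hs hs4 => ?_⟩
  rcases le_total s 1 with h1 | h1
  · linarith [dens_low hτ hσ hε hε1 hs h1]
  · have : 0 ≤ 16 * (1 / (s + ε) + ε / (s + ε) ^ 2) := by positivity
    linarith [h ε s hε hε1 h1 hs4.le]

/-! ### The test functions and their energy -/

/-- The test function `x ↦ c · prof ε (|x|²)` on `ℝ⁴`. -/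
def test (c ε : ℝ) (x : R4) : ℝ := c * prof ε (‖x‖ ^ 2)

theorem test_contDiff (c : ℝ) {ε : ℝ} (hε : 0 < ε) : ContDiff ℝ (⊤ : ℕ∞) (test c ε) := by
  have hn : ContDiff ℝ (⊤ : ℕ∞) (fun x : R4 => ‖x‖ ^ 2) := contDiff_norm_sq ℝ
  have hl : ContDiff ℝ (⊤ : ℕ∞) (fun x : R4 => Real.log (‖x‖ ^ 2 + ε)) :=
    (hn.add contDiff_const).log (fun x => by positivity)
  exact contDiff_const.mul (((cut_contDiff le_rfl).comp hn).mul hl).neg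

theorem test_compact (c ε : ℝ) : HasCompactSupport (test c ε) := by
  refine HasCompactSupport.intro (isCompact_closedBall (0 : R4) 2) fun x hx => ?_
  have hx' : 2 < ‖x‖ := by simpa using hx
  have : cut (‖x‖ ^ 2) = 0 := (cut_high (by nlinarith)).1
  simp [test, prof, this]

theorem test_energy_density (τ σ c : ℝ) {ε : ℝ} (hε : 0 < ε) (x : R4) :
    (lapl (test c ε) x) ^ 2 + τ * ‖gradient (test c ε) x‖ ^ 2 + σ * (test c ε x) ^ 2
      = c ^ 2 * dens τ σ ε (‖x‖ ^ 2) := by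
  have h1 : ∀ s, 0 ≤ s → HasDerivAt (fun s => c * prof ε s) (c * prof1 ε s) s :=
    fun s hs => (prof_hasDerivAt hε s hs).const_mul c
  have h2 : ∀ s, 0 ≤ s → HasDerivAt (fun s => c * prof1 ε s) (c * prof2 ε s) s :=
    fun s hs => (prof1_hasDerivAt hε s hs).const_mul c
  have e1 := radial_lapl h1 h2 x
  have e2 := radial_gradient h1 x
  change lapl (test c ε) x = _ at e1
  change ‖gradient (test c ε) x‖ ^ 2 = _ at e2
  rw [e1, e2, test, dens]
  ring

theorem test_energy {τ σ : ℝ} (hτ : 0 < τ) (hσ : 0 < σ) : ∃ C : ℝ, 0 < C ∧ ∀ c ε : ℝ, 0 < ε →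
    ε ≤ 1 → (∫⁻ x : R4, ENNReal.ofReal ((lapl (test c ε) x) ^ 2
      + τ * ‖gradient (test c ε) x‖ ^ 2 + σ * (test c ε x) ^ 2))
        ≤ ENNReal.ofReal (c ^ 2 * (16 * π ^ 2 * -Real.log ε + C)) := by
  obtain ⟨C, hC, h⟩ := dens_bound hτ hσ
  refine ⟨2 * π ^ 2 * (40 + 2 * C), by positivity, fun c ε hε hε1 => ?_⟩
  simp_rw [test_energy_density τ σ c hε]
  set w : ℝ → ℝ := fun r => r * (16 * (1 / (r ^ 2 + ε) + ε / (r ^ 2 + ε) ^ 2) + C) with hw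
  have hwc : ContinuousOn w (Set.Icc 0 2) := by
    apply Continuous.continuousOn
    have hp : ∀ r : ℝ, r ^ 2 + ε ≠ 0 := fun r => by positivity
    have hp2 : ∀ r : ℝ, (r ^ 2 + ε) ^ 2 ≠ 0 := fun r => by positivity
    fun_prop (disch := first | exact hp | exact hp2 | assumption)
  obtain ⟨hi, he⟩ := radial_integral w hwc
  have hwi : ∫ r in (0:ℝ)..2, w r = _ := w_integral hε
  have hnn : ∀ x : R4, 0 ≤ Set.indicator (Set.Iio 2) (fun r => w r / r ^ 3) ‖x‖ := fun x => by
    by_cases h2 : ‖x‖ ∈ Set.Iio (2 : ℝ)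
    · rw [Set.indicator_of_mem h2]
      simp only [hw]
      positivity
    · rw [Set.indicator_of_notMem h2]
  -- The majorant takes the junk value `0` at the origin, so the comparison is almost everywhere.
  have hle : ∀ᵐ x : R4, c ^ 2 * dens τ σ ε (‖x‖ ^ 2) ≤
      c ^ 2 * Set.indicator (Set.Iio 2) (fun r => w r / r ^ 3) ‖x‖ := by
    filter_upwards [compl_mem_ae_iff.2 (measure_singleton (0 : R4))] with x hx
    have hx : 0 < ‖x‖ := norm_pos_iff.2 hx
    refine mul_le_mul_of_nonneg_left ?_ (sq_nonneg c)
    rcases lt_or_ge ‖x‖ 2 with h2 | h2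
    · rw [Set.indicator_of_mem (show ‖x‖ ∈ Set.Iio 2 from h2)]
      have := h ε (‖x‖ ^ 2) hε hε1 (by positivity) (by nlinarith)
      rw [le_div_iff₀ (by positivity)]
      calc _ = ‖x‖ * (‖x‖ ^ 2 * dens τ σ ε (‖x‖ ^ 2)) := by ring
        _ ≤ _ := by simp only [hw]; gcongr
    · rw [dens_high (by nlinarith)]
      exact hnn x
  calc _ ≤ ∫⁻ x : R4, ENNReal.ofReal
        (c ^ 2 * Set.indicator (Set.Iio 2) (fun r => w r / r ^ 3) ‖x‖) :=
        lintegral_mono_ae (hle.mono fun x hx => ENNReal.ofReal_le_ofReal hx)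
    _ = ENNReal.ofReal (∫ x : R4,
        c ^ 2 * Set.indicator (Set.Iio 2) (fun r => w r / r ^ 3) ‖x‖) :=
        (ofReal_integral_eq_lintegral_ofReal (hi.const_mul _)
          (Eventually.of_forall fun x => mul_nonneg (sq_nonneg c) (hnn x))).symm
    _ ≤ _ := by
      apply ENNReal.ofReal_le_ofReal
      rw [integral_const_mul, he, hwi]
      refine mul_le_mul_of_nonneg_left ?_ (sq_nonneg c)
      have h4 := Real.log_le_sub_one_of_pos (show 0 < 4 + ε by positivity)
      have h8 : 0 ≤ 8 * ε / (4 + ε) := by positivity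
      calc _ ≤ 2 * π ^ 2 * (8 * (4 - Real.log ε) + 8 + 2 * C) := by
            gcongr
            linarith
        _ = _ := by ring

/-! ### Blow-up of the exponential integral -/

/-- Lower bound of the exponential integral by its part over the ball of radius `√ε`,
`ε = e^{-L}`, whose volume `π² e^{-2L} / 2` absorbs the summand `2L` of the exponent. -/
theorem test_exp_lower {α c N L : ℝ} (hα : 0 < α) (hL : 1 ≤ L)
    (h : 2 * L + N ≤ α * (c ^ 2 * (L - 1) ^ 2)) (hN : 0 < N) :
    ENNReal.ofReal N < ∫⁻ x : R4,
      ENNReal.ofReal (Real.exp (α * (test c (Real.exp (-L)) x) ^ 2) - 1) := by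
  set ε := Real.exp (-L) with hεd
  have hε : 0 < ε := Real.exp_pos _
  have hε1 : ε ≤ 1 := Real.exp_le_one_iff.2 (by linarith)
  have hfr : Module.finrank ℝ R4 = 2 * 2 := by simp
  have hpt : ∀ x ∈ Metric.ball (0 : R4) (√ε), ENNReal.ofReal (Real.exp (2 * L + N) - 1) ≤
      ENNReal.ofReal (Real.exp (α * (test c ε x) ^ 2) - 1) := by
    intro x hx
    have hx : ‖x‖ ^ 2 < ε := by
      have : ‖x‖ < √ε := by simpa using hx
      exact (Real.lt_sqrt (norm_nonneg x)).1 this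
    apply ENNReal.ofReal_le_ofReal
    gcongr
    refine h.trans ?_
    gcongr
    have hlog : Real.log (‖x‖ ^ 2 + ε) ≤ 1 - L := by
      calc _ ≤ Real.log (2 * ε) := Real.log_le_log (by positivity) (by linarith)
        _ = Real.log 2 - L := by
          rw [Real.log_mul (by norm_num) hε.ne', hεd, Real.log_exp]; ring
        _ ≤ _ := by linarith [Real.log_le_sub_one_of_pos (show (0:ℝ) < 2 by norm_num)]
    rw [test, mul_pow, prof, (cut_low (by linarith)).1]
    gcongr
    linarith
  have hconst : ∫⁻ x in Metric.ball (0 : R4) (√ε), ENNReal.ofReal (Real.exp (2 * L + N) - 1)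
      = ENNReal.ofReal ((Real.exp (2 * L + N) - 1) * (ε ^ 2 * (π ^ 2 / 2))) := by
    have hnn : 0 ≤ Real.exp (2 * L + N) - 1 := by
      linarith [Real.add_one_le_exp (2 * L + N)]
    rw [setLIntegral_const, InnerProductSpace.volume_ball_of_dim_even hfr, hfr,
      ← ENNReal.ofReal_pow (by positivity), ← ENNReal.ofReal_mul (by positivity),
      ← ENNReal.ofReal_mul hnn, pow_mul, Real.sq_sqrt hε.le]
    simp
  refine lt_of_lt_of_le ?_ ((setLIntegral_mono' measurableSet_ball hpt).trans
    (setLIntegral_le_lintegral _ _))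
  rw [hconst]
  have hval : (Real.exp (2 * L + N) - 1) * ε ^ 2 = Real.exp N - ε ^ 2 := by
    have : Real.exp (2 * L + N) * ε ^ 2 = Real.exp N := by
      rw [hεd, ← Real.exp_nat_mul, ← Real.exp_add]
      congr 1
      push_cast
      ring
    rw [sub_mul, this, one_mul]
  have hge : N ≤ (Real.exp (2 * L + N) - 1) * ε ^ 2 := by
    rw [hval]
    nlinarith [Real.add_one_le_exp N]
  have hpi : 1 < π ^ 2 / 2 := by nlinarith [Real.pi_gt_three]
  have hlt : N < (Real.exp (2 * L + N) - 1) * (ε ^ 2 * (π ^ 2 / 2)) := by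
    rw [← mul_assoc]
    nlinarith
  exact (ENNReal.ofReal_lt_ofReal_iff (hN.trans hlt)).2 hlt

/-- Theorem 1.2 (sharpness): if `α > 32π²` then for every `M > 0` there is a smooth
compactly supported `u` with `∫(|Δu|² + τ|∇u|² + σu²) dx ≤ 1` and `∫(e^{αu²} − 1) dx > M`. -/
theorem stmt_2 (τ σ α : ℝ) (hτ : 0 < τ) (hσ : 0 < σ) (hα : 32 * π ^ 2 < α)
    (M : ℝ) (hM : 0 < M) :
    ∃ u : R4 → ℝ, ContDiff ℝ (⊤ : ℕ∞) u ∧ HasCompactSupport u ∧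
      (∫⁻ x : R4,
        ENNReal.ofReal ((lapl u x) ^ 2 + τ * ‖gradient u x‖ ^ 2 + σ * (u x) ^ 2)) ≤ 1 ∧
      ENNReal.ofReal M < ∫⁻ x : R4, ENNReal.ofReal (Real.exp (α * (u x) ^ 2) - 1) := by
  obtain ⟨C, hC, hE⟩ := test_energy hτ hσ
  have hα0 : 0 < α := lt_trans (by positivity) hα
  have hδ : 0 < α - 32 * π ^ 2 := by linarith
  -- `L` is chosen so that `(α - 32π²) L` dominates the coefficients of the lower-order terms in
  -- `α (L - 1)² ≥ (2L + M)(16π² L + C)`.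
  set P := 2 * α + 2 * C + 16 * π ^ 2 * M + M * C with hP
  set L := 1 + P / (α - 32 * π ^ 2) with hLd
  have hP0 : 0 < P := by positivity
  have hL1 : 1 ≤ L := by
    have : 0 < P / (α - 32 * π ^ 2) := by positivity
    linarith
  have hLP : P ≤ (α - 32 * π ^ 2) * L := by
    have : (α - 32 * π ^ 2) * L = (α - 32 * π ^ 2) + P := by
      rw [hLd]; field_simp
    linarith
  set A := 16 * π ^ 2 * L + C with hA
  have hA0 : 0 < A := by positivity
  have hc : (√A)⁻¹ ^ 2 = A⁻¹ := by rw [inv_pow, Real.sq_sqrt hA0.le]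
  have hε1 : Real.exp (-L) ≤ 1 := Real.exp_le_one_iff.2 (by linarith)
  refine ⟨test (√A)⁻¹ (Real.exp (-L)), test_contDiff _ (Real.exp_pos _), test_compact _ _, ?_, ?_⟩
  · refine (hE _ _ (Real.exp_pos _) hε1).trans ?_
    rw [Real.log_exp, neg_neg, hc, inv_mul_cancel₀ hA0.ne', ENNReal.ofReal_one]
  · refine test_exp_lower hα0 hL1 ?_ hM
    rw [hc, ← div_eq_inv_mul, mul_div_assoc', le_div_iff₀ hA0]
    have h1 : P * L ≤ (α - 32 * π ^ 2) * L * L := by gcongr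
    have h2 : M * C ≤ M * C * L := le_mul_of_one_le_right (by positivity) hL1
    rw [hA]
    rw [hP] at h1
    nlinarith
end
end
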